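/- There exists an absolute constant C > 0 such that the following holds. Let q ≥ 500 be a prime power, let R ⊆ 𝔽_q be a subset with |R| = s < √q/2, and let n be an integer with n ≥ 100(log q)². Let N(R,n) be the number of monic irreducible polynomials of degree n over 𝔽_q all of whose coefficients of degrees 0,…,n−1 lie in 𝔽_q \ R, and set Λ = 1 if 0 ∈ R and Λ = 1 − 1/(q−s) if 0 ∉ R. Then |N(R,n) − (q/(q−1))·((q−s)ⁿ/n)·Λ| ≤ C·(q/(q−1))·((q−s)ⁿ/n)·q^{−√n/7}. -/

import Mathlib

/-!
The count is obtained from the von Mangoldt sum `∑ vM f` over `f ∈ MR F R n` by the circle method, in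
finite Fourier-analytic form. Write `q = |F|` and let `ψ` be a primitive additive character of `F`.
Detecting each digit condition by Fourier inversion (`sum_MR_eq`) turns a sum over `MR F R n` into a
sum over frequencies `ξ : Fin n → F` of exponential sums `∑ a f * ψ (phi ξ f)` over all monic `f` of
degree `n`, weighted by products of the normalised Fourier coefficients `wt ψ R (ξ i)`. Since `R` is
small, these weights have small `L¹` and `L^(4/3)` norms (`sum_wt_le`, `sum_wt_rpow_le`), and each
nonzero entry costs a factor about `q ^ (-1/2)`. The function `a` is `vM - lam0`, where `lam0` is
`q / (q - 1)` on polynomials with nonzero constant coefficient; the sum of `lam0` over `MR F R n`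
is the main term, and `Λ` records whether `0` is an admissible constant coefficient. By
`abs_sum_MR_le` everything reduces to the bound `sum_all_le`, for which the frequencies are split into
three ranges.

* *Frequencies supported in a short box*, that is, on the `k` lowest and `l` highest positions with
  `k + l` about `0.7 √n`. The second moment of the exponential sums over such a box
  (`box_second_moment`) is a variance of `vM - lam0` with `k` low and `l` high coefficients fixed, hence
  an average of sums twisted by characters modulo `X ^ k` and at infinity. Their `L`-functions are
  polynomials of degree at most `d = k + l`, and it suffices to show that the inverse roots have norm
  at most `q ^ (1 - 1 / (2 d))`. This is elementary (`core_bound`, `twisted_bound`): over the extension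
  of degree `r`, the `d`-th power sum is invariant under scaling of the roots of `f`, while shifting
  one coefficient of `f` multiplies the character by an additive character whose frequency depends on
  the scaling; averaging over scalings and shifts gives square-root cancellation in one variable,
  uniformly in `r`, and letting `r` tend to infinity isolates each inverse root
  (`norm_le_of_sparse_le`).
* *Frequencies of level `d` supported in a box of length `d`*, with `d` above the first range. The level
  `lev` is the length of the shortest linear recurrence satisfied by `ξ`, and governs the ranks of all
  Hankel matrices of `ξ` (`card_hank_le`). Vaughan's identity and Hankel rank bounds for type I and type
  II sums give the pointwise saving `q ^ min (d / 2) (n / 5)` (`norm_sum_vM_psi_le`), against which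
  the `L¹` norm of the weight loses only `q ^ (d / 4)`.
* *The remaining frequencies of level `d`*. Here the recurrence forces a nonzero entry in every window
  as long as its order `e ≤ d` (`exists_ne_zero_window`), so the weight gains `q ^ (-1/2)` about `n / e`
  times, while `ξ` is determined by `2 e + (d - e)` of its entries (`genSet_ext`). Hölder's inequality
  with exponents `4` and `4 / 3` combines this with the pointwise bound and Parseval
  (`sum_genSet_le'`), and the inequality of arithmetic and geometric means in `d` yields the saving
  `q ^ (-c √n)`.

Prime powers contribute negligibly (`sum_vM_not_irreducible_le`), and the polynomial factors in `n` are
absorbed by the gap between the exponents `0.175` and `1 / 7` (`error_le`).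
-/

/- Setting: `F` is the finite field `𝔽_q` with `q = Fintype.card F` elements.
The field `𝔽_q((1/t))` of formal Laurent series in `1/t` is modelled by
`LaurentSeries F = HahnSeries ℤ F`, where the element `t` corresponds to the
Hahn series supported at `-1`; thus the coefficient `x_i` of `t^i` in
`x ∈ 𝔽_q((1/t))` is the Hahn series coefficient of `x` at `-i`. -/

open Polynomial

noncomputable section

attribute [local instance] Classical.propDecidable

variable (F : Type) [Field F] [Fintype F]

/-- `ψ(a) = exp(2πi·tr(a)/p)`, with `tr : 𝔽_q → 𝔽_p` the trace map. -/
def psiF (a : F) : ℂ :=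
  letI : Algebra (ZMod (ringChar F)) F := ZMod.algebra F (ringChar F)
  Complex.exp (2 * Real.pi * Complex.I *
    ((Algebra.trace (ZMod (ringChar F)) F a).val : ℂ) / (ringChar F : ℂ))

/-- The element `t` of `𝔽_q((1/t))`. -/
def tF : LaurentSeries F := HahnSeries.single (-1 : ℤ) 1

/-- Laurent expansion (at infinity) of a polynomial in `t`. -/
def toLS (f : Polynomial F) : LaurentSeries F :=
  Polynomial.eval₂ (algebraMap F (LaurentSeries F)) (tF F) f

/-- The coefficient `x_i` of `t^i` in `x ∈ 𝔽_q((1/t))`. -/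
def coeffT (x : LaurentSeries F) (i : ℤ) : F := x.coeff (-i)

/-- `e_q(x) = ψ(x_{-1})`. -/
def eF (x : LaurentSeries F) : ℂ := psiF F (coeffT F x (-1))

/-- `|x| = q^j` where `j` is the largest index with `x_j ≠ 0`, and `|0| = 0`. -/
def normT (x : LaurentSeries F) : ℝ :=
  if x = 0 then 0 else (Fintype.card F : ℝ) ^ (-x.order)

/-- `M_R(n)`: monic polynomials of degree `n` whose coefficients of degrees
`0, …, n-1` all lie outside `R`. -/
def MR (R : Finset F) (n : ℕ) : Finset (Polynomial F) :=
  ((Finset.univ : Finset (Fin n → F)).filter fun c => ∀ i, c i ∉ R).image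
    fun c => X ^ n + ∑ i : Fin n, C (c i) * X ^ (i : ℕ)

/-- `S_R(x) = ∑_{m ∈ M_R(n)} e_q(m x)`. -/
def SR (R : Finset F) (n : ℕ) (x : LaurentSeries F) : ℂ :=
  ∑ m ∈ MR F R n, eF F (toLS F m * x)

/-- All monic polynomials of degree `n`. -/
def monicD (n : ℕ) : Finset (Polynomial F) :=
  (Finset.univ : Finset (Fin n → F)).image
    fun c => X ^ n + ∑ i : Fin n, C (c i) * X ^ (i : ℕ)

/-- All polynomials of degree `< n` (including `0`). -/
def polyD (n : ℕ) : Finset (Polynomial F) :=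
  (Finset.univ : Finset (Fin n → F)).image
    fun c => ∑ i : Fin n, C (c i) * X ^ (i : ℕ)

/-- Monic irreducible polynomials of degree `n`. -/
def irredD (n : ℕ) : Finset (Polynomial F) :=
  (monicD F n).filter fun m => Irreducible m

/-- `π(n)`: the number of monic irreducible polynomials of degree `n`. -/
def piF (n : ℕ) : ℕ := (irredD F n).card

/-- `S(x) = ∑_{deg P = n} e_q(P x)`, sum over monic irreducibles of degree `n`. -/
def Sirr (n : ℕ) (x : LaurentSeries F) : ℂ :=
  ∑ m ∈ irredD F n, eF F (toLS F m * x)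

/-- The Möbius function of `𝔽_q[t]`. -/
def muF (g : Polynomial F) : ℤ :=
  if Squarefree g then
    (-1) ^ (Nat.card {ω : Polynomial F // ω.Monic ∧ Irreducible ω ∧ ω ∣ g}) else 0

/-- `φ(g)`: the number of units of `𝔽_q[t]/(g)`. -/
def phiF (g : Polynomial F) : ℕ := Nat.card (Polynomial F ⧸ Ideal.span {g})ˣ

/-- The Fourier coefficient `1̂_A(r) = ∑_{a ∈ A} ψ(a r)`. -/
def fhat (A : Finset F) (r : F) : ℂ := ∑ a ∈ A, psiF F (a * r)

section Proof

set_option linter.unusedSectionVars false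

variable {F}

/-! ### Monic polynomials by coefficients, and their factorisations -/

theorem mem_monicD {n : ℕ} {f : F[X]} : f ∈ monicD F n ↔ f.Monic ∧ f.natDegree = n := by
  unfold monicD
  simp only [Finset.mem_image, Finset.mem_univ, true_and]
  constructor
  · rintro ⟨c, rfl⟩
    have hdeg : (∑ i : Fin n, C (c i) * X ^ (i : ℕ) : F[X]).degree < (n : WithBot ℕ) := by
      refine lt_of_le_of_lt (degree_sum_le _ _) ?_
      rw [Finset.sup_lt_iff (by simp [bot_lt_iff_ne_bot])]
      intro i _
      refine lt_of_le_of_lt (degree_C_mul_X_pow_le _ _) ?_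
      exact_mod_cast i.2
    refine ⟨monic_X_pow_add hdeg, ?_⟩
    exact natDegree_eq_of_degree_eq_some (by
      rw [degree_add_eq_left_of_degree_lt (by simpa using hdeg), degree_X_pow])
  · rintro ⟨h1, rfl⟩
    refine ⟨fun i => f.coeff i, ?_⟩
    conv_rhs => rw [h1.as_sum]
    rw [Fin.sum_univ_eq_sum_range (fun i => C (f.coeff i) * X ^ i)]

theorem coeff_ofFn {n : ℕ} (c : Fin n → F) (i : Fin n) :
    (∑ i : Fin n, C (c i) * X ^ (i : ℕ) : F[X]).coeff i = c i := by
  simp only [finsetSum_coeff, coeff_C_mul_X_pow]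
  rw [Finset.sum_eq_single i]
  · simp
  · intro b _ hb
    rw [if_neg]
    intro h
    exact hb (Fin.ext h.symm)
  · simp

theorem coeff_ofFn_of_le {n : ℕ} (c : Fin n → F) {i : ℕ} (hi : n ≤ i) :
    (∑ i : Fin n, C (c i) * X ^ (i : ℕ) : F[X]).coeff i = 0 := by
  simp only [finsetSum_coeff, coeff_C_mul_X_pow]
  refine Finset.sum_eq_zero fun b _ => ?_
  rw [if_neg]
  have := b.2
  omega

theorem coeff_monicOfFn {n : ℕ} (c : Fin n → F) (i : Fin n) :
    (X ^ n + ∑ i : Fin n, C (c i) * X ^ (i : ℕ) : F[X]).coeff i = c i := by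
  rw [coeff_add, coeff_ofFn, coeff_X_pow, if_neg (by have := i.2; omega), zero_add]

theorem ofFn_injective (n : ℕ) :
    Function.Injective fun c : Fin n → F => (∑ i : Fin n, C (c i) * X ^ (i : ℕ) : F[X]) := by
  intro c c' h
  ext i
  have := congrArg (fun p : F[X] => p.coeff i) h
  simpa only [coeff_ofFn] using this

theorem monicOfFn_injective (n : ℕ) :
    Function.Injective
      fun c : Fin n → F => (X ^ n + ∑ i : Fin n, C (c i) * X ^ (i : ℕ) : F[X]) := by
  intro c c' h
  exact ofFn_injective n (add_left_cancel h)

theorem sum_monicD {A : Type*} [AddCommMonoid A] (n : ℕ) (g : F[X] → A) :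
    ∑ f ∈ monicD F n, g f = ∑ c : Fin n → F, g (X ^ n + ∑ i : Fin n, C (c i) * X ^ (i : ℕ)) := by
  unfold monicD
  rw [Finset.sum_image fun a _ b _ h => monicOfFn_injective n h]

theorem card_monicD (n : ℕ) : (monicD F n).card = Fintype.card F ^ n := by
  unfold monicD
  rw [Finset.card_image_of_injective _ (monicOfFn_injective n)]
  simp

theorem mem_polyD {n : ℕ} {f : F[X]} : f ∈ polyD F n ↔ f.degree < n := by
  unfold polyD
  simp only [Finset.mem_image, Finset.mem_univ, true_and]
  constructor
  · rintro ⟨c, rfl⟩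
    refine lt_of_le_of_lt (degree_sum_le _ _) ?_
    rw [Finset.sup_lt_iff (by simp [bot_lt_iff_ne_bot])]
    intro i _
    refine lt_of_le_of_lt (degree_C_mul_X_pow_le _ _) ?_
    exact_mod_cast i.2
  · intro h
    refine ⟨fun i => f.coeff i, ?_⟩
    rw [Fin.sum_univ_eq_sum_range (fun i => C (f.coeff i) * X ^ i)]
    simp only [C_mul_X_pow_eq_monomial]
    by_cases h0 : f = 0
    · simp [h0]
    exact (as_sum_range' f n ((natDegree_lt_iff_degree_lt h0).2 h)).symm

theorem card_polyD (n : ℕ) : (polyD F n).card = Fintype.card F ^ n := by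
  unfold polyD
  rw [Finset.card_image_of_injective _ (ofFn_injective n)]
  simp

theorem sum_polyD {A : Type*} [AddCommMonoid A] (n : ℕ) (g : F[X] → A) :
    ∑ f ∈ polyD F n, g f = ∑ c : Fin n → F, g (∑ i : Fin n, C (c i) * X ^ (i : ℕ)) := by
  unfold polyD
  rw [Finset.sum_image fun a _ b _ h => ofFn_injective n h]

/-- The finite set of monic divisors of `f` (meaningful for `f ≠ 0`). -/
def dvs (f : F[X]) : Finset F[X] :=
  (Finset.range (f.natDegree + 1)).biUnion fun i => (monicD F i).filter (· ∣ f)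

theorem mem_dvs {f a : F[X]} (hf : f ≠ 0) : a ∈ dvs f ↔ a.Monic ∧ a ∣ f := by
  unfold dvs
  simp only [Finset.mem_biUnion, Finset.mem_range, Finset.mem_filter, mem_monicD]
  constructor
  · rintro ⟨i, _, ⟨h, _⟩, h'⟩
    exact ⟨h, h'⟩
  · rintro ⟨h, h'⟩
    exact ⟨_, Nat.lt_succ_of_le (natDegree_le_of_dvd h' hf), ⟨h, rfl⟩, h'⟩

/-- Summing over factorisations `f = a * b` is the same as summing over `f` and its divisors. -/
theorem sum_factor {A : Type*} [AddCommMonoid A] (n : ℕ) (G : F[X] → F[X] → A) :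
    ∑ p ∈ Finset.HasAntidiagonal.antidiagonal n, ∑ a ∈ monicD F p.1, ∑ b ∈ monicD F p.2, G a (a * b) =
      ∑ f ∈ monicD F n, ∑ a ∈ dvs f, G a f := by
  simp_rw [← Finset.sum_product']
  rw [Finset.sum_sigma', Finset.sum_sigma']
  refine Finset.sum_bij (fun x _ => ⟨x.2.1 * x.2.2, x.2.1⟩) ?_ ?_ ?_ ?_
  · rintro ⟨⟨i, j⟩, a, b⟩ h
    simp only [Finset.mem_sigma, Finset.HasAntidiagonal.mem_antidiagonal, Finset.mem_product, mem_monicD] at h ⊢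
    obtain ⟨h1, ⟨ha, ha'⟩, hb, hb'⟩ := h
    refine ⟨⟨ha.mul hb, ?_⟩, (mem_dvs (ha.mul hb).ne_zero).2 ⟨ha, dvd_mul_right _ _⟩⟩
    rw [ha.natDegree_mul hb, ha', hb', h1]
  · rintro ⟨⟨i, j⟩, a, b⟩ h ⟨⟨i', j'⟩, a', b'⟩ h' heq
    simp only [Finset.mem_sigma, Finset.HasAntidiagonal.mem_antidiagonal, Finset.mem_product, mem_monicD] at h h'
    simp only [Sigma.mk.injEq, heq_eq_eq] at heq
    obtain ⟨h1, ⟨ha, ha'⟩, hb, hb'⟩ := h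
    obtain ⟨h1', ⟨hxa, hxa'⟩, hxb, hxb'⟩ := h'
    obtain ⟨e1, rfl⟩ := heq
    have := mul_left_cancel₀ ha.ne_zero e1
    subst this
    subst ha' hb' hxa' hxb'
    rfl
  · rintro ⟨f, a⟩ h
    simp only [Finset.mem_sigma, mem_monicD] at h
    obtain ⟨⟨hf, hf'⟩, ha⟩ := h
    rw [mem_dvs hf.ne_zero] at ha
    obtain ⟨hm, b, rfl⟩ := ha
    have hb : b.Monic := hm.of_mul_monic_left hf
    refine ⟨⟨(a.natDegree, b.natDegree), a, b⟩, ?_, rfl⟩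
    simp only [Finset.mem_sigma, Finset.HasAntidiagonal.mem_antidiagonal, Finset.mem_product, mem_monicD]
    exact ⟨by rw [← hf', hm.natDegree_mul hb], ⟨hm, trivial⟩, hb, trivial⟩
  · rintro ⟨⟨i, j⟩, a, b⟩ _
    rfl

/-! ### The von Mangoldt and Möbius functions -/

/-- The von Mangoldt function of `F[X]`: `deg P` on powers `P ^ j`, `j ≥ 1`, of a monic
irreducible `P`, and `0` elsewhere. -/
def vM (f : F[X]) : ℕ :=
  if h : ∃ P : F[X], ∃ j : ℕ, P.Monic ∧ Irreducible P ∧ 0 < j ∧ P ^ j = f then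
    h.choose.natDegree else 0

theorem eq_of_pow_eq {P Q : F[X]} (hP : P.Monic) (hPi : Irreducible P) (hQ : Q.Monic)
    (hQi : Irreducible Q) {j k : ℕ} (hj : 0 < j) (h : P ^ j = Q ^ k) : P = Q := by
  have h1 : P ∣ Q ^ k := h ▸ dvd_pow_self P hj.ne'
  have h2 : P ∣ Q := hPi.prime.dvd_of_dvd_pow h1
  exact eq_of_monic_of_associated hP hQ (hPi.associated_of_dvd hQi h2)

theorem vM_pow {P : F[X]} (hP : P.Monic) (hPi : Irreducible P) {j : ℕ} (hj : 0 < j) :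
    vM (P ^ j) = P.natDegree := by
  have h : ∃ Q : F[X], ∃ k : ℕ, Q.Monic ∧ Irreducible Q ∧ 0 < k ∧ Q ^ k = P ^ j :=
    ⟨P, j, hP, hPi, hj, rfl⟩
  unfold vM
  rw [dif_pos h]
  obtain ⟨k, h1, h2, h3, h4⟩ := h.choose_spec
  rw [eq_of_pow_eq h1 h2 hP hPi h3 h4]

theorem vM_irreducible {P : F[X]} (hP : P.Monic) (hPi : Irreducible P) :
    vM P = P.natDegree := by
  simpa using vM_pow hP hPi one_pos

theorem exists_of_vM_ne_zero {f : F[X]} (h : vM f ≠ 0) :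
    ∃ P : F[X], ∃ j : ℕ, P.Monic ∧ Irreducible P ∧ 0 < j ∧ P ^ j = f := by
  unfold vM at h
  by_contra h'
  exact h (dif_neg h')

theorem sum_vM_dvs {f : F[X]} (hf : f.Monic) : ∑ a ∈ dvs f, vM a = f.natDegree := by
  induction h : f.natDegree using Nat.strong_induction_on generalizing f with
  | _ n ih =>
  by_cases hu : f = 1
  · subst hu
    rw [← h, natDegree_one]
    refine Finset.sum_eq_zero fun a ha => ?_
    by_contra hne
    obtain ⟨P, j, hP, hPi, hj, rfl⟩ := exists_of_vM_ne_zero hne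
    rw [mem_dvs one_ne_zero] at ha
    exact hPi.not_isUnit (isUnit_of_dvd_one ((dvd_pow_self P hj.ne').trans ha.2))
  · obtain ⟨P, hP, hPi, g, rfl⟩ := Polynomial.exists_monic_irreducible_factor f
      (fun hun => hu (hf.eq_one_of_isUnit hun))
    have hg : g.Monic := hP.of_mul_monic_left hf
    have hdeg : (P * g).natDegree = P.natDegree + g.natDegree := hP.natDegree_mul hg
    have hPpos : 0 < P.natDegree := hPi.natDegree_pos
    have ihg := ih g.natDegree (by omega) hg rfl
    -- the only prime power dividing `P * g` but not `g` is `P ^ (v + 1)`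
    obtain ⟨v, c, hc, hgc⟩ : ∃ v c, ¬ P ∣ c ∧ g = P ^ v * c := by
      have hfin : FiniteMultiplicity P g := FiniteMultiplicity.of_not_isUnit hPi.not_isUnit hg.ne_zero
      obtain ⟨c, hc, hc'⟩ := hfin.exists_eq_pow_mul_and_not_dvd
      exact ⟨_, c, hc', hc⟩
    have hsub : dvs g ⊆ dvs (P * g) := by
      intro a ha
      rw [mem_dvs hg.ne_zero] at ha
      rw [mem_dvs hf.ne_zero]
      exact ⟨ha.1, ha.2.mul_left _⟩
    rw [← Finset.sum_sdiff hsub, ihg, ← h, hdeg]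
    congr 1
    have hnd : ¬ P ^ (v + 1) ∣ g := by
      rw [hgc, pow_succ]
      intro h
      exact hc ((mul_dvd_mul_iff_left (pow_ne_zero _ hP.ne_zero)).1 h)
    rw [Finset.sum_eq_single (P ^ (v + 1)), vM_pow hP hPi (Nat.succ_pos v)]
    · intro a ha hne
      by_contra hv
      obtain ⟨Q, j, hQ, hQi, hj, rfl⟩ := exists_of_vM_ne_zero hv
      rw [Finset.mem_sdiff, mem_dvs hf.ne_zero, mem_dvs hg.ne_zero] at ha
      obtain ⟨⟨hm, hd⟩, hnot⟩ := ha
      have hnot : ¬ Q ^ j ∣ g := fun h => hnot ⟨hm, h⟩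
      by_cases hQP : Q = P
      · subst hQP
        apply hne
        congr 1
        have h1 : v < j := by
          by_contra hlt
          exact hnot (hgc ▸ (pow_dvd_pow Q (by omega)).mul_right c)
        by_contra hj'
        have h2 : Q ^ (v + 1 + 1) ∣ Q * g := (pow_dvd_pow Q (by omega)).trans hd
        rw [pow_succ'] at h2
        exact hnd ((mul_dvd_mul_iff_left hQ.ne_zero).1 h2)
      · apply hnot
        refine IsCoprime.dvd_of_dvd_mul_left ?_ hd
        apply IsCoprime.pow_left
        exact hQi.coprime_iff_not_dvd.2
          fun h => hQP (eq_of_monic_of_associated hQ hP (hQi.associated_of_dvd hPi h))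
    · intro hn
      exfalso
      apply hn
      rw [Finset.mem_sdiff, mem_dvs hf.ne_zero, mem_dvs hg.ne_zero]
      refine ⟨⟨hP.pow _, ?_⟩, fun h => hnd h.2⟩
      rw [hgc, pow_succ']
      exact mul_dvd_mul_left _ (dvd_mul_right _ _)

/-- The Möbius function of `F[X]`. -/
def mob (f : F[X]) : ℤ := UniqueFactorizationMonoid.moebius f

theorem abs_mob_le (f : F[X]) : |mob f| ≤ 1 := by
  unfold mob UniqueFactorizationMonoid.moebius
  split_ifs <;> simp

theorem sum_mob_dvs {f : F[X]} (hf : f.Monic) :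
    ∑ a ∈ dvs f, mob a = if f = 1 then 1 else 0 := by
  split_ifs with hu
  · subst hu
    have : dvs (1 : F[X]) = {1} := by
      ext a
      rw [mem_dvs one_ne_zero, Finset.mem_singleton]
      exact ⟨fun h => h.1.eq_one_of_isUnit (isUnit_of_dvd_one h.2), fun h => by simp [h]⟩
    rw [this, Finset.sum_singleton]
    exact UniqueFactorizationMonoid.moebius_one
  obtain ⟨P, hP, hPi, hPf⟩ := Polynomial.exists_monic_irreducible_factor f
      (fun hun => hu (hf.eq_one_of_isUnit hun))
  rw [← Finset.sum_filter_of_ne (p := Squarefree)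
    (fun a _ h => by
      by_contra hs
      exact h (UniqueFactorizationMonoid.moebius_of_not_squarefree hs))]
  have key : ∀ a : F[X], ¬ P ∣ a → IsCoprime P a := fun a => hPi.coprime_iff_not_dvd.2
  have hmob : ∀ a : F[X], ¬ P ∣ a → mob (P * a) = - mob a := by
    intro a ha
    unfold mob
    rw [IsRelPrime.moebius_mul (key a ha).isRelPrime, hPi.moebius_eq]
    ring
  have hsf : ∀ a : F[X], Squarefree (P * a) → ¬ P ∣ a := by
    rintro a hs ⟨b, rfl⟩
    exact hPi.not_isUnit (hs P ⟨b, by ring⟩)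
  refine Finset.sum_involution (fun a _ => if P ∣ a then a /ₘ P else P * a) ?_ ?_ ?_ ?_
  · intro a ha
    rw [Finset.mem_filter] at ha
    split_ifs with hd
    · obtain ⟨b, rfl⟩ := hd
      rw [mul_divByMonic_cancel_left _ hP, hmob b (hsf b ha.2)]
      ring
    · rw [hmob a hd]
      ring
  · intro a ha _
    rw [Finset.mem_filter] at ha
    split_ifs with hd
    · obtain ⟨b, rfl⟩ := hd
      rw [mul_divByMonic_cancel_left _ hP]
      intro h
      apply hsf b ha.2
      rw [h]
      exact dvd_mul_right _ _
    · intro h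
      exact hd (h ▸ dvd_mul_right _ _)
  · intro a ha
    rw [Finset.mem_filter, mem_dvs hf.ne_zero] at ha ⊢
    obtain ⟨⟨hm, hda⟩, hs⟩ := ha
    split_ifs with hd
    · obtain ⟨b, rfl⟩ := hd
      rw [mul_divByMonic_cancel_left _ hP]
      exact ⟨⟨hP.of_mul_monic_left hm, (dvd_mul_left _ _).trans hda⟩,
        hs.squarefree_of_dvd (dvd_mul_left _ _)⟩
    · refine ⟨⟨hP.mul hm, (key a hd).mul_dvd hPf hda⟩, ?_⟩
      exact squarefree_mul_iff.2 ⟨(key a hd).isRelPrime, hPi.squarefree, hs⟩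
  · intro a ha
    rw [Finset.mem_filter] at ha
    by_cases hd : P ∣ a
    · rw [if_pos hd]
      obtain ⟨b, rfl⟩ := hd
      rw [mul_divByMonic_cancel_left _ hP, if_neg (hsf b ha.2)]
    · rw [if_neg hd, if_pos (dvd_mul_right _ _), mul_divByMonic_cancel_left _ hP]

theorem card_dvs_mul_le {a b : F[X]} (ha : a.Monic) (hb : b.Monic) :
    (dvs (a * b)).card ≤ (dvs a).card * (dvs b).card := by
  rw [← Finset.card_product]
  have : dvs (a * b) ⊆ (dvs a ×ˢ dvs b).image fun p => p.1 * p.2 := by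
    intro d hd
    rw [mem_dvs (ha.mul hb).ne_zero] at hd
    obtain ⟨d1, d2, h1, h2, rfl⟩ := exists_dvd_and_dvd_of_dvd_mul hd.2
    have hne : d1 * d2 ≠ 0 := hd.1.ne_zero
    have hl : d1.leadingCoeff * d2.leadingCoeff = 1 := by
      rw [← leadingCoeff_mul]
      exact hd.1
    have hne1 := left_ne_zero_of_mul hne
    have hne2 := right_ne_zero_of_mul hne
    rw [Finset.mem_image]
    refine ⟨(C d2.leadingCoeff * d1, C d1.leadingCoeff * d2), ?_, ?_⟩
    · rw [Finset.mem_product, mem_dvs ha.ne_zero, mem_dvs hb.ne_zero]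
      refine ⟨⟨?_, ?_⟩, ?_, ?_⟩
      · rw [Monic, leadingCoeff_mul, leadingCoeff_C, mul_comm, hl]
      · rw [C_mul_dvd (leadingCoeff_ne_zero.2 hne2)]
        exact h1
      · rw [Monic, leadingCoeff_mul, leadingCoeff_C, hl]
      · rw [C_mul_dvd (leadingCoeff_ne_zero.2 hne1)]
        exact h2
    · calc C d2.leadingCoeff * d1 * (C d1.leadingCoeff * d2)
          = C (d1.leadingCoeff * d2.leadingCoeff) * (d1 * d2) := by rw [C_mul]; ring
        _ = d1 * d2 := by rw [hl]; simp
  exact (Finset.card_le_card this).trans Finset.card_image_le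

theorem sum_card_dvs (n : ℕ) :
    ∑ f ∈ monicD F n, (dvs f).card = (n + 1) * Fintype.card F ^ n := by
  have := sum_factor (F := F) n (fun _ _ => 1)
  simp only [Finset.sum_const, smul_eq_mul, mul_one, card_monicD] at this
  rw [← this, Finset.sum_congr rfl (g := fun _ => Fintype.card F ^ n)]
  · simp
  · rintro ⟨i, j⟩ h
    rw [Finset.HasAntidiagonal.mem_antidiagonal] at h
    rw [← pow_add, h]

theorem sum_card_dvs_sq_le (n : ℕ) :
    ∑ f ∈ monicD F n, (dvs f).card ^ 2 ≤ (n + 1) ^ 3 * Fintype.card F ^ n := by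
  have h1 : ∑ f ∈ monicD F n, (dvs f).card ^ 2 =
      ∑ p ∈ Finset.HasAntidiagonal.antidiagonal n,
        ∑ a ∈ monicD F p.1, ∑ b ∈ monicD F p.2, (dvs (a * b)).card := by
    rw [sum_factor n (fun _ f => (dvs f).card)]
    refine Finset.sum_congr rfl fun f _ => ?_
    rw [Finset.sum_const, smul_eq_mul, sq]
  rw [h1]
  calc _ ≤ ∑ p ∈ Finset.HasAntidiagonal.antidiagonal n, (n + 1) ^ 2 * Fintype.card F ^ n := by
        refine Finset.sum_le_sum fun p hp => ?_
        rw [Finset.HasAntidiagonal.mem_antidiagonal] at hp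
        calc _ ≤ ∑ a ∈ monicD F p.1, ∑ b ∈ monicD F p.2, (dvs a).card * (dvs b).card := by
              refine Finset.sum_le_sum fun a ha => Finset.sum_le_sum fun b hb => ?_
              exact card_dvs_mul_le (mem_monicD.1 ha).1 (mem_monicD.1 hb).1
          _ = ((p.1 + 1) * Fintype.card F ^ p.1) * ((p.2 + 1) * Fintype.card F ^ p.2) := by
              rw [← Finset.sum_mul_sum, sum_card_dvs, sum_card_dvs]
          _ = ((p.1 + 1) * (p.2 + 1)) * Fintype.card F ^ n := by
              rw [← hp, pow_add]; ring
          _ ≤ _ := by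
              rw [sq]
              gcongr <;> omega
    _ = _ := by
        simp
        ring

/-! ### Logarithmic derivatives and Vaughan's identity -/

/-- The generating series `∑ₙ (∑_{f monic, deg f = n} α(f) [f]) uⁿ` over the monoid algebra of
`F[X]`; Dirichlet convolution becomes multiplication in a commutative ring. -/
def ser (α : F[X] → ℂ) : PowerSeries (MonoidAlgebra ℂ F[X]) :=
  PowerSeries.mk fun n => ∑ f ∈ monicD F n, MonoidAlgebra.single f (α f)

theorem coeff_ser_mul (α β : F[X] → ℂ) (n : ℕ) :
    PowerSeries.coeff n (ser α * ser β) =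
      ∑ p ∈ Finset.HasAntidiagonal.antidiagonal n, ∑ a ∈ monicD F p.1, ∑ b ∈ monicD F p.2,
        MonoidAlgebra.single (a * b) (α a * β b) := by
  rw [PowerSeries.coeff_mul]
  refine Finset.sum_congr rfl fun p _ => ?_
  simp only [ser, PowerSeries.coeff_mk]
  rw [Finset.sum_mul_sum]
  simp only [MonoidAlgebra.single_mul_single]

theorem ser_mul (α β : F[X] → ℂ) :
    ser α * ser β = ser fun f => ∑ a ∈ dvs f, α a * β (f /ₘ a) := by
  ext1 n
  rw [coeff_ser_mul]
  simp only [ser, PowerSeries.coeff_mk]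
  have h := sum_factor (F := F) n
    (fun a f => (MonoidAlgebra.single f (α a * β (f /ₘ a)) : MonoidAlgebra ℂ F[X]))
  have h2 : ∑ p ∈ Finset.HasAntidiagonal.antidiagonal n, ∑ a ∈ monicD F p.1, ∑ b ∈ monicD F p.2,
        (MonoidAlgebra.single (a * b) (α a * β b) : MonoidAlgebra ℂ F[X]) =
      ∑ p ∈ Finset.HasAntidiagonal.antidiagonal n, ∑ a ∈ monicD F p.1, ∑ b ∈ monicD F p.2,
        MonoidAlgebra.single (a * b) (α a * β (a * b /ₘ a)) := by
    refine Finset.sum_congr rfl fun p _ => Finset.sum_congr rfl fun a ha =>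
      Finset.sum_congr rfl fun b _ => ?_
    rw [mul_divByMonic_cancel_left _ (mem_monicD.1 ha).1]
  rw [h2, h]
  refine Finset.sum_congr rfl fun f _ => ?_
  exact (map_sum (MonoidAlgebra.singleAddHom f) _ _).symm

theorem ser_congr {α β : F[X] → ℂ} (h : ∀ f : F[X], f.Monic → α f = β f) : ser α = ser β := by
  unfold ser
  congr 1
  ext1 n
  refine Finset.sum_congr rfl fun f hf => ?_
  rw [h f (mem_monicD.1 hf).1]

theorem ser_add (α β : F[X] → ℂ) : ser (fun f => α f + β f) = ser α + ser β := by
  ext1 n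
  simp [ser, MonoidAlgebra.single_add, Finset.sum_add_distrib]

theorem ser_mob_mul : ser (fun f : F[X] => (mob f : ℂ)) * ser (fun _ => 1) = 1 := by
  rw [ser_mul]
  have : ser (fun f : F[X] => ∑ a ∈ dvs f, (mob a : ℂ) * 1) =
      ser (fun f => if f = 1 then 1 else 0) := by
    refine ser_congr fun f hf => ?_
    have := sum_mob_dvs hf
    simp only [mul_one]
    rw [← Int.cast_sum, this]
    simp
  rw [this]
  ext1 n
  simp only [ser, PowerSeries.coeff_mk, PowerSeries.coeff_one]
  split_ifs with hn
  · subst hn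
    rw [Finset.sum_eq_single 1]
    · simp [MonoidAlgebra.one_def]
    · intro b _ hb
      simp [hb]
    · intro h
      exact absurd (mem_monicD.2 ⟨monic_one, natDegree_one⟩) h
  · refine Finset.sum_eq_zero fun f hf => ?_
    rw [if_neg, MonoidAlgebra.single_zero]
    rintro rfl
    exact hn (by simpa using (mem_monicD.1 hf).2.symm)

theorem ser_vM_mul :
    ser (fun f : F[X] => (vM f : ℂ)) * ser (fun _ => 1) = ser (fun f => (f.natDegree : ℂ)) := by
  rw [ser_mul]
  refine ser_congr fun f hf => ?_
  have := sum_vM_dvs hf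
  simp only [mul_one]
  exact_mod_cast this

/-- The linear functional `[f] ↦ e f` on the monoid algebra. -/
def functional (e : F[X] → ℂ) : MonoidAlgebra ℂ F[X] →ₗ[ℂ] ℂ :=
  (Finsupp.linearCombination ℂ e).comp (MonoidAlgebra.coeffLinearEquiv ℂ).toLinearMap

theorem functional_single (e : F[X] → ℂ) (f : F[X]) (c : ℂ) :
    functional e (MonoidAlgebra.single f c) = c * e f := by
  simp [functional]

theorem functional_coeff_ser_mul (e : F[X] → ℂ) (α β : F[X] → ℂ) (n : ℕ) :
    functional e (PowerSeries.coeff n (ser α * ser β)) =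
      ∑ p ∈ Finset.HasAntidiagonal.antidiagonal n, ∑ a ∈ monicD F p.1, ∑ b ∈ monicD F p.2,
        α a * β b * e (a * b) := by
  rw [coeff_ser_mul]
  simp only [map_sum, functional_single]

theorem functional_coeff_ser (e : F[X] → ℂ) (α : F[X] → ℂ) (n : ℕ) :
    functional e (PowerSeries.coeff n (ser α)) = ∑ a ∈ monicD F n, α a * e a := by
  simp only [ser, PowerSeries.coeff_mk, map_sum, functional_single]

/-- The logarithmic derivative identity for the `L`-series of a completely multiplicative
function. -/
theorem logDeriv_identity (χ : F[X] → ℂ) (hχ : ∀ a b : F[X], χ (a * b) = χ a * χ b) (n : ℕ) :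
    ∑ p ∈ Finset.HasAntidiagonal.antidiagonal n,
      (∑ a ∈ monicD F p.1, (vM a : ℂ) * χ a) * (∑ b ∈ monicD F p.2, χ b) =
        n * ∑ f ∈ monicD F n, χ f := by
  have h := functional_coeff_ser_mul χ (fun f : F[X] => (vM f : ℂ)) (fun _ => 1) n
  rw [ser_vM_mul, functional_coeff_ser] at h
  rw [Finset.mul_sum]
  calc _ = _ := by
        refine Finset.sum_congr rfl fun p _ => ?_
        rw [Finset.sum_mul_sum]
        refine Finset.sum_congr rfl fun a _ => Finset.sum_congr rfl fun b _ => ?_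
        show _ = (vM a : ℂ) * 1 * χ (a * b)
        rw [hχ]; ring
    _ = _ := h.symm
    _ = _ := by
        refine Finset.sum_congr rfl fun f hf => ?_
        rw [(mem_monicD.1 hf).2]

theorem sum_vM (n : ℕ) (hn : 0 < n) : ∑ f ∈ monicD F n, (vM f : ℂ) = (Fintype.card F : ℂ) ^ n := by
  have key : ∀ n, ∑ p ∈ Finset.HasAntidiagonal.antidiagonal n,
      (∑ f ∈ monicD F p.1, (vM f : ℂ)) * (Fintype.card F : ℂ) ^ p.2 =
        n * (Fintype.card F : ℂ) ^ n := by
    intro n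
    have := logDeriv_identity (F := F) (fun _ => 1) (by simp) n
    simpa [card_monicD] using this
  obtain ⟨m, rfl⟩ : ∃ m, n = m + 1 := ⟨n - 1, by omega⟩
  have h1 := key (m + 1)
  have h0 := key m
  rw [Finset.Nat.antidiagonal_succ', Finset.sum_cons, Finset.sum_map] at h1
  simp only [Function.Embedding.prodMap, Function.Embedding.coeFn_mk, Prod.map,
    Function.Embedding.refl_apply, Nat.succ_eq_add_one, pow_zero, mul_one, pow_succ,
    ← mul_assoc] at h1
  rw [← Finset.sum_mul, h0] at h1
  push_cast at h1
  rw [pow_succ]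
  linear_combination h1

/-- Vaughan's identity: the sum of `Λ(f) e(f)` over monic `f` of degree `n` is a type I sum
with coefficients supported in degree `≤ u + v` and a type II sum. -/
theorem vaughan (u v n : ℕ) (hu : u < n) :
    ∃ α w : F[X] → ℂ,
      (∀ a : F[X], a.Monic → a.natDegree ≤ n → ‖α a‖ ≤ 2 * n) ∧
      (∀ a : F[X], u + v < a.natDegree → α a = 0) ∧
      (∀ k : F[X], k.Monic → ‖w k‖ ≤ (dvs k).card) ∧
      (∀ k : F[X], k.Monic → k.natDegree ≤ v → w k = 0) ∧
      ∀ e : F[X] → ℂ, ∑ f ∈ monicD F n, (vM f : ℂ) * e f =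
        ∑ p ∈ Finset.HasAntidiagonal.antidiagonal n,
          ((∑ a ∈ monicD F p.1, α a * ∑ b ∈ monicD F p.2, e (a * b)) +
            if u < p.1 then
              ∑ a ∈ monicD F p.1, ∑ b ∈ monicD F p.2, (vM a : ℂ) * w b * e (a * b) else 0) := by
  set Lle : F[X] → ℂ := fun f => if f.natDegree ≤ u then (vM f : ℂ) else 0 with hLle
  set Lgt : F[X] → ℂ := fun f => if f.natDegree ≤ u then 0 else (vM f : ℂ) with hLgt
  set mle : F[X] → ℂ := fun f => if f.natDegree ≤ v then (mob f : ℂ) else 0 with hmle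
  set mgt : F[X] → ℂ := fun f => if f.natDegree ≤ v then 0 else (mob f : ℂ) with hmgt
  have hL : ser (fun f : F[X] => (vM f : ℂ)) = ser Lle + ser Lgt := by
    rw [← ser_add]
    refine ser_congr fun f _ => ?_
    simp only [hLle, hLgt]
    split_ifs <;> simp
  have hm : ser (fun f : F[X] => (mob f : ℂ)) = ser mle + ser mgt := by
    rw [← ser_add]
    refine ser_congr fun f _ => ?_
    simp only [hmle, hmgt]
    split_ifs <;> simp
  have h1 := ser_mob_mul (F := F)
  have h2 := ser_vM_mul (F := F)
  rw [hL] at h2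
  rw [hm] at h1
  set g : F[X] → ℂ := fun f => ∑ a ∈ dvs f, mle a * Lle (f /ₘ a) with hg
  set w : F[X] → ℂ := fun f => ∑ a ∈ dvs f, mgt a * 1 with hw
  have hgs : ser mle * ser Lle = ser g := ser_mul _ _
  have hws : ser mgt * ser (fun _ => 1) = ser w := ser_mul _ _
  have key : ser Lgt = ser mle * ser (fun f => (f.natDegree : ℂ)) - ser g * ser (fun _ => 1) +
      ser Lgt * ser w := by
    rw [← hgs, ← hws, ← h2]
    linear_combination -(ser Lgt) * h1
  have hmob1 : ∀ f : F[X], ‖(mob f : ℂ)‖ ≤ 1 := by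
    intro f
    rw [Complex.norm_intCast]
    exact_mod_cast abs_mob_le f
  have hdm : ∀ (f : F[X]), f.Monic → ∀ a ∈ dvs f, a.Monic ∧ ∃ b : F[X], b.Monic ∧ f = a * b := by
    intro f hf a ha
    rw [mem_dvs hf.ne_zero] at ha
    obtain ⟨h1, b, rfl⟩ := ha
    exact ⟨h1, b, h1.of_mul_monic_left hf, rfl⟩
  refine ⟨fun f => mle f * ((n : ℂ) - f.natDegree) - g f, w, ?_, ?_, ?_, ?_, ?_⟩
  · intro f hf hfn
    have b1 : ‖mle f * ((n : ℂ) - f.natDegree)‖ ≤ n := by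
      rw [norm_mul]
      have : ((n : ℂ) - f.natDegree) = ((n - f.natDegree : ℕ) : ℂ) := by
        rw [Nat.cast_sub hfn]
      rw [this, Complex.norm_natCast]
      have h3 : ‖mle f‖ ≤ 1 := by
        simp only [hmle]
        split_ifs
        · exact hmob1 f
        · simp
      calc _ ≤ (1 : ℝ) * n := by
            gcongr
            omega
        _ = n := one_mul _
    have b2 : ‖g f‖ ≤ n := by
      have hgf : ‖g f‖ ≤ ∑ a ∈ dvs f, (vM (f /ₘ a) : ℝ) := by
        refine (norm_sum_le _ _).trans (Finset.sum_le_sum fun a _ => ?_)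
        rw [norm_mul]
        have h3 : ‖mle a‖ ≤ 1 := by
          simp only [hmle]
          split_ifs
          · exact hmob1 a
          · simp
        have h4 : ‖Lle (f /ₘ a)‖ ≤ vM (f /ₘ a) := by
          simp only [hLle]
          split_ifs <;> simp
        calc _ ≤ 1 * (vM (f /ₘ a) : ℝ) := by gcongr
          _ = _ := one_mul _
      refine hgf.trans ?_
      have hflip : ∑ a ∈ dvs f, vM (f /ₘ a) = ∑ a ∈ dvs f, vM a := by
        refine Finset.sum_nbij' (fun a => f /ₘ a) (fun a => f /ₘ a) ?_ ?_ ?_ ?_ ?_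
        · intro a ha
          obtain ⟨h1, b, hb, rfl⟩ := hdm f hf a ha
          rw [mul_divByMonic_cancel_left _ h1, mem_dvs hf.ne_zero]
          exact ⟨hb, dvd_mul_left _ _⟩
        · intro a ha
          obtain ⟨h1, b, hb, rfl⟩ := hdm f hf a ha
          rw [mul_divByMonic_cancel_left _ h1, mem_dvs hf.ne_zero]
          exact ⟨hb, dvd_mul_left _ _⟩
        · intro a ha
          obtain ⟨h1, b, hb, rfl⟩ := hdm f hf a ha
          rw [mul_divByMonic_cancel_left _ h1, mul_comm, mul_divByMonic_cancel_left _ hb]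
        · intro a ha
          obtain ⟨h1, b, hb, rfl⟩ := hdm f hf a ha
          rw [mul_divByMonic_cancel_left _ h1, mul_comm, mul_divByMonic_cancel_left _ hb]
        · intro a _
          rfl
      rw [← Nat.cast_sum, hflip, sum_vM_dvs hf]
      exact_mod_cast hfn
    calc _ ≤ _ := norm_sub_le _ _
      _ ≤ 2 * (n : ℝ) := by linarith
  · intro f hf
    have b1 : mle f = 0 := by
      simp only [hmle]
      rw [if_neg (by omega)]
    have b2 : g f = 0 := by
      refine Finset.sum_eq_zero fun a ha => ?_
      simp only [hmle, hLle]
      split_ifs with h1 h2 <;> try simp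
      exfalso
      have hf0 : f ≠ 0 := by
        rintro rfl
        simp at hf
      rw [mem_dvs hf0] at ha
      obtain ⟨hm, b, rfl⟩ := ha
      rw [mul_divByMonic_cancel_left _ hm] at h2
      have := natDegree_mul_le (p := a) (q := b)
      omega
    simp [b1, b2]
  · intro k _
    calc ‖w k‖ ≤ ∑ a ∈ dvs k, ‖mgt a * 1‖ := norm_sum_le _ _
      _ ≤ ∑ a ∈ dvs k, (1 : ℝ) := by
          refine Finset.sum_le_sum fun a _ => ?_
          simp only [hmgt]
          split_ifs
          · simp
          · simpa using hmob1 a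
      _ = _ := by simp
  · intro k hk hkv
    refine Finset.sum_eq_zero fun a ha => ?_
    rw [mem_dvs hk.ne_zero] at ha
    have := natDegree_le_of_dvd ha.2 hk.ne_zero
    simp only [hmgt]
    rw [if_pos (by omega), zero_mul]
  · intro e
    have h3 := congrArg (fun z => functional e (PowerSeries.coeff n z)) key
    simp only [map_add, map_sub] at h3
    rw [functional_coeff_ser, functional_coeff_ser_mul, functional_coeff_ser_mul,
      functional_coeff_ser_mul] at h3
    calc ∑ f ∈ monicD F n, (vM f : ℂ) * e f = ∑ f ∈ monicD F n, Lgt f * e f := by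
          refine Finset.sum_congr rfl fun f hf => ?_
          simp only [hLgt]
          rw [if_neg]
          rw [(mem_monicD.1 hf).2]
          omega
      _ = _ := h3
      _ = _ := by
          rw [← Finset.sum_sub_distrib, ← Finset.sum_add_distrib]
          refine Finset.sum_congr rfl fun p hp => ?_
          rw [Finset.HasAntidiagonal.mem_antidiagonal] at hp
          congr 1
          · rw [← Finset.sum_sub_distrib]
            refine Finset.sum_congr rfl fun a ha => ?_
            rw [← Finset.sum_sub_distrib, Finset.mul_sum]
            refine Finset.sum_congr rfl fun b hb => ?_
            beta_reduce
            rw [(mem_monicD.1 ha).2, (mem_monicD.1 hb).2, ← hp]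
            push_cast
            ring
          · split_ifs with hpu
            · refine Finset.sum_congr rfl fun a ha => Finset.sum_congr rfl fun b _ => ?_
              simp only [hLgt]
              rw [if_neg]
              rw [(mem_monicD.1 ha).2]
              omega
            · refine Finset.sum_eq_zero fun a ha => Finset.sum_eq_zero fun b _ => ?_
              simp only [hLgt]
              rw [if_pos, zero_mul, zero_mul]
              rw [(mem_monicD.1 ha).2]
              omega

/-! ### Hankel matrices and linear recurrences -/

theorem addChar_map_sum {ι A : Type*} [AddCommMonoid A] (ψ : AddChar A ℂ) (s : Finset ι)
    (f : ι → A) : ψ (∑ i ∈ s, f i) = ∏ i ∈ s, ψ (f i) := by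
  induction s using Finset.induction_on with
  | empty => simp
  | insert a s ha ih => rw [Finset.sum_insert ha, Finset.prod_insert ha, AddChar.map_add_eq_mul, ih]

theorem sub_divByMonic' {g : F[X]} (hg : g.Monic) (p q : F[X]) :
    (p - q) /ₘ g = p /ₘ g - q /ₘ g := by
  refine (div_modByMonic_unique (p /ₘ g - q /ₘ g) (p %ₘ g - q %ₘ g) hg ⟨?_, ?_⟩).1
  · linear_combination modByMonic_add_div p g - modByMonic_add_div q g
  · exact lt_of_le_of_lt (degree_sub_le _ _)
      (max_lt (degree_modByMonic_lt _ hg) (degree_modByMonic_lt _ hg))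

theorem sum_addChar_linear {ψ : AddChar F ℂ} (hψ : ψ.IsPrimitive) (j : ℕ) (v : Fin j → F) :
    ∑ c : Fin j → F, ψ (∑ i, c i * v i) =
      if v = 0 then (Fintype.card F : ℂ) ^ j else 0 := by
  have h1 : ∀ c : Fin j → F, ψ (∑ i, c i * v i) = ∏ i, ψ (c i * v i) := by
    intro c
    exact addChar_map_sum ψ _ _
  simp_rw [h1]
  rw [← Fintype.piFinset_univ, ← Finset.prod_univ_sum (fun _ => Finset.univ) (fun i a => ψ (a * v i))]
  have h2 : ∀ i, ∑ a : F, ψ (a * v i) = if v i = 0 then (Fintype.card F : ℂ) else 0 := by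
    intro i
    have := AddChar.sum_mulShift (v i) hψ
    rw [this]
    split_ifs <;> simp
  simp_rw [h2]
  split_ifs with h
  · subst h
    simp
  · obtain ⟨i, hi⟩ := Function.ne_iff.1 h
    exact Finset.prod_eq_zero (Finset.mem_univ i) (if_neg hi)

theorem map_mul_ofFn (φ : F[X] →ₗ[F] F) (δ : F[X]) {j : ℕ} (c : Fin j → F) :
    φ (δ * ∑ i : Fin j, C (c i) * X ^ (i : ℕ)) = ∑ i : Fin j, c i * φ (δ * X ^ (i : ℕ)) := by
  rw [Finset.mul_sum, map_sum]
  refine Finset.sum_congr rfl fun i _ => ?_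
  rw [← smul_eq_C_mul, mul_smul_comm, map_smul, smul_eq_mul]

theorem map_mul_eq_zero {φ : F[X] →ₗ[F] F} {δ p : F[X]} {B : ℕ}
    (h : ∀ b < B, φ (δ * X ^ b) = 0) (hp : p.degree < B) : φ (δ * p) = 0 := by
  have := mem_polyD.2 hp
  unfold polyD at this
  obtain ⟨c, -, rfl⟩ := Finset.mem_image.1 this
  rw [map_mul_ofFn]
  refine Finset.sum_eq_zero fun i _ => ?_
  rw [h i i.2, mul_zero]

theorem sum_polyD_psi {ψ : AddChar F ℂ} (hψ : ψ.IsPrimitive) (φ : F[X] →ₗ[F] F) (δ : F[X])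
    (j : ℕ) :
    ∑ η ∈ polyD F j, ψ (φ (δ * η)) =
      if ∀ b < j, φ (δ * X ^ b) = 0 then (Fintype.card F : ℂ) ^ j else 0 := by
  rw [sum_polyD]
  simp_rw [map_mul_ofFn]
  rw [sum_addChar_linear hψ j (fun i : Fin j => φ (δ * X ^ (i : ℕ)))]
  congr 1
  apply propext
  constructor
  · intro h b hb
    exact congrFun h ⟨b, hb⟩
  · intro h
    ext i
    exact h i i.2

theorem norm_sum_monicD_psi {ψ : AddChar F ℂ} (hψ : ψ.IsPrimitive) (φ : F[X] →ₗ[F] F) (δ : F[X])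
    (j : ℕ) :
    ‖∑ η ∈ monicD F j, ψ (φ (δ * η))‖ =
      if ∀ b < j, φ (δ * X ^ b) = 0 then (Fintype.card F : ℝ) ^ j else 0 := by
  have h1 : ∑ η ∈ monicD F j, ψ (φ (δ * η)) =
      ψ (φ (δ * X ^ j)) * ∑ η ∈ polyD F j, ψ (φ (δ * η)) := by
    rw [sum_polyD, sum_monicD, Finset.mul_sum]
    refine Finset.sum_congr rfl fun c _ => ?_
    rw [mul_add, map_add, AddChar.map_add_eq_mul]
  rw [h1, norm_mul, sum_polyD_psi hψ, AddChar.norm_apply, one_mul]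
  split_ifs <;> simp

/-- The kernel of the `j × i` Hankel matrix attached to the functional `φ`: polynomials `δ` of
degree `< i` with `φ(δ X^b) = 0` for all `b < j`. -/
def hank (φ : F[X] →ₗ[F] F) (i j : ℕ) : Finset F[X] :=
  (polyD F i).filter fun δ => ∀ b < j, φ (δ * X ^ b) = 0

theorem mem_hank {φ : F[X] →ₗ[F] F} {i j : ℕ} {δ : F[X]} :
    δ ∈ hank φ i j ↔ δ.degree < i ∧ ∀ b < j, φ (δ * X ^ b) = 0 := by
  unfold hank
  rw [Finset.mem_filter, mem_polyD]

theorem sub_mem_hank {φ : F[X] →ₗ[F] F} {i j : ℕ} {δ ε : F[X]} (h : δ ∈ hank φ i j)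
    (h' : ε ∈ hank φ i j) : δ - ε ∈ hank φ i j := by
  rw [mem_hank] at *
  refine ⟨lt_of_le_of_lt (degree_sub_le _ _) (max_lt h.1 h'.1), fun b hb => ?_⟩
  rw [sub_mul, map_sub, h.2 b hb, h'.2 b hb, sub_zero]

/-- A matrix and its transpose have the same rank. -/
theorem card_hank_symm {ψ : AddChar F ℂ} (hψ : ψ.IsPrimitive) (φ : F[X] →ₗ[F] F) (i j : ℕ) :
    Fintype.card F ^ j * (hank φ i j).card = Fintype.card F ^ i * (hank φ j i).card := by
  have key : ∀ i j : ℕ, ∑ δ ∈ polyD F i, ∑ η ∈ polyD F j, ψ (φ (δ * η)) =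
      (Fintype.card F : ℂ) ^ j * (hank φ i j).card := by
    intro i j
    simp_rw [sum_polyD_psi hψ]
    rw [← Finset.sum_filter, Finset.sum_const, nsmul_eq_mul, mul_comm]
    rfl
  have h1 := key i j
  have h2 := key j i
  rw [Finset.sum_comm] at h2
  simp_rw [mul_comm] at h1 h2
  rw [h1] at h2
  have : ((Fintype.card F ^ j * (hank φ i j).card : ℕ) : ℂ) =
      ((Fintype.card F ^ i * (hank φ j i).card : ℕ) : ℂ) := by
    push_cast
    linear_combination h2
  exact_mod_cast this

/-- `φ` (restricted to degrees `< n`) satisfies a linear recurrence of length `d`. -/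
def Wit (φ : F[X] →ₗ[F] F) (n d : ℕ) (g : F[X]) : Prop :=
  g.Monic ∧ g.natDegree ≤ d ∧ ∀ b, b + d < n → φ (g * X ^ b) = 0

theorem exists_wit_of_ne_zero {φ : F[X] →ₗ[F] F} {n d : ℕ} {g : F[X]} (hg : g ≠ 0)
    (hd : g.natDegree ≤ d) (h : ∀ b, b + d < n → φ (g * X ^ b) = 0) : ∃ g, Wit φ n d g := by
  refine ⟨C g.leadingCoeff⁻¹ * g, ?_, ?_, ?_⟩
  · rw [mul_comm]
    exact monic_mul_leadingCoeff_inv hg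
  · rwa [natDegree_C_mul (inv_ne_zero (leadingCoeff_ne_zero.2 hg))]
  · intro b hb
    rw [mul_assoc, ← smul_eq_C_mul, map_smul, h b hb, smul_zero]

theorem exists_wit (φ : F[X] →ₗ[F] F) (n : ℕ) : ∃ d, ∃ g, Wit φ n d g :=
  ⟨n, 1, monic_one, by simp, fun b hb => by omega⟩

/-- The length of the shortest linear recurrence satisfied by `φ` in degrees `< n`. -/
def lev (φ : F[X] →ₗ[F] F) (n : ℕ) : ℕ := Nat.find (exists_wit φ n)

theorem lev_spec (φ : F[X] →ₗ[F] F) (n : ℕ) : ∃ g, Wit φ n (lev φ n) g :=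
  Nat.find_spec (exists_wit φ n)

theorem lev_le {φ : F[X] →ₗ[F] F} {n d : ℕ} {g : F[X]} (h : Wit φ n d g) : lev φ n ≤ d :=
  Nat.find_min' _ ⟨g, h⟩

theorem lev_le' {φ : F[X] →ₗ[F] F} {n d : ℕ} {g : F[X]} (hg : g ≠ 0)
    (hd : g.natDegree ≤ d) (h : ∀ b, b + d < n → φ (g * X ^ b) = 0) : lev φ n ≤ d :=
  Nat.find_min' _ (exists_wit_of_ne_zero hg hd h)

theorem one_lt_card : 1 < Fintype.card F := Fintype.one_lt_card

theorem two_mul_lev_le (φ : F[X] →ₗ[F] F) (n : ℕ) : 2 * lev φ n ≤ n + 1 := by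
  -- with `d = n / 2 + n % 2` there are more unknown coefficients than linear conditions
  have hd : lev φ n ≤ (n + 1) / 2 := by
    set d := (n + 1) / 2 with hd
    have hcard : Fintype.card (Fin (n - d) → F) < (polyD F (d + 1)).card := by
      rw [card_polyD]
      simp only [Fintype.card_fun, Fintype.card_fin]
      exact Nat.pow_lt_pow_right one_lt_card (by omega)
    obtain ⟨δ, hδ, ε, hε, hne, heq⟩ := Finset.exists_ne_map_eq_of_card_lt_of_maps_to
      (s := polyD F (d + 1)) (t := Finset.univ) (by simpa using hcard)
      (f := fun δ => fun b : Fin (n - d) => φ (δ * X ^ (b : ℕ))) (fun _ _ => Finset.mem_coe.2 (Finset.mem_univ _))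
    rw [mem_polyD] at hδ hε
    refine lev_le' (g := δ - ε) (sub_ne_zero.2 hne) ?_ ?_
    · rw [← Nat.lt_succ_iff, natDegree_lt_iff_degree_lt (sub_ne_zero.2 hne)]
      exact lt_of_le_of_lt (degree_sub_le _ _) (max_lt hδ hε)
    · intro b hb
      have := congrFun heq ⟨b, by omega⟩
      dsimp only at this
      rw [sub_mul, map_sub, this, sub_self]
  omega

/-- A kernel element `δ` of degree `< lev φ n` is determined by the next value `φ (δ X ^ (n - i))`: if
two of them agreed there, their difference would witness a shorter recurrence. -/
theorem card_hank_le_of_le_lev (φ : F[X] →ₗ[F] F) {n i : ℕ} (hi : i ≤ lev φ n) (hin : i ≤ n) :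
    (hank φ i (n - i)).card ≤ Fintype.card F := by
  rw [← Finset.card_univ]
  refine Finset.card_le_card_of_injOn (fun δ => φ (δ * X ^ (n - i))) (fun _ _ => Finset.mem_coe.2 (Finset.mem_univ _)) ?_
  intro δ hδ ε hε heq
  by_contra hne
  have hsub := sub_mem_hank hδ hε
  rw [mem_hank] at hsub
  have h0 := sub_ne_zero.2 hne
  have hdeg := (natDegree_lt_iff_degree_lt h0).2 hsub.1
  have : lev φ n ≤ i - 1 := by
    refine lev_le' h0 (by omega) fun b hb => ?_
    rcases Nat.lt_or_ge b (n - i) with h | h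
    · exact hsub.2 b h
    · have : b = n - i := by omega
      subst this
      rw [sub_mul, map_sub]
      exact sub_eq_zero.2 heq
  omega

/-- In the middle range a kernel element is determined by its quotient by the minimal witness. -/
theorem card_hank_le_mid (φ : F[X] →ₗ[F] F) {n i : ℕ} (hi : lev φ n ≤ i)
    (hi' : i + lev φ n ≤ n) :
    (hank φ i (n - i)).card ≤ Fintype.card F ^ (i - lev φ n + 1) := by
  obtain ⟨g, hg, hgd, hgφ⟩ := lev_spec φ n
  set d := lev φ n with hd
  have hmin : ∀ (d' : ℕ) (g : F[X]), g ≠ 0 → g.natDegree ≤ d' →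
      (∀ b, b + d' < n → φ (g * X ^ b) = 0) → d ≤ d' := fun d' g h1 h2 h3 => lev_le' h1 h2 h3
  clear_value d
  set e := g.natDegree with he
  have hcard : Fintype.card (Fin (i - d + 1) → F) = Fintype.card F ^ (i - d + 1) := by simp
  rw [← hcard, ← Finset.card_univ]
  refine Finset.card_le_card_of_injOn (fun δ => fun a : Fin (i - d + 1) => (δ /ₘ g).coeff a)
    (fun _ _ => Finset.mem_coe.2 (Finset.mem_univ _)) ?_
  intro δ hδ δ' hδ' heq
  by_contra hne
  have hsub := sub_mem_hank hδ hδ'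
  rw [mem_hank] at hsub
  obtain ⟨hεdeg, hεφ⟩ := hsub
  set ε := δ - δ' with hε
  have hε0 : ε ≠ 0 := sub_ne_zero.2 hne
  set ρ := ε %ₘ g with hρ
  have hquot : X ^ (i - d + 1) ∣ ε /ₘ g := by
    rw [X_pow_dvd_iff]
    intro a ha
    have := congrFun heq ⟨a, ha⟩
    dsimp only at this
    rw [hε, sub_divByMonic' hg, coeff_sub, this, sub_self]
  obtain ⟨w, hw⟩ := hquot
  have hεeq : ε = ρ + g * (X ^ (i - d + 1) * w) := by
    rw [← hw, hρ]
    exact (modByMonic_add_div _ _).symm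
  have hρdeg : ρ.degree < e := by
    rw [he, ← degree_eq_natDegree hg.ne_zero]
    exact degree_modByMonic_lt _ hg
  have hwdeg : w ≠ 0 → w.natDegree + e + (i - d + 1) < i := by
    intro hw0
    have h1 : (ε /ₘ g).natDegree = ε.natDegree - e := natDegree_divByMonic _ hg
    rw [hw, natDegree_mul (pow_ne_zero _ X_ne_zero) hw0, natDegree_X_pow] at h1
    have h2 : ε.natDegree < i := (natDegree_lt_iff_degree_lt hε0).2 hεdeg
    omega
  have hρ0 : ρ = 0 := by
    by_contra hρ0
    have hr : ρ.natDegree < e := (natDegree_lt_iff_degree_lt hρ0).2 hρdeg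
    have s1 : ∀ b < e, φ (ρ * X ^ b) = 0 := by
      intro b hb
      have h1 : φ (ε * X ^ b) = 0 := hεφ b (by omega)
      have h2 : φ (g * (X ^ (i - d + 1) * w * X ^ b)) = 0 := by
        by_cases hw0 : w = 0
        · simp [hw0]
        refine map_mul_eq_zero (B := n - d) (fun b hb => hgφ b (by omega)) ?_
        have hne0 : X ^ (i - d + 1) * w * X ^ b ≠ 0 :=
          mul_ne_zero (mul_ne_zero (pow_ne_zero _ X_ne_zero) hw0) (pow_ne_zero _ X_ne_zero)
        rw [← natDegree_lt_iff_degree_lt hne0,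
          natDegree_mul (mul_ne_zero (pow_ne_zero _ X_ne_zero) hw0) (pow_ne_zero _ X_ne_zero),
          natDegree_mul (pow_ne_zero _ X_ne_zero) hw0, natDegree_X_pow, natDegree_X_pow]
        have := hwdeg hw0
        omega
      have h3 : ρ * X ^ b = ε * X ^ b - g * (X ^ (i - d + 1) * w * X ^ b) := by
        rw [hεeq]; ring
      rw [h3, map_sub, h1, h2, sub_zero]
    have s2 : ∀ b, b < n - d - ρ.natDegree → φ (ρ * (g * X ^ b)) = 0 := by
      intro b hb
      have h3 : ρ * (g * X ^ b) = g * (ρ * X ^ b) := by ring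
      rw [h3]
      refine map_mul_eq_zero (B := n - d) (fun b hb => hgφ b (by omega)) ?_
      have hne0 : ρ * X ^ b ≠ 0 := mul_ne_zero hρ0 (pow_ne_zero _ X_ne_zero)
      rw [← natDegree_lt_iff_degree_lt hne0, natDegree_mul hρ0 (pow_ne_zero _ X_ne_zero),
        natDegree_X_pow]
      omega
    have s3 : ∀ b, b < n - d - ρ.natDegree + e → φ (ρ * X ^ b) = 0 := by
      intro b hb
      rw [← modByMonic_add_div (X ^ b : F[X]) g, mul_add, map_add]
      have t1 : φ (ρ * (X ^ b %ₘ g)) = 0 := by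
        refine map_mul_eq_zero s1 ?_
        rw [he, ← degree_eq_natDegree hg.ne_zero]
        exact degree_modByMonic_lt _ hg
      have t2 : φ (ρ * (g * (X ^ b /ₘ g))) = 0 := by
        by_cases hq0 : (X ^ b /ₘ g : F[X]) = 0
        · simp [hq0]
        rw [← mul_assoc]
        refine map_mul_eq_zero (B := n - d - ρ.natDegree)
          (fun b hb => by rw [mul_assoc]; exact s2 b hb) ?_
        rw [← natDegree_lt_iff_degree_lt hq0, natDegree_divByMonic _ hg, natDegree_X_pow]
        have : e ≤ b := by
          by_contra hlt
          apply hq0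
          rw [divByMonic_eq_zero_iff hg, degree_X_pow, degree_eq_natDegree hg.ne_zero]
          exact_mod_cast not_le.1 hlt
        omega
      rw [t1, t2, add_zero]
    have := hmin (d - e + ρ.natDegree) ρ hρ0 (by omega) (fun b hb => s3 b (by omega))
    omega
  have hw0 : w ≠ 0 := by
    rintro rfl
    apply hε0
    rw [hεeq, hρ0]
    simp
  have hwd := hwdeg hw0
  have hfin : φ (g * X ^ (n - d)) = 0 := by
    have h1 := hεφ (n - i - 1 - w.natDegree) (by omega)
    rw [hεeq, hρ0, zero_add] at h1
    have h2 : w = w.eraseLead + C w.leadingCoeff * X ^ w.natDegree := by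
      exact (eraseLead_add_C_mul_X_pow w).symm
    have h3 : g * (X ^ (i - d + 1) * w) * X ^ (n - i - 1 - w.natDegree) =
        g * (X ^ (i - d + 1 + (n - i - 1 - w.natDegree)) * w.eraseLead) +
          w.leadingCoeff • (g * X ^ (n - d)) := by
      have : n - d = i - d + 1 + (n - i - 1 - w.natDegree) + w.natDegree := by omega
      rw [this, smul_eq_C_mul]
      generalize n - i - 1 - w.natDegree = m
      calc g * (X ^ (i - d + 1) * w) * X ^ m =
          g * (X ^ (i - d + 1) * (w.eraseLead + C w.leadingCoeff * X ^ w.natDegree)) * X ^ m := by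
            rw [← h2]
        _ = _ := by ring
    rw [h3, map_add, map_smul] at h1
    have h4 : φ (g * (X ^ (i - d + 1 + (n - i - 1 - w.natDegree)) * w.eraseLead)) = 0 := by
      by_cases hz : w.eraseLead = 0
      · simp [hz]
      refine map_mul_eq_zero (B := n - d) (fun b hb => hgφ b (by omega)) ?_
      rw [← natDegree_lt_iff_degree_lt (mul_ne_zero (pow_ne_zero _ X_ne_zero) hz),
        natDegree_mul (pow_ne_zero _ X_ne_zero) hz, natDegree_X_pow]
      have := eraseLead_natDegree_lt_or_eraseLead_eq_zero w
      have := this.resolve_right hz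
      omega
    rw [h4, zero_add, smul_eq_mul] at h1
    exact (mul_eq_zero.1 h1).resolve_left (leadingCoeff_ne_zero.2 hw0)
  have := hmin (d - 1) g hg.ne_zero (by omega) (fun b hb => by
    rcases Nat.lt_or_ge b (n - d) with h | h
    · exact hgφ b (by omega)
    · have : b = n - d := by omega
      rw [this, hfin])
  omega

/-- The number of kernel elements of the `i × (n - i)` Hankel matrix of `φ`, in terms of the level. -/
theorem card_hank_le {ψ : AddChar F ℂ} (hψ : ψ.IsPrimitive) (φ : F[X] →ₗ[F] F) {n i : ℕ}
    (hi : i ≤ n) :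
    Fintype.card F ^ (min (min i (n - i)) (lev φ n)) * (hank φ i (n - i)).card ≤
      Fintype.card F ^ (i + 1) := by
  have hq := one_lt_card (F := F)
  have h2 := two_mul_lev_le φ n
  rcases Nat.le_total i (lev φ n) with h | h
  · calc _ ≤ Fintype.card F ^ i * Fintype.card F := by
          gcongr
          · omega
          · omega
          · exact card_hank_le_of_le_lev φ h hi
      _ = _ := by rw [pow_succ]
  rcases Nat.le_total (i + lev φ n) n with h' | h'
  · calc _ ≤ Fintype.card F ^ (lev φ n) * Fintype.card F ^ (i - lev φ n + 1) := by
          gcongr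
          · omega
          · omega
          · exact card_hank_le_mid φ h h'
      _ = _ := by rw [← pow_add]; congr 1; omega
  · calc _ ≤ Fintype.card F ^ (n - i) * (hank φ i (n - i)).card := by
          gcongr
          · omega
          · omega
      _ = Fintype.card F ^ i * (hank φ (n - i) i).card := card_hank_symm hψ φ _ _
      _ ≤ Fintype.card F ^ i * Fintype.card F := by
          gcongr
          have := card_hank_le_of_le_lev φ (n := n) (i := n - i) (by omega) (by omega)
          rwa [Nat.sub_sub_self hi] at this
      _ = _ := by rw [pow_succ]

/-! ### Type I and type II sums, and the pointwise bound -/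

theorem vM_le {f : F[X]} (hf : f.Monic) : vM f ≤ f.natDegree := by
  rw [← sum_vM_dvs hf]
  exact Finset.single_le_sum (f := fun a => vM a) (fun _ _ => Nat.zero_le _)
    ((mem_dvs hf.ne_zero).2 ⟨hf, dvd_rfl⟩)

theorem sum_vM_sq_le {i n : ℕ} (hi : 0 < i) (hin : i ≤ n) :
    ∑ f ∈ monicD F i, (vM f : ℝ) ^ 2 ≤ n * (Fintype.card F : ℝ) ^ i := by
  have h := sum_vM (F := F) i hi
  have h' : ∑ f ∈ monicD F i, (vM f : ℝ) = (Fintype.card F : ℝ) ^ i := by exact_mod_cast h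
  rw [← h', Finset.mul_sum]
  refine Finset.sum_le_sum fun f hf => ?_
  rw [sq]
  have := vM_le (mem_monicD.1 hf).1
  rw [(mem_monicD.1 hf).2] at this
  gcongr
  omega

theorem card_coset_hank_le (φ : F[X] →ₗ[F] F) (i j : ℕ) (m : F[X]) (hm : m ∈ monicD F i) :
    ((monicD F i).filter fun m' => ∀ b < j, φ ((m - m') * X ^ b) = 0).card ≤
      (hank φ i j).card := by
  refine Finset.card_le_card_of_injOn (fun m' => m - m') ?_ ?_
  · intro m' hm'
    rw [Finset.mem_coe, Finset.mem_filter] at hm'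
    rw [Finset.mem_coe, mem_hank]
    refine ⟨?_, hm'.2⟩
    obtain ⟨h1, h2⟩ := mem_monicD.1 hm
    obtain ⟨h3, h4⟩ := mem_monicD.1 hm'.1
    rw [← h2, ← degree_eq_natDegree h1.ne_zero]
    refine degree_sub_lt_left ?_ h1.ne_zero (by rw [h1.leadingCoeff, h3.leadingCoeff])
    rw [degree_eq_natDegree h1.ne_zero, degree_eq_natDegree h3.ne_zero, h2, h4]
  · intro a _ b _ h
    exact sub_right_injective h

/-- Type I bound: an inner sum vanishes unless `m` lies in the kernel of a Hankel matrix. -/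
theorem type_one {ψ : AddChar F ℂ} (hψ : ψ.IsPrimitive) (φ : F[X] →ₗ[F] F) {n i j : ℕ}
    (hij : i + j = n) :
    (∑ m ∈ monicD F i, ‖∑ k ∈ monicD F j, ψ (φ (m * k))‖) *
      (Fintype.card F : ℝ) ^ (min (lev φ n) j) ≤ (Fintype.card F : ℝ) ^ (n + 1) := by
  have hq := one_lt_card (F := F)
  simp_rw [norm_sum_monicD_psi hψ]
  rw [← Finset.sum_filter, Finset.sum_const, nsmul_eq_mul]
  set A := (monicD F i).filter fun m => ∀ b < j, φ (m * X ^ b) = 0 with hA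
  suffices h : Fintype.card F ^ (min (lev φ n) j) * A.card ≤ Fintype.card F ^ (i + 1) by
    have h' : ((Fintype.card F ^ (min (lev φ n) j) * A.card : ℕ) : ℝ) ≤
      (Fintype.card F ^ (i + 1) : ℕ) := by exact_mod_cast h
    push_cast at h'
    calc _ = (Fintype.card F : ℝ) ^ j *
          ((Fintype.card F : ℝ) ^ (min (lev φ n) j) * A.card) := by ring
      _ ≤ (Fintype.card F : ℝ) ^ j * (Fintype.card F : ℝ) ^ (i + 1) := by gcongr
      _ = _ := by rw [← pow_add, ← hij]; congr 1; omega
  rcases A.eq_empty_or_nonempty with h0 | ⟨m, hm⟩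
  · rw [h0]
    simp
  rw [hA, Finset.mem_filter] at hm
  have hlev : lev φ n ≤ i := by
    have h1 := mem_monicD.1 hm.1
    exact lev_le ⟨h1.1, h1.2.le, fun b hb => hm.2 b (by omega)⟩
  have hc : A.card ≤ (hank φ i j).card := by
    refine le_trans (Finset.card_le_card ?_) (card_coset_hank_le φ i j m hm.1)
    intro m' hm'
    rw [hA, Finset.mem_filter] at hm'
    rw [Finset.mem_filter]
    refine ⟨hm'.1, fun b hb => ?_⟩
    rw [sub_mul, map_sub, hm.2 b hb, hm'.2 b hb, sub_zero]
  have h2 := card_hank_le hψ φ (n := n) (i := i) (by omega)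
  have hj : n - i = j := by omega
  rw [hj] at h2
  refine le_trans (Nat.mul_le_mul ?_ hc) h2
  exact Nat.pow_le_pow_right (by omega) (by omega)

/-- Type II bound: after the Cauchy-Schwarz inequality, the pairs `k, k'` that contribute are those for
which `k - k'` lies in the kernel of a Hankel matrix. -/
theorem type_two {ψ : AddChar F ℂ} (hψ : ψ.IsPrimitive) (φ : F[X] →ₗ[F] F) {n i j : ℕ}
    (hij : i + j = n) (a w : F[X] → ℂ) :
    ‖∑ c ∈ monicD F i, ∑ k ∈ monicD F j, a c * w k * ψ (φ (c * k))‖ ^ 2 *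
      (Fintype.card F : ℝ) ^ (min (min i j) (lev φ n)) ≤
      (∑ c ∈ monicD F i, ‖a c‖ ^ 2) * (∑ k ∈ monicD F j, ‖w k‖ ^ 2) *
        (Fintype.card F : ℝ) ^ (n + 1) := by
  have hq := one_lt_card (F := F)
  set Y : F[X] → ℂ := fun c => ∑ k ∈ monicD F j, w k * ψ (φ (c * k)) with hY
  have h1 : ‖∑ c ∈ monicD F i, ∑ k ∈ monicD F j, a c * w k * ψ (φ (c * k))‖ ^ 2 ≤
      (∑ c ∈ monicD F i, ‖a c‖ ^ 2) * ∑ c ∈ monicD F i, ‖Y c‖ ^ 2 := by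
    have : ∑ c ∈ monicD F i, ∑ k ∈ monicD F j, a c * w k * ψ (φ (c * k)) =
        ∑ c ∈ monicD F i, a c * Y c := by
      refine Finset.sum_congr rfl fun c _ => ?_
      rw [hY, Finset.mul_sum]
      exact Finset.sum_congr rfl fun k _ => by ring
    rw [this]
    calc _ ≤ (∑ c ∈ monicD F i, ‖a c‖ * ‖Y c‖) ^ 2 := by
          gcongr
          refine (norm_sum_le _ _).trans_eq ?_
          simp_rw [norm_mul]
      _ ≤ _ := Finset.sum_mul_sq_le_sq_mul_sq _ _ _
  have h2 : ∑ c ∈ monicD F i, ‖Y c‖ ^ 2 ≤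
      (Fintype.card F : ℝ) ^ i * ((hank φ j i).card * ∑ k ∈ monicD F j, ‖w k‖ ^ 2) := by
    have e1 : ((∑ c ∈ monicD F i, ‖Y c‖ ^ 2 : ℝ) : ℂ) =
        ∑ k ∈ monicD F j, ∑ k' ∈ monicD F j, w k * (starRingEnd ℂ) (w k') *
          ∑ c ∈ monicD F i, ψ (φ ((k - k') * c)) := by
      push_cast
      have : ∀ c, (‖Y c‖ : ℂ) ^ 2 = ∑ k ∈ monicD F j, ∑ k' ∈ monicD F j,
          w k * (starRingEnd ℂ) (w k') * ψ (φ ((k - k') * c)) := by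
        intro c
        rw [← Complex.mul_conj', hY, map_sum, Finset.sum_mul_sum]
        refine Finset.sum_congr rfl fun k _ => Finset.sum_congr rfl fun k' _ => ?_
        rw [map_mul (starRingEnd ℂ), ← AddChar.map_neg_eq_conj, sub_mul, map_sub, sub_eq_add_neg,
          AddChar.map_add_eq_mul, mul_comm c k, mul_comm c k']
        ring
      simp_rw [this]
      rw [Finset.sum_comm]
      refine Finset.sum_congr rfl fun k _ => ?_
      rw [Finset.sum_comm]
      refine Finset.sum_congr rfl fun k' _ => ?_
      rw [Finset.mul_sum]
    have e2 : ∑ c ∈ monicD F i, ‖Y c‖ ^ 2 ≤ ∑ k ∈ monicD F j, ∑ k' ∈ monicD F j,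
        if ∀ b < i, φ ((k - k') * X ^ b) = 0 then
          ((‖w k‖ ^ 2 + ‖w k'‖ ^ 2) / 2) * (Fintype.card F : ℝ) ^ i else 0 := by
      have : ∑ c ∈ monicD F i, ‖Y c‖ ^ 2 = ‖((∑ c ∈ monicD F i, ‖Y c‖ ^ 2 : ℝ) : ℂ)‖ := by
        rw [Complex.norm_real, Real.norm_of_nonneg]
        positivity
      rw [this, e1]
      refine (norm_sum_le _ _).trans (Finset.sum_le_sum fun k _ => ?_)
      refine (norm_sum_le _ _).trans (Finset.sum_le_sum fun k' _ => ?_)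
      rw [norm_mul, norm_mul, RCLike.norm_conj, norm_sum_monicD_psi hψ]
      split_ifs
      · gcongr
        nlinarith [sq_nonneg (‖w k‖ - ‖w k'‖)]
      · simp
    refine e2.trans ?_
    have e3 : ∑ k ∈ monicD F j, ∑ k' ∈ monicD F j,
        (if ∀ b < i, φ ((k - k') * X ^ b) = 0 then
          ((‖w k‖ ^ 2 + ‖w k'‖ ^ 2) / 2) * (Fintype.card F : ℝ) ^ i else 0) =
        ∑ k ∈ monicD F j, ∑ k' ∈ monicD F j,
        (if ∀ b < i, φ ((k - k') * X ^ b) = 0 then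
          ‖w k‖ ^ 2 * (Fintype.card F : ℝ) ^ i else 0) := by
      have hsw : ∑ k ∈ monicD F j, ∑ k' ∈ monicD F j,
        (if ∀ b < i, φ ((k - k') * X ^ b) = 0 then
          ‖w k'‖ ^ 2 * (Fintype.card F : ℝ) ^ i else 0) =
        ∑ k ∈ monicD F j, ∑ k' ∈ monicD F j,
        (if ∀ b < i, φ ((k - k') * X ^ b) = 0 then
          ‖w k‖ ^ 2 * (Fintype.card F : ℝ) ^ i else 0) := by
        rw [Finset.sum_comm]
        refine Finset.sum_congr rfl fun k _ => Finset.sum_congr rfl fun k' _ => ?_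
        congr 1
        apply propext
        have : ∀ b, φ ((k' - k) * X ^ b) = - φ ((k - k') * X ^ b) := by
          intro b
          rw [← map_neg]
          congr 1
          ring
        simp_rw [this, neg_eq_zero]
      have hh : ∀ k k' : F[X], (if ∀ b < i, φ ((k - k') * X ^ b) = 0 then
          ((‖w k‖ ^ 2 + ‖w k'‖ ^ 2) / 2) * (Fintype.card F : ℝ) ^ i else 0) =
          2⁻¹ * (if ∀ b < i, φ ((k - k') * X ^ b) = 0 then
          ‖w k‖ ^ 2 * (Fintype.card F : ℝ) ^ i else 0) +
          2⁻¹ * (if ∀ b < i, φ ((k - k') * X ^ b) = 0 then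
          ‖w k'‖ ^ 2 * (Fintype.card F : ℝ) ^ i else 0) := by
        intro k k'
        split_ifs <;> ring
      simp_rw [hh, Finset.sum_add_distrib, ← Finset.mul_sum]
      rw [hsw]
      ring
    rw [e3, Finset.mul_sum, Finset.mul_sum]
    refine Finset.sum_le_sum fun k hk => ?_
    rw [← Finset.sum_filter, Finset.sum_const, nsmul_eq_mul]
    have := card_coset_hank_le φ j i k hk
    calc _ ≤ ((hank φ j i).card : ℝ) * (‖w k‖ ^ 2 * (Fintype.card F : ℝ) ^ i) := by
          gcongr
      _ = _ := by ring
  have h3 := card_hank_le hψ φ (n := n) (i := j) (by omega)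
  have hj : n - j = i := by omega
  rw [hj, min_comm j i] at h3
  have h3' : (Fintype.card F : ℝ) ^ (min (min i j) (lev φ n)) * (hank φ j i).card ≤
      (Fintype.card F : ℝ) ^ (j + 1) := by exact_mod_cast h3
  set A := ∑ c ∈ monicD F i, ‖a c‖ ^ 2 with hA
  set W := ∑ k ∈ monicD F j, ‖w k‖ ^ 2 with hW
  have hA0 : 0 ≤ A := by positivity
  have hW0 : 0 ≤ W := by positivity
  calc _ ≤ (A * ((Fintype.card F : ℝ) ^ i * ((hank φ j i).card * W))) *
        (Fintype.card F : ℝ) ^ (min (min i j) (lev φ n)) := by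
        gcongr
        exact h1.trans (by gcongr)
    _ = A * W * (Fintype.card F : ℝ) ^ i *
        ((Fintype.card F : ℝ) ^ (min (min i j) (lev φ n)) * (hank φ j i).card) := by ring
    _ ≤ A * W * (Fintype.card F : ℝ) ^ i * (Fintype.card F : ℝ) ^ (j + 1) := by gcongr
    _ = _ := by
        rw [← hij, mul_assoc, ← pow_add]
        congr 2

/-- Pointwise bound for the exponential sum over primes in terms of the length of the shortest
linear recurrence satisfied by the frequency. -/
theorem norm_sum_vM_psi_le {ψ : AddChar F ℂ} (hψ : ψ.IsPrimitive) (φ : F[X] →ₗ[F] F) {n : ℕ}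
    (hn : 0 < n) :
    ‖∑ f ∈ monicD F n, (vM f : ℂ) * ψ (φ f)‖ ≤
      3 * (n + 1) ^ 3 *
        (Fintype.card F : ℝ) ^ ((n : ℝ) + 1 - min ((lev φ n : ℝ) / 2) ((n : ℝ) / 5)) := by
  set Q : ℝ := (Fintype.card F : ℝ) with hQ
  have hQ1 : 1 < Q := by rw [hQ]; exact_mod_cast one_lt_card (F := F)
  have hQ0 : 0 < Q := by linarith
  set κ : ℝ := min ((lev φ n : ℝ) / 2) ((n : ℝ) / 5) with hκ
  have hκ1 : κ ≤ (lev φ n : ℝ) / 2 := min_le_left _ _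
  have hκ2 : κ ≤ (n : ℝ) / 5 := min_le_right _ _
  have hκ0 : 0 ≤ κ := by positivity
  obtain ⟨α, w, h1, h2, h3, h4, h5⟩ := vaughan (F := F) (2 * n / 5) (2 * n / 5) n (by omega)
  rw [h5 (fun f => ψ (φ f))]
  have hterm : ∀ p ∈ Finset.HasAntidiagonal.antidiagonal n,
      ‖(∑ a ∈ monicD F p.1, α a * ∑ b ∈ monicD F p.2, ψ (φ (a * b))) +
            if 2 * n / 5 < p.1 then
              ∑ a ∈ monicD F p.1, ∑ b ∈ monicD F p.2, (vM a : ℂ) * w b * ψ (φ (a * b)) else 0‖ ≤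
        3 * (n + 1) ^ 2 * Q ^ ((n : ℝ) + 1 - κ) := by
    rintro ⟨i, j⟩ hp
    rw [Finset.HasAntidiagonal.mem_antidiagonal] at hp
    dsimp only at hp ⊢
    have t1 : ‖∑ a ∈ monicD F i, α a * ∑ b ∈ monicD F j, ψ (φ (a * b))‖ ≤
        2 * n * Q ^ ((n : ℝ) + 1 - κ) := by
      rcases Nat.lt_or_ge (2 * n / 5 + 2 * n / 5) i with hi | hi
      · rw [Finset.sum_eq_zero, norm_zero]
        · positivity
        · intro a ha
          rw [h2 a (by rw [(mem_monicD.1 ha).2]; exact hi), zero_mul]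
      · have s1 : ‖∑ a ∈ monicD F i, α a * ∑ b ∈ monicD F j, ψ (φ (a * b))‖ ≤
            2 * n * ∑ a ∈ monicD F i, ‖∑ b ∈ monicD F j, ψ (φ (a * b))‖ := by
          rw [Finset.mul_sum]
          refine (norm_sum_le _ _).trans (Finset.sum_le_sum fun a ha => ?_)
          rw [norm_mul]
          gcongr
          exact h1 a (mem_monicD.1 ha).1 (by rw [(mem_monicD.1 ha).2]; omega)
        refine s1.trans ?_
        gcongr
        have s2 := type_one hψ φ hp
        have s3 : κ ≤ ((min (lev φ n) j : ℕ) : ℝ) := by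
          rw [Nat.cast_min]
          refine le_min (hκ1.trans ?_) (hκ2.trans ?_)
          · have : (0 : ℝ) ≤ lev φ n := by positivity
            linarith
          · have : n ≤ 5 * j := by omega
            have : (n : ℝ) ≤ 5 * j := by exact_mod_cast this
            linarith
        have s4 : Q ^ κ ≤ Q ^ (min (lev φ n) j) := by
          rw [← Real.rpow_natCast]
          exact Real.rpow_le_rpow_of_exponent_le hQ1.le s3
        have s5 : Q ^ ((n : ℝ) + 1 - κ) = Q ^ (n + 1) / Q ^ κ := by
          rw [Real.rpow_sub hQ0]
          congr 1
          exact_mod_cast Real.rpow_natCast Q (n + 1)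
        rw [s5, le_div_iff₀ (by positivity)]
        refine le_trans ?_ s2
        gcongr
    have t2 : ‖if 2 * n / 5 < i then
              ∑ a ∈ monicD F i, ∑ b ∈ monicD F j, (vM a : ℂ) * w b * ψ (φ (a * b)) else 0‖ ≤
        (n + 1) ^ 2 * Q ^ ((n : ℝ) + 1 - κ) := by
      split_ifs with hi
      swap
      · rw [norm_zero]
        positivity
      rcases Nat.lt_or_ge (2 * n / 5) j with hj | hj
      swap
      · rw [Finset.sum_eq_zero, norm_zero]
        · positivity
        · intro a _
          refine Finset.sum_eq_zero fun b hb => ?_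
          rw [h4 b (mem_monicD.1 hb).1 (by rw [(mem_monicD.1 hb).2]; exact hj)]
          ring
      have s2 := type_two hψ φ hp (fun a => (vM a : ℂ)) w
      have s3 : 2 * κ - 1 ≤ ((min (min i j) (lev φ n) : ℕ) : ℝ) := by
        rw [Nat.cast_min, Nat.cast_min]
        refine le_min (le_min ?_ ?_) ?_
        · have : 2 * n ≤ 5 * i := by omega
          have : 2 * (n : ℝ) ≤ 5 * i := by exact_mod_cast this
          linarith
        · have : 2 * n ≤ 5 * j := by omega
          have : 2 * (n : ℝ) ≤ 5 * j := by exact_mod_cast this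
          linarith
        · linarith
      have s4 : Q ^ (2 * κ - 1) ≤ Q ^ (min (min i j) (lev φ n)) := by
        rw [← Real.rpow_natCast]
        exact Real.rpow_le_rpow_of_exponent_le hQ1.le s3
      have s5 : (∑ c ∈ monicD F i, ‖(vM c : ℂ)‖ ^ 2) ≤ n * Q ^ i := by
        simp_rw [Complex.norm_natCast]
        exact sum_vM_sq_le (by omega) (by omega)
      have s6 : (∑ k ∈ monicD F j, ‖w k‖ ^ 2) ≤ (n + 1) ^ 3 * Q ^ j := by
        calc _ ≤ ∑ k ∈ monicD F j, ((dvs k).card : ℝ) ^ 2 := by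
              refine Finset.sum_le_sum fun k hk => ?_
              gcongr
              exact h3 k (mem_monicD.1 hk).1
          _ ≤ (j + 1) ^ 3 * Q ^ j := by
              have h : ((∑ f ∈ monicD F j, (dvs f).card ^ 2 : ℕ) : ℝ) ≤
                  (((j + 1) ^ 3 * Fintype.card F ^ j : ℕ) : ℝ) :=
                Nat.cast_le.2 (sum_card_dvs_sq_le (F := F) j)
              push_cast at h
              exact h
          _ ≤ _ := by
              gcongr
              omega
      refine (pow_le_pow_iff_left₀ (norm_nonneg _) (by positivity) two_ne_zero).1 ?_
      have s7 : ((n + 1 : ℝ) ^ 2 * Q ^ ((n : ℝ) + 1 - κ)) ^ 2 =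
          (n + 1) ^ 4 * (Q ^ (n + (n + 1)) / Q ^ (2 * κ - 1)) := by
        rw [mul_pow, ← Real.rpow_natCast (Q ^ ((n : ℝ) + 1 - κ)), ← Real.rpow_mul hQ0.le,
          ← Real.rpow_natCast Q (n + (n + 1)), ← Real.rpow_sub hQ0]
        push_cast
        ring_nf
      rw [s7, mul_div_assoc', le_div_iff₀ (by positivity)]
      calc _ ≤ _ := by gcongr
        _ ≤ _ := s2
        _ ≤ (n * Q ^ i) * ((n + 1) ^ 3 * Q ^ j) * Q ^ (n + 1) := by gcongr
        _ = n * (n + 1) ^ 3 * Q ^ (n + (n + 1)) := by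
            rw [← hp]
            ring
        _ ≤ (n + 1) ^ 4 * Q ^ (n + (n + 1)) := by
            gcongr
            have : (n : ℝ) ≤ n + 1 := by linarith
            calc (n : ℝ) * (n + 1) ^ 3 ≤ (n + 1) * (n + 1) ^ 3 := by gcongr
              _ = _ := by ring
    calc _ ≤ _ := norm_add_le _ _
      _ ≤ 2 * n * Q ^ ((n : ℝ) + 1 - κ) + (n + 1) ^ 2 * Q ^ ((n : ℝ) + 1 - κ) := add_le_add t1 t2
      _ = (2 * n + (n + 1) ^ 2) * Q ^ ((n : ℝ) + 1 - κ) := by ring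
      _ ≤ _ := by
          gcongr
          nlinarith [(Nat.cast_nonneg n : (0 : ℝ) ≤ n)]
  calc _ ≤ ∑ p ∈ Finset.HasAntidiagonal.antidiagonal n, 3 * (n + 1) ^ 2 * Q ^ ((n : ℝ) + 1 - κ) :=
        (norm_sum_le _ _).trans (Finset.sum_le_sum hterm)
    _ = _ := by
        rw [Finset.sum_const, Finset.Nat.card_antidiagonal, nsmul_eq_mul]
        push_cast
        ring

/-! ### Characters of truncated polynomial rings -/

/-- The ring `F[X]/(X^m)`. -/
abbrev TR (F : Type) [Field F] (m : ℕ) := AdjoinRoot (X ^ m : F[X])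

instance finite_TR (m : ℕ) : Finite (TR F m) := by
  have : Module.Finite F (TR F m) := (monic_X_pow m).finite_adjoinRoot
  exact Module.finite_of_finite F

lemma mk_TR_eq_iff {m : ℕ} {f g : F[X]} :
    (AdjoinRoot.mk (X ^ m) f : TR F m) = AdjoinRoot.mk (X ^ m) g ↔
      ∀ i < m, f.coeff i = g.coeff i := by
  rw [AdjoinRoot.mk_eq_mk, X_pow_dvd_iff]
  simp only [coeff_sub, sub_eq_zero]

lemma isUnit_mk_TR_iff {m : ℕ} (hm : 1 ≤ m) {f : F[X]} :
    IsUnit (AdjoinRoot.mk (X ^ m) f : TR F m) ↔ f.coeff 0 ≠ 0 := by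
  constructor
  · rintro h h0
    obtain ⟨b, hb⟩ := h.exists_right_inv
    obtain ⟨g, rfl⟩ := AdjoinRoot.mk_surjective b
    rw [← map_mul, ← map_one (AdjoinRoot.mk (X ^ m)), mk_TR_eq_iff] at hb
    have := hb 0 (by omega)
    simp [h0] at this
  · intro h
    have hc : IsCoprime (X ^ m) f := by
      refine IsCoprime.pow_left ((irreducible_X.coprime_iff_not_dvd).2 ?_)
      rwa [X_dvd_iff]
    obtain ⟨a, b, hab⟩ := hc
    refine IsUnit.of_mul_eq_one (AdjoinRoot.mk _ b) ?_
    rw [← map_mul, ← map_one (AdjoinRoot.mk (X ^ m)), AdjoinRoot.mk_eq_mk]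
    exact ⟨-a, by linear_combination hab⟩

lemma norm_mulChar_unit {A : Type} [CommRing A] [Finite A] (χ : MulChar A ℂ) {a : A}
    (ha : IsUnit a) : ‖χ a‖ = 1 := by
  have := Fintype.ofFinite Aˣ
  refine Complex.norm_eq_one_of_pow_eq_one (n := Fintype.card Aˣ) ?_ Fintype.card_ne_zero
  rw [← MulChar.pow_apply' _ Fintype.card_ne_zero, χ.pow_card_eq_one, MulChar.one_apply ha]

lemma norm_mulChar_le {A : Type} [CommRing A] [Finite A] (χ : MulChar A ℂ) (a : A) :
    ‖χ a‖ ≤ 1 := by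
  by_cases ha : IsUnit a
  · exact (norm_mulChar_unit χ ha).le
  · simp [χ.map_nonunit ha]

lemma sum_mulChar_mul_conj {A : Type} [CommRing A] [Finite A] [Fintype (MulChar A ℂ)] {a b : A}
    (hb : IsUnit b) :
    ∑ χ : MulChar A ℂ, χ a * (starRingEnd ℂ) (χ b) =
      if a = b then (Fintype.card (MulChar A ℂ) : ℂ) else 0 := by
  obtain ⟨u, rfl⟩ := hb
  have h1 : ∀ χ : MulChar A ℂ, χ a * (starRingEnd ℂ) (χ u) = χ (a * (u⁻¹ : Aˣ)) := by
    intro χ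
    rw [map_mul]
    congr 1
    rw [← Complex.star_def, MulChar.star_apply', MulChar.inv_apply, Ring.inverse_unit]
  simp_rw [h1]
  by_cases h : a = u
  · simp [h]
  · rw [if_neg h]
    have h2 : a * (u⁻¹ : Aˣ) ≠ 1 := by
      intro h3
      apply h
      rw [Units.mul_inv_eq_iff_eq_mul] at h3
      simpa using h3
    obtain ⟨χ, hχ⟩ := MulChar.exists_apply_ne_one_of_hasEnoughRootsOfUnity A ℂ h2
    refine eq_zero_of_mul_eq_self_left hχ ?_
    simp only [Finset.mul_sum, ← MulChar.mul_apply]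
    exact Fintype.sum_bijective _ (Group.mulLeft_bijective χ) _ _ fun χ' ↦ rfl

/-- A character of `F[X]/(X^m)` either depends only on the constant coefficient, or has an exact
conductor exponent `j + 1`: changing the coefficient of `X^j` changes its value by a nontrivial
additive character. -/
lemma truncChar_cases {m : ℕ} (hm : 1 ≤ m) (χ : MulChar (TR F m) ℂ) :
    (∀ f g : F[X], f.coeff 0 = g.coeff 0 →
      χ (AdjoinRoot.mk (X ^ m) f) = χ (AdjoinRoot.mk (X ^ m) g)) ∨
    ∃ j, 1 ≤ j ∧ j < m ∧ ∃ θ : AddChar F ℂ, θ ≠ 1 ∧ ∀ (f g : F[X]) (c : F),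
      (∀ i < j, g.coeff i = f.coeff i) → g.coeff j = f.coeff j + c * f.coeff 0 →
      χ (AdjoinRoot.mk (X ^ m) g) = χ (AdjoinRoot.mk (X ^ m) f) * θ c := by
  let T : ℕ → Prop := fun j => ∀ f g : F[X], (∀ i < j, f.coeff i = g.coeff i) →
      χ (AdjoinRoot.mk (X ^ m) f) = χ (AdjoinRoot.mk (X ^ m) g)
  have hTm : T m := fun f g h => by rw [mk_TR_eq_iff.2 h]
  by_cases h1 : T 1
  · exact Or.inl fun f g h => h1 f g fun i hi => by
      obtain rfl : i = 0 := by omega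
      exact h
  right
  have hex : ∃ j, T (j + 1) := ⟨m - 1, by rwa [Nat.sub_add_cancel hm]⟩
  set j := Nat.find hex with hj
  have hTj : T (j + 1) := Nat.find_spec hex
  have hjm : j ≤ m - 1 := Nat.find_min' hex (by rwa [Nat.sub_add_cancel hm])
  have hj1 : 1 ≤ j := by
    rcases Nat.eq_zero_or_pos j with h | h
    · rw [h] at hTj
      exact absurd hTj h1
    · exact h
  have hnT : ¬ T j := by
    have := Nat.find_min hex (m := j - 1) (by omega)
    rwa [Nat.sub_add_cancel hj1] at this
  have hco : ∀ (f : F[X]) (c : F) (i : ℕ), (f * (1 + C c * X ^ j)).coeff i =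
      f.coeff i + if j ≤ i then c * f.coeff (i - j) else 0 := by
    intro f c i
    rw [mul_add, mul_one, coeff_add, mul_left_comm, coeff_C_mul, coeff_mul_X_pow']
    simp
  have key : ∀ (f g : F[X]) (c : F), (∀ i < j, g.coeff i = f.coeff i) →
      g.coeff j = f.coeff j + c * f.coeff 0 →
      χ (AdjoinRoot.mk (X ^ m) g) = χ (AdjoinRoot.mk (X ^ m) f) *
        χ (AdjoinRoot.mk (X ^ m) (1 + C c * X ^ j)) := by
    intro f g c h2 h3
    rw [← map_mul, ← map_mul]
    refine hTj _ _ fun i hi => ?_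
    rw [hco]
    split_ifs with h4
    · obtain rfl : i = j := by omega
      simp [h3]
    · rw [h2 i (by omega), add_zero]
  refine ⟨j, hj1, by omega,
    { toFun := fun c => χ (AdjoinRoot.mk (X ^ m) (1 + C c * X ^ j))
      map_zero_eq_one' := by simp
      map_add_eq_mul' := fun a b => ?_ }, ?_, key⟩
  · refine key _ _ b (fun i hi => ?_) ?_
    · simp [coeff_one, coeff_X_pow, hi.ne, add_mul]
    · simp [add_mul, coeff_one, coeff_X_pow, (show j ≠ 0 by omega), (show 0 ≠ j by omega)]
  · intro hθ
    apply hnT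
    intro f g hfg
    by_cases hf : f.coeff 0 = 0
    · have hg : g.coeff 0 = 0 := by rw [← hfg 0 (by omega), hf]
      rw [χ.map_nonunit, χ.map_nonunit]
      · rw [isUnit_mk_TR_iff hm]; simpa using hg
      · rw [isUnit_mk_TR_iff hm]; simpa using hf
    · have h5 := key f g ((g.coeff j - f.coeff j) / f.coeff 0) (fun i hi => (hfg i hi).symm)
        (by field_simp; ring)
      have h6 := DFunLike.congr_fun hθ ((g.coeff j - f.coeff j) / f.coeff 0)
      simp only [AddChar.coe_mk, AddChar.one_apply] at h6
      rw [h5, h6, mul_one]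

/-! ### Power sums of inverse roots -/

/-- A polynomial with constant coefficient `1` factors through its inverse roots. -/
lemma exists_multiset_eq_prod (P : ℂ[X]) (h0 : P.coeff 0 = 1) :
    ∃ s : Multiset ℂ, s.card = P.natDegree ∧
      P = (s.map fun a => (1 - C a * X : ℂ[X])).prod := by
  refine ⟨P.roots.map fun a => a⁻¹, ?_, ?_⟩
  · rw [Multiset.card_map, ← (IsAlgClosed.splits P).natDegree_eq_card_roots]
  · have hr : ∀ a ∈ P.roots, a ≠ 0 := by
      rintro a ha rfl
      have := (mem_roots'.1 ha).2
      rw [IsRoot, ← coeff_zero_eq_eval_zero, h0] at this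
      exact one_ne_zero this
    have h1 : P = C P.leadingCoeff * (P.roots.map fun a => X - C a).prod :=
      (IsAlgClosed.splits P).eq_prod_roots
    have h2 : (P.roots.map fun a => X - C a).prod =
        (P.roots.map fun a => C (-a)).prod * (P.roots.map fun a => (1 - C a⁻¹ * X : ℂ[X])).prod := by
      rw [← Multiset.prod_map_mul]
      refine congrArg _ (Multiset.map_congr rfl fun a ha => ?_)
      rw [mul_sub, mul_one, ← mul_assoc, ← C_mul, neg_mul, mul_inv_cancel₀ (hr a ha), C_neg, C_neg,
        C_1]
      ring
    have h3 : (P.roots.map fun a => C (-a)).prod = C (P.roots.map fun a => -a).prod := by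
      rw [← Multiset.prod_hom, Multiset.map_map]
      rfl
    rw [h2, h3, ← mul_assoc, ← C_mul] at h1
    have h4 : ((P.roots.map fun a => (1 - C a⁻¹ * X : ℂ[X])).prod).coeff 0 = 1 := by
      rw [coeff_zero_eq_eval_zero, eval_multiset_prod, Multiset.map_map]
      simp
    have h5 := congrArg (fun p => coeff p 0) h1
    simp only [coeff_C_mul, h4, h0, mul_one] at h5
    rw [← h5, C_1, one_mul] at h1
    rw [Multiset.map_map]
    exact h1

/-- The generating series `-∑ₙ (∑_{a ∈ s} aⁿ) Xⁿ`, without constant term. -/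
def powSeries (s : Multiset ℂ) : PowerSeries ℂ :=
  PowerSeries.mk fun n => if n = 0 then 0 else -(s.map fun a => a ^ n).sum

/-- Newton's identities, as the logarithmic derivative of `∏ (1 - aX)`. -/
lemma powSeries_mul (s : Multiset ℂ) :
    powSeries s * ((s.map fun a => (1 - C a * X : ℂ[X])).prod : ℂ[X]) =
      ((X * derivative (s.map fun a => (1 - C a * X : ℂ[X])).prod : ℂ[X]) : PowerSeries ℂ) := by
  induction s using Multiset.induction with
  | empty =>
    have : powSeries 0 = 0 := by
      ext n
      simp [powSeries]
    simp [this]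
  | cons a s ih =>
    have h1 : powSeries (a ::ₘ s) = powSeries {a} + powSeries s := by
      ext n
      simp only [powSeries, PowerSeries.coeff_mk, map_add]
      split_ifs <;> simp
      ring
    have h2 : powSeries {a} * ((1 - C a * X : ℂ[X]) : PowerSeries ℂ) =
        ((-(C a * X) : ℂ[X]) : PowerSeries ℂ) := by
      have h3 : ((1 - C a * X : ℂ[X]) : PowerSeries ℂ) =
          1 - PowerSeries.C a * PowerSeries.X := by
        rw [← Polynomial.coe_C, ← Polynomial.coe_X, ← Polynomial.coe_one, ← Polynomial.coe_mul,
          ← Polynomial.coe_sub]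
      rw [h3, mul_sub, mul_one, mul_left_comm]
      ext n
      rw [map_sub, PowerSeries.coeff_C_mul, Polynomial.coeff_coe]
      rcases n with _ | n
      · simp [powSeries]
      · rw [PowerSeries.coeff_succ_mul_X, coeff_neg, coeff_C_mul, coeff_X]
        simp only [powSeries, PowerSeries.coeff_mk]
        rcases n with _ | n
        · simp
        · simp
          ring
    rw [Multiset.map_cons, Multiset.prod_cons, derivative_mul]
    set P := (s.map fun a => (1 - C a * X : ℂ[X])).prod
    have h4 : X * (derivative (1 - C a * X) * P + (1 - C a * X) * derivative P) =
        -(C a * X) * P + (1 - C a * X) * (X * derivative P) := by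
      simp only [derivative_sub, derivative_one, derivative_C_mul, derivative_X]
      ring
    rw [h4, Polynomial.coe_add, Polynomial.coe_mul, Polynomial.coe_mul (-(C a * X)), ← h2,
      Polynomial.coe_mul (1 - C a * X) (X * derivative P), ← ih, h1]
    ring

/-- If `A` is finitely supported and `∑ pₙ uⁿ` is `u L' / L` for `L = ∑ Aₙ uⁿ`, then `-pₙ` are the power
sums of the inverse roots of `L`. -/
lemma exists_powerSum {d : ℕ} (A p : ℕ → ℂ) (hA0 : A 0 = 1) (hA : ∀ j, d ≤ j → A j = 0)
    (h : ∀ n, ∑ x ∈ Finset.HasAntidiagonal.antidiagonal n, p x.1 * A x.2 = n * A n) :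
    ∃ s : Multiset ℂ, s.card ≤ d ∧ ∀ n, 1 ≤ n → p n = -(s.map fun a => a ^ n).sum := by
  set L : ℂ[X] := ∑ j ∈ Finset.range d, monomial j (A j) with hL
  have hLc : ∀ j, L.coeff j = A j := by
    intro j
    rw [hL, finsetSum_coeff]
    simp only [coeff_monomial, Finset.sum_ite_eq', Finset.mem_range]
    split_ifs with hj
    · rfl
    · rw [hA j (by omega)]
  obtain ⟨s, hs, hLs⟩ := exists_multiset_eq_prod L (by rw [hLc, hA0])
  have hdeg : L.natDegree ≤ d := natDegree_le_iff_coeff_eq_zero.2 fun j hj => by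
    rw [hLc, hA j hj.le]
  refine ⟨s, hs.trans_le hdeg, fun n hn => ?_⟩
  have h1 : PowerSeries.mk p * (L : PowerSeries ℂ) = ((X * derivative L : ℂ[X]) : PowerSeries ℂ) := by
    ext n
    rw [PowerSeries.coeff_mul, Polynomial.coeff_coe]
    simp only [PowerSeries.coeff_mk, Polynomial.coeff_coe, hLc]
    rw [h n]
    rcases n with _ | n
    · simp
    · rw [coeff_X_mul, coeff_derivative, hLc]
      push_cast
      ring
  have h2 := powSeries_mul s
  rw [← hLs, ← h1] at h2
  have hL0 : (L : PowerSeries ℂ) ≠ 0 := by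
    intro h3
    have := congrArg (PowerSeries.coeff 0) h3
    rw [Polynomial.coeff_coe, hLc, hA0] at this
    simp at this
  have h3 := congrArg (PowerSeries.coeff n) (mul_right_cancel₀ hL0 h2)
  simp only [powSeries, PowerSeries.coeff_mk, if_neg (show n ≠ 0 by omega)] at h3
  exact h3.symm

/-- If the power sums of `s` grow at most like `ρ ^ r`, every element of `s` has norm at most `ρ`:
a polynomial vanishing on the other elements isolates each one. -/
lemma norm_le_of_powerSum_le (s : Multiset ℂ) {K ρ : ℝ} (hρ : 0 < ρ)
    (h : ∀ r : ℕ, 1 ≤ r → ‖(s.map fun a => a ^ r).sum‖ ≤ K * ρ ^ r) {b : ℂ} (hb : b ∈ s) :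
    ‖b‖ ≤ ρ := by
  set T : ℂ[X] := ∏ c ∈ s.toFinset.erase b, (X - C c) with hT
  have hTb : T.eval b ≠ 0 := by
    rw [hT, eval_prod, Finset.prod_ne_zero_iff]
    intro c hc
    rw [eval_sub, eval_X, eval_C, sub_ne_zero]
    exact (Finset.ne_of_mem_erase hc).symm
  have hT0 : ∀ c ∈ s, c ≠ b → T.eval c = 0 := by
    intro c hc hcb
    rw [hT, eval_prod]
    exact Finset.prod_eq_zero (Finset.mem_erase.2 ⟨hcb, Multiset.mem_toFinset.2 hc⟩) (by simp)
  have h1 : ∀ r, (s.map fun a => a ^ r * T.eval a).sum = s.count b * (b ^ r * T.eval b) := by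
    intro r
    rw [Finset.sum_multiset_map_count, Finset.sum_eq_single b]
    · rw [nsmul_eq_mul]
    · intro c hc hcb
      rw [hT0 c (Multiset.mem_toFinset.1 hc) hcb, mul_zero, smul_zero]
    · intro hb'
      exact absurd (Multiset.mem_toFinset.2 hb) hb'
  have h2 : ∀ r, (s.map fun a => a ^ r * T.eval a).sum =
      ∑ t ∈ T.support, T.coeff t * (s.map fun a => a ^ (r + t)).sum := by
    intro r
    have : ∀ a : ℂ, a ^ r * T.eval a = ∑ t ∈ T.support, T.coeff t * a ^ (r + t) := by
      intro a
      rw [eval_eq_sum, Polynomial.sum, Finset.mul_sum]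
      exact Finset.sum_congr rfl fun t _ => by ring
    simp_rw [this]
    have hsw : ∀ (g : ℂ → ℕ → ℂ) (S : Finset ℕ), (s.map fun a => ∑ t ∈ S, g a t).sum =
        ∑ t ∈ S, (s.map fun a => g a t).sum := by
      intro g S
      induction S using Finset.induction with
      | empty => simp
      | insert t S ht ih => simp [Finset.sum_insert ht, Multiset.sum_map_add, ih]
    rw [hsw]
    exact Finset.sum_congr rfl fun t _ => Multiset.sum_map_mul_left
  set K' : ℝ := ∑ t ∈ T.support, ‖T.coeff t‖ * (K * ρ ^ t) with hK'
  set m : ℝ := s.count b * ‖T.eval b‖ with hm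
  have hm0 : 0 < m := mul_pos (by exact_mod_cast Multiset.count_pos.2 hb) (norm_pos_iff.2 hTb)
  have h3 : ∀ r : ℕ, 1 ≤ r → m * ‖b‖ ^ r ≤ K' * ρ ^ r := by
    intro r hr
    calc m * ‖b‖ ^ r = ‖(s.map fun a => a ^ r * T.eval a).sum‖ := by
          rw [h1, norm_mul, norm_mul, norm_pow, Complex.norm_natCast]
          ring
      _ ≤ ∑ t ∈ T.support, ‖T.coeff t‖ * (K * ρ ^ (r + t)) := by
          rw [h2]
          refine (norm_sum_le _ _).trans (Finset.sum_le_sum fun t _ => ?_)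
          rw [norm_mul]
          gcongr
          exact h _ (by omega)
      _ = _ := by
          rw [hK', Finset.sum_mul]
          exact Finset.sum_congr rfl fun t _ => by ring
  by_contra! hlt
  have h4 : 1 < ‖b‖ / ρ := by rwa [one_lt_div hρ]
  obtain ⟨r, hr⟩ := pow_unbounded_of_one_lt (K' / m) h4
  have h5 : K' / m < (‖b‖ / ρ) ^ (r + 1) := hr.trans_le (pow_le_pow_right₀ h4.le (by omega))
  rw [div_lt_iff₀ hm0, div_pow, div_mul_eq_mul_div, lt_div_iff₀ (by positivity)] at h5
  linarith [h3 (r + 1) (by omega)]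

/-- A bound for `p (r d)` that is uniform in `r` transfers to all `p n`. -/
lemma norm_le_of_sparse_le {d : ℕ} (hd : 1 ≤ d) (A p : ℕ → ℂ) (hA0 : A 0 = 1)
    (hA : ∀ j, d ≤ j → A j = 0)
    (h : ∀ n, ∑ x ∈ Finset.HasAntidiagonal.antidiagonal n, p x.1 * A x.2 = n * A n)
    {K ρ : ℝ} (hρ : 0 < ρ) (hp : ∀ r : ℕ, 1 ≤ r → ‖p (r * d)‖ ≤ K * ρ ^ r) {n : ℕ} (hn : 1 ≤ n) :
    ‖p n‖ ≤ d * ρ ^ ((n : ℝ) / d) := by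
  obtain ⟨s, hs, hps⟩ := exists_powerSum A p hA0 hA h
  have h1 : ∀ a ∈ s, ‖a‖ ^ n ≤ ρ ^ ((n : ℝ) / d) := by
    intro a ha
    have h2 : ‖a ^ d‖ ≤ ρ := by
      refine norm_le_of_powerSum_le (s.map fun a => a ^ d) (K := K) hρ (fun r hr => ?_)
        (Multiset.mem_map_of_mem _ ha)
      have := hp r hr
      rw [hps _ (Nat.mul_pos hr hd), norm_neg] at this
      rw [Multiset.map_map]
      simpa only [Function.comp_def, ← pow_mul, mul_comm d r] using this
    rw [norm_pow] at h2
    have hd0 : (d : ℝ) ≠ 0 := by positivity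
    calc ‖a‖ ^ n = (‖a‖ ^ d) ^ ((n : ℝ) / d) := by
          rw [← Real.rpow_natCast, ← Real.rpow_natCast, ← Real.rpow_mul (norm_nonneg _),
            mul_div_cancel₀ _ hd0]
      _ ≤ _ := Real.rpow_le_rpow (by positivity) h2 (by positivity)
  rw [hps n hn, norm_neg]
  calc ‖(s.map fun a => a ^ n).sum‖ ≤ ((s.map fun a => a ^ n).map fun a => ‖a‖).sum :=
        norm_multiset_sum_le _
    _ ≤ (s.map fun a => ‖a‖ ^ n).card • ρ ^ ((n : ℝ) / d) := by
        rw [Multiset.map_map]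
        simp only [Function.comp_def, norm_pow]
        refine Multiset.sum_le_card_nsmul _ _ fun x hx => ?_
        obtain ⟨a, ha, rfl⟩ := Multiset.mem_map.1 hx
        exact h1 a ha
    _ ≤ _ := by
        rw [Multiset.card_map, nsmul_eq_mul]
        gcongr

/-! ### Norms of polynomials over extensions of finite fields -/

section Norm

variable {E K : Type} [Field E] [Fintype E] [Algebra F E] [Field K] [Fintype K]
  [Algebra F K] [Algebra E K] [IsScalarTower F E K]

variable (F) in
/-- The `i`-th power of the `q`-Frobenius. -/
def frb (E : Type) [Field E] [Algebra F E] (i : ℕ) : E →+* E :=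
  ((FiniteField.frobeniusAlgHom F E ^ i : E →ₐ[F] E) : E →+* E)

lemma frb_apply (i : ℕ) (x : E) : frb F E i x = x ^ Fintype.card F ^ i := by
  change (FiniteField.frobeniusAlgHom F E ^ i) x = _
  rw [AlgHom.coe_pow, FiniteField.coe_frobeniusAlgHom, pow_iterate]

lemma pow_card_finrank (x : E) : x ^ Fintype.card F ^ Module.finrank F E = x := by
  rw [← Module.card_eq_pow_finrank, FiniteField.pow_card]

lemma frb_zero : frb F E 0 = RingHom.id E := by
  ext x
  rw [frb_apply, pow_zero, pow_one, RingHom.id_apply]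

lemma frb_finrank : frb F E (Module.finrank F E) = RingHom.id E := by
  ext x
  rw [frb_apply, pow_card_finrank, RingHom.id_apply]

lemma frb_comp (i j : ℕ) : (frb F E i).comp (frb F E j) = frb F E (i + j) := by
  ext x
  rw [RingHom.comp_apply, frb_apply, frb_apply, frb_apply, ← pow_mul, ← pow_add, add_comm]

lemma frb_algebraMap (i : ℕ) (a : F) : frb F E i (algebraMap F E a) = algebraMap F E a := by
  exact AlgHom.commutes _ a

lemma exists_of_pow_card {x : E} (hx : x ^ Fintype.card F = x) : ∃ a, algebraMap F E a = x := by
  have h : x ∈ (⊥ : IntermediateField F E) := by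
    rw [IsGalois.mem_bot_iff_fixed]
    intro f
    obtain ⟨i, hi⟩ := (FiniteField.bijective_frobeniusAlgEquivOfAlgebraic_pow F E).2 f
    rw [← hi]
    simp only [AlgEquiv.coe_pow, FiniteField.coe_frobeniusAlgEquivOfAlgebraic_iterate]
    induction i.1 with
    | zero => simp
    | succ k ih => rw [pow_succ, pow_mul, ih, hx]
  rwa [IntermediateField.mem_bot] at h

lemma exists_map_eq {g : E[X]} (h : g.map (frb F E 1) = g) :
    ∃ f : F[X], f.map (algebraMap F E) = g := by
  have : g ∈ lifts (algebraMap F E) := by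
    rw [lifts_iff_coeff_lifts]
    intro i
    have h1 := congrArg (fun p => coeff p i) h
    simp only [coeff_map, frb_apply, pow_one] at h1
    exact exists_of_pow_card h1
  exact (mem_lifts _).1 this

lemma exists_norm (g : E[X]) : ∃ f : F[X], f.map (algebraMap F E) =
    ∏ i ∈ Finset.range (Module.finrank F E), g.map (frb F E i) := by
  apply exists_map_eq
  rw [Polynomial.map_prod]
  simp_rw [Polynomial.map_map, frb_comp]
  have h1 := Finset.prod_range_succ (fun i => g.map (frb F E i)) (Module.finrank F E)
  rw [Finset.prod_range_succ', frb_finrank, frb_zero, map_id] at h1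
  by_cases hg : g = 0
  · simp [hg, Finset.prod_const]
  · simpa only [add_comm] using mul_right_cancel₀ hg h1

variable (F) in
/-- The norm `E[X] → F[X]`, the product of all Galois conjugates. -/
def polyNorm (g : E[X]) : F[X] := (exists_norm g).choose

lemma map_polyNorm (g : E[X]) : (polyNorm F g).map (algebraMap F E) =
    ∏ i ∈ Finset.range (Module.finrank F E), g.map (frb F E i) := (exists_norm g).choose_spec

lemma map_inj' : Function.Injective (Polynomial.map (algebraMap F E)) :=
  map_injective _ (algebraMap F E).injective

lemma polyNorm_mul (g h : E[X]) : polyNorm F (g * h) = polyNorm F g * polyNorm F h := by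
  apply map_inj' (E := E)
  rw [Polynomial.map_mul, map_polyNorm, map_polyNorm, map_polyNorm, ← Finset.prod_mul_distrib]
  simp_rw [Polynomial.map_mul]

lemma polyNorm_monic {g : E[X]} (hg : g.Monic) : (polyNorm F g).Monic := by
  have h : ((polyNorm F g).map (algebraMap F E)).Monic := by
    rw [map_polyNorm]
    exact monic_prod_of_monic _ _ fun i _ => hg.map _
  exact monic_of_injective (algebraMap F E).injective h

lemma polyNorm_natDegree {g : E[X]} (hg : g.Monic) :
    (polyNorm F g).natDegree = Module.finrank F E * g.natDegree := by
  rw [← natDegree_map (algebraMap F E), map_polyNorm, natDegree_prod_of_monic _ _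
    fun i _ => hg.map _]
  simp

lemma map_algebraMap_frb (g : E[X]) (i : ℕ) :
    (g.map (frb F E i)).map (algebraMap E K) = (g.map (algebraMap E K)).map (frb F K i) := by
  rw [Polynomial.map_map, Polynomial.map_map]
  congr 1
  ext x
  simp only [RingHom.comp_apply, frb_apply, map_pow]

lemma polyNorm_polyNorm (g : K[X]) : polyNorm F (polyNorm E g) = polyNorm F g := by
  apply map_inj' (E := K)
  rw [map_polyNorm, IsScalarTower.algebraMap_eq F E K, ← Polynomial.map_map, map_polyNorm,
    Polynomial.map_prod]
  simp_rw [map_algebraMap_frb (F := F) (E := E) (K := K), map_polyNorm, Polynomial.map_prod]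
  rw [← Module.finrank_mul_finrank F E K]
  have h1 : ∀ i j : ℕ, (g.map (frb E K j)).map (frb F K i) =
      g.map (frb F K (Module.finrank F E * j + i)) := by
    intro i j
    rw [Polynomial.map_map]
    congr 1
    ext x
    rw [RingHom.comp_apply, frb_apply, frb_apply, frb_apply, ← pow_mul,
      Module.card_eq_pow_finrank (K := F) (V := E), ← pow_mul, ← pow_add]
  simp_rw [h1]
  rw [Finset.prod_comm]
  generalize Module.finrank E K = d
  induction d with
  | zero => simp
  | succ d ih => rw [Finset.prod_range_succ, ih, mul_add, mul_one, Finset.prod_range_add]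

lemma X_sub_C_dvd_map_polyNorm (x : E) :
    (X - C x) ∣ (polyNorm F (X - C x)).map (algebraMap F E) := by
  rw [map_polyNorm]
  have h := Finset.dvd_prod_of_mem (fun i => (X - C x).map (frb F E i))
    (Finset.mem_range.2 (Module.finrank_pos (R := F) (M := E)))
  simpa only [frb_zero, map_id] using h

lemma eq_minpoly_of_dvd_polyNorm {x : E} {R : F[X]} (hR : R.Monic) (hRi : Irreducible R)
    (hd : R ∣ polyNorm F (X - C x)) : R = minpoly F x := by
  have h1 : R.map (algebraMap F E) ∣
      ∏ i ∈ Finset.range (Module.finrank F E), (X - C (frb F E i x)) := by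
    have := Polynomial.map_dvd (algebraMap F E) hd
    rw [map_polyNorm] at this
    simpa using this
  have h2 : (∏ i ∈ Finset.range (Module.finrank F E), (X - C (frb F E i x)) : E[X]).Splits :=
    Splits.prod fun i _ => Splits.X_sub_C _
  have h0 : (∏ i ∈ Finset.range (Module.finrank F E), (X - C (frb F E i x)) : E[X]) ≠ 0 :=
    Finset.prod_ne_zero_iff.2 fun i _ => X_sub_C_ne_zero _
  have h3 : (R.map (algebraMap F E)).Splits := h2.of_dvd h0 h1
  obtain ⟨y, hy⟩ := h3.exists_eval_eq_zero (by
    rw [degree_map]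
    exact (degree_pos_of_irreducible hRi).ne')
  have h4 : (∏ i ∈ Finset.range (Module.finrank F E), (X - C (frb F E i x)) : E[X]).eval y = 0 :=
    eval_eq_zero_of_dvd_of_eval_eq_zero h1 hy
  rw [eval_prod, Finset.prod_eq_zero_iff] at h4
  obtain ⟨i, -, hi⟩ := h4
  rw [eval_sub, eval_X, eval_C, sub_eq_zero] at hi
  rw [eval_map_algebraMap, hi] at hy
  have h5 : frb F E i (aeval x R) = 0 := by
    rw [← hy]
    exact (aeval_algHom_apply (FiniteField.frobeniusAlgHom F E ^ i) x R).symm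
  have h6 : aeval x R = 0 := (frb F E i).injective (by rw [h5, map_zero])
  exact minpoly.eq_of_irreducible_of_monic hRi h6 hR

/-- The characteristic polynomial of `x` is a power of its minimal polynomial. -/
lemma polyNorm_eq_pow (x : E) : ∃ j, 0 < j ∧ polyNorm F (X - C x) = minpoly F x ^ j := by
  have hx : IsIntegral F x := Algebra.IsIntegral.isIntegral x
  have hm := polyNorm_monic (F := F) (monic_X_sub_C x)
  have hP := minpoly.monic hx
  obtain ⟨g, hg, hng⟩ := (FiniteMultiplicity.of_not_isUnit (minpoly.irreducible hx).not_isUnit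
    hm.ne_zero).exists_eq_pow_mul_and_not_dvd
  set j := multiplicity (minpoly F x) (polyNorm F (X - C x))
  have hgm : g.Monic := by
    have := hm
    rw [hg] at this
    exact (hP.pow j).of_mul_monic_left this
  have hg1 : g = 1 := by
    by_contra hne
    have hu : ¬ IsUnit g := fun h => hne (hgm.isUnit_iff.1 h)
    obtain ⟨R, hR, hRi, hRg⟩ := exists_monic_irreducible_factor g hu
    have := eq_minpoly_of_dvd_polyNorm (x := x) hR hRi (hRg.trans (hg ▸ dvd_mul_left _ _))
    exact hng (this ▸ hRg)
  rw [hg1, mul_one] at hg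
  refine ⟨j, ?_, hg⟩
  rcases Nat.eq_zero_or_pos j with h | h
  · exfalso
    rw [h, pow_zero] at hg
    have := polyNorm_natDegree (F := F) (monic_X_sub_C x)
    rw [hg, natDegree_one, natDegree_X_sub_C] at this
    have := Module.finrank_pos (R := F) (M := E)
    omega
  · exact h

lemma card_polyNorm_fiber_le (f : F[X]) :
    (Finset.univ.filter fun x : E => polyNorm F (X - C x) = f).card ≤ vM f := by
  rcases (Finset.univ.filter fun x : E => polyNorm F (X - C x) = f).eq_empty_or_nonempty with h | h
  · simp [h]
  obtain ⟨x, hx⟩ := h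
  rw [Finset.mem_filter] at hx
  have hxi : IsIntegral F x := Algebra.IsIntegral.isIntegral x
  obtain ⟨j, hj, hf⟩ := polyNorm_eq_pow (F := F) x
  rw [hx.2] at hf
  have hv : vM f = (minpoly F x).natDegree := by
    rw [hf, vM_pow (minpoly.monic hxi) (minpoly.irreducible hxi) hj]
  rw [hv, ← natDegree_map (algebraMap F E)]
  refine le_trans (Finset.card_le_card fun y hy => ?_)
    ((Multiset.toFinset_card_le _).trans (card_roots' ((minpoly F x).map (algebraMap F E))))
  rw [Finset.mem_filter] at hy
  rw [Multiset.mem_toFinset, mem_roots (map_ne_zero (minpoly.ne_zero hxi)), IsRoot]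
  have h1 := X_sub_C_dvd_map_polyNorm (F := F) y
  rw [hy.2, hf, Polynomial.map_pow, dvd_iff_isRoot, IsRoot, eval_pow] at h1
  exact eq_zero_of_pow_eq_zero h1

/-- The von Mangoldt weight of `f` counts the elements of the degree `n` extension whose
characteristic polynomial is `f`. -/
lemma sum_vM_eq_sum_field (G : F[X] → ℂ) :
    ∑ f ∈ monicD F (Module.finrank F E), (vM f : ℂ) * G f =
      ∑ x : E, G (polyNorm F (X - C x)) := by
  have hmaps : ∀ x ∈ (Finset.univ : Finset E),
      polyNorm F (X - C x) ∈ monicD F (Module.finrank F E) := fun x _ => mem_monicD.2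
    ⟨polyNorm_monic (monic_X_sub_C x), by
      rw [polyNorm_natDegree (monic_X_sub_C x), natDegree_X_sub_C, mul_one]⟩
  have h1 := Finset.card_eq_sum_card_fiberwise hmaps
  have h2 := sum_vM (F := F) (Module.finrank F E) Module.finrank_pos
  have h3 : ∑ f ∈ monicD F (Module.finrank F E), vM f =
      ∑ f ∈ monicD F (Module.finrank F E),
        (Finset.univ.filter fun x : E => polyNorm F (X - C x) = f).card := by
    rw [← h1, Finset.card_univ, Module.card_eq_pow_finrank (K := F)]
    exact_mod_cast h2
  have h4 := (Finset.sum_eq_sum_iff_of_le fun f _ => card_polyNorm_fiber_le (E := E) f).1 h3.symm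
  rw [← Finset.sum_fiberwise_of_maps_to hmaps]
  refine Finset.sum_congr rfl fun f hf => ?_
  rw [← h4 f hf, Finset.sum_congr rfl fun x hx => by rw [(Finset.mem_filter.1 hx).2],
    Finset.sum_const, nsmul_eq_mul]

/-- Von Mangoldt sums over `F` can be computed over an extension `E` after composing with the norm:
both sides are sums over the elements of a common extension `K`. -/
lemma sum_vM_polyNorm {n : ℕ} (hn : n = Module.finrank F E * Module.finrank E K)
    (G : F[X] → ℂ) :
    ∑ f ∈ monicD F n, (vM f : ℂ) * G f =
      ∑ h ∈ monicD E (Module.finrank E K), (vM h : ℂ) * G (polyNorm F h) := by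
  rw [hn, Module.finrank_mul_finrank F E K, sum_vM_eq_sum_field (F := F) (E := K),
    sum_vM_eq_sum_field (F := E) (E := K)]
  simp_rw [polyNorm_polyNorm]

end Norm

/-! ### Perturbing one coefficient -/

section Trunc

variable {E : Type} [Field E] [Fintype E] [Algebra F E]

/-- Perturbing the coefficients of `X ^ κ` in a product multiplies it, modulo `X ^ (κ + 1)`, by a
single factor which is linear in the perturbations. -/
lemma X_pow_dvd_prod_sub {ι : Type} (s : Finset ι) {κ : ℕ} (hκ : 1 ≤ κ) (b : ι → E[X]) (e : ι → E)
    (hb : ∀ i ∈ s, (b i).coeff 0 ≠ 0) :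
    (X : E[X]) ^ (κ + 1) ∣ ∏ i ∈ s, (b i + C (e i) * X ^ κ) -
      (∏ i ∈ s, b i) * (1 + C (∑ i ∈ s, e i / (b i).coeff 0) * X ^ κ) := by
  induction s using Finset.induction with
  | empty => simp
  | insert i s hi ih =>
    have ih' := ih fun j hj => hb j (Finset.mem_insert_of_mem hj)
    rw [Finset.prod_insert hi, Finset.prod_insert hi, Finset.sum_insert hi, C_add]
    set S := ∑ i ∈ s, e i / (b i).coeff 0
    set A := ∏ i ∈ s, (b i + C (e i) * X ^ κ)
    set B := ∏ i ∈ s, b i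
    set t := e i / (b i).coeff 0 with ht
    have h1 : (X : E[X]) ∣ C (e i) - b i * C t := by
      rw [X_dvd_iff, coeff_sub, coeff_C_zero, mul_coeff_zero, coeff_C_zero, ht,
        mul_div_cancel₀ _ (hb i (Finset.mem_insert_self _ _)), sub_self]
    have h2 : (X : E[X]) ^ (κ + 1) ∣ X ^ κ * (C (e i) - b i * C t) := by
      rw [pow_succ]
      exact mul_dvd_mul_left _ h1
    have h3 : (X : E[X]) ^ (κ + 1) ∣ X ^ κ * X ^ κ := by
      rw [← pow_add]
      exact pow_dvd_pow _ (by omega)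
    have h4 : (b i + C (e i) * X ^ κ) * A - b i * B * (1 + (C t + C S) * X ^ κ) =
        (b i + C (e i) * X ^ κ) * (A - B * (1 + C S * X ^ κ)) +
          B * (X ^ κ * (C (e i) - b i * C t)) + B * C (e i) * C S * (X ^ κ * X ^ κ) := by
      ring
    rw [h4]
    exact dvd_add (dvd_add (ih'.mul_left _) (h2.mul_left _)) (h3.mul_left _)

/-- Perturbing the coefficient of `X ^ κ` in `a` perturbs the coefficient of `X ^ κ` in its norm by a
trace, and leaves the lower coefficients alone. -/
lemma polyNorm_trunc {κ : ℕ} (hκ : 1 ≤ κ) {a : E[X]} (ha : a.coeff 0 ≠ 0) (c : E) :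
    (∀ i < κ, (polyNorm F (a + C c * X ^ κ)).coeff i = (polyNorm F a).coeff i) ∧
      (polyNorm F (a + C c * X ^ κ)).coeff κ = (polyNorm F a).coeff κ +
        Algebra.trace F E (c / a.coeff 0) * (polyNorm F a).coeff 0 := by
  have h := X_pow_dvd_prod_sub (Finset.range (Module.finrank F E)) hκ
    (fun i => a.map (frb F E i)) (fun i => frb F E i c) (fun i _ => by
      rw [coeff_map]
      exact (_root_.map_ne_zero _).2 ha)
  have h1 : ∏ i ∈ Finset.range (Module.finrank F E),
      (a.map (frb F E i) + C (frb F E i c) * X ^ κ) =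
      (polyNorm F (a + C c * X ^ κ)).map (algebraMap F E) := by
    rw [map_polyNorm]
    exact Finset.prod_congr rfl fun i _ => by simp
  have h2 : ∑ i ∈ Finset.range (Module.finrank F E),
      frb F E i c / (a.map (frb F E i)).coeff 0 =
      algebraMap F E (Algebra.trace F E (c / a.coeff 0)) := by
    rw [FiniteField.algebraMap_trace_eq_sum_pow]
    refine Finset.sum_congr rfl fun i _ => ?_
    rw [coeff_map, ← map_div₀, frb_apply, Nat.card_eq_fintype_card]
  rw [h1, h2, ← map_polyNorm] at h
  set T := Algebra.trace F E (c / a.coeff 0)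
  have h3 : (polyNorm F a).map (algebraMap F E) * (1 + C (algebraMap F E T) * X ^ κ) =
      (polyNorm F a * (1 + C T * X ^ κ)).map (algebraMap F E) := by
    simp
  rw [h3, X_pow_dvd_iff] at h
  have h4 : ∀ i < κ + 1, (polyNorm F (a + C c * X ^ κ)).coeff i =
      (polyNorm F a * (1 + C T * X ^ κ)).coeff i := by
    intro i hi
    have := h i hi
    rw [coeff_sub, coeff_map, coeff_map, sub_eq_zero] at this
    exact (algebraMap F E).injective this
  have h5 : ∀ i, (polyNorm F a * (1 + C T * X ^ κ)).coeff i =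
      (polyNorm F a).coeff i + if κ ≤ i then T * (polyNorm F a).coeff (i - κ) else 0 := by
    intro i
    rw [mul_add, mul_one, coeff_add, mul_left_comm, coeff_C_mul, coeff_mul_X_pow']
    simp
  constructor
  · intro i hi
    rw [h4 i (by omega), h5, if_neg (by omega), add_zero]
  · rw [h4 κ (by omega), h5, if_pos le_rfl, Nat.sub_self]

lemma reverse_map' (f : F[X]) {R : Type} [Field R] (σ : F →+* R) :
    (f.map σ).reverse = f.reverse.map σ := by
  ext i
  rw [coeff_reverse, coeff_map, coeff_map, coeff_reverse, natDegree_map]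

lemma reverse_polyNorm (g : E[X]) : (polyNorm F g).reverse = polyNorm F g.reverse := by
  apply map_inj' (E := E)
  rw [← reverse_map', map_polyNorm, map_polyNorm]
  induction Finset.range (Module.finrank F E) using Finset.induction with
  | empty =>
    simp only [Finset.prod_empty]
    exact reverse_C 1
  | insert i s hi ih =>
    rw [Finset.prod_insert hi, Finset.prod_insert hi, reverse_mul_of_domain, ih, reverse_map']

end Trunc

lemma coeff_reverse_le {f : F[X]} {i : ℕ} (hi : i ≤ f.natDegree) :
    f.reverse.coeff i = f.coeff (f.natDegree - i) := by
  rw [coeff_reverse, revAt_le hi]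

lemma coeff_reverse_zero_monic {f : F[X]} (hf : f.Monic) : f.reverse.coeff 0 = 1 := by
  rw [coeff_zero_reverse, hf.leadingCoeff]

lemma monic_add_C_mul_X_pow {n κ : ℕ} {f : F[X]} (hf : f ∈ monicD F n) (hκ : κ < n) (c : F) :
    f + C c * X ^ κ ∈ monicD F n := by
  obtain ⟨h1, h2⟩ := mem_monicD.1 hf
  have h3 : (C c * X ^ κ : F[X]).degree < f.degree := by
    rw [degree_eq_natDegree h1.ne_zero, h2]
    exact (degree_C_mul_X_pow_le κ c).trans_lt (by exact_mod_cast hκ)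
  rw [mem_monicD]
  refine ⟨h1.add_of_left h3, ?_⟩
  rw [natDegree_add_eq_left_of_degree_lt h3, h2]

lemma reverse_add_C_mul_X_pow {n l : ℕ} {f : F[X]} (hf : f ∈ monicD F n) (hl : 1 ≤ l)
    (hln : l ≤ n) (c : F) :
    (f + C c * X ^ (n - l)).reverse = f.reverse + C c * X ^ l := by
  have h1 := monic_add_C_mul_X_pow hf (show n - l < n by omega) c
  rw [reverse, reverse, (mem_monicD.1 h1).2, (mem_monicD.1 hf).2, reflect_add,
    reflect_C_mul_X_pow, revAt_le (by omega)]
  congr 3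
  omega

/-! ### Cancellation from scaling -/

section Core

variable {p : ℂ} {d κ : ℕ}

/-- Mean square bound for an exponential sum whose frequencies `w x` have multiplicity at most `d`. -/
lemma sum_norm_sq_addChar_le {Θ : AddChar F ℂ} (hΘ : Θ.IsPrimitive) (s : Finset F) (w : F → F)
    (h : F → ℂ) (hh : ∀ x, ‖h x‖ ≤ 1)
    (hw : ∀ x ∈ s, (s.filter fun y => w y = w x).card ≤ d) :
    ∑ c : F, ‖∑ x ∈ s, h x * Θ (w x * c)‖ ^ 2 ≤ (Fintype.card F : ℝ) ^ 2 * d := by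
  have h1 : ((∑ c : F, ‖∑ x ∈ s, h x * Θ (w x * c)‖ ^ 2 : ℝ) : ℂ) =
      ∑ x ∈ s, ∑ y ∈ s, h x * (starRingEnd ℂ) (h y) *
        (if w x - w y = 0 then (Fintype.card F : ℂ) else 0) := by
    push_cast
    have : ∀ c : F, (‖∑ x ∈ s, h x * Θ (w x * c)‖ : ℂ) ^ 2 = ∑ x ∈ s, ∑ y ∈ s,
        h x * (starRingEnd ℂ) (h y) * Θ (c * (w x - w y)) := by
      intro c
      rw [← Complex.mul_conj', map_sum, Finset.sum_mul_sum]
      refine Finset.sum_congr rfl fun x _ => Finset.sum_congr rfl fun y _ => ?_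
      rw [map_mul (starRingEnd ℂ), ← AddChar.map_neg_eq_conj, mul_sub, sub_eq_add_neg,
        AddChar.map_add_eq_mul, mul_comm c (w x), mul_comm c (w y)]
      ring
    simp_rw [this]
    rw [Finset.sum_comm]
    refine Finset.sum_congr rfl fun x _ => ?_
    rw [Finset.sum_comm]
    refine Finset.sum_congr rfl fun y _ => ?_
    rw [← Finset.mul_sum, AddChar.sum_mulShift _ hΘ]
    simp
  have h2 : (∑ c : F, ‖∑ x ∈ s, h x * Θ (w x * c)‖ ^ 2 : ℝ) =
      ‖((∑ c : F, ‖∑ x ∈ s, h x * Θ (w x * c)‖ ^ 2 : ℝ) : ℂ)‖ := by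
    rw [Complex.norm_of_nonneg (Finset.sum_nonneg fun _ _ => by positivity)]
  rw [h2, h1]
  have h3 : ∀ x ∈ s, ‖∑ y ∈ s, h x * (starRingEnd ℂ) (h y) *
      (if w x - w y = 0 then (Fintype.card F : ℂ) else 0)‖ ≤ d * Fintype.card F := by
    intro x hx
    calc _ ≤ ∑ y ∈ s, (if w y = w x then (Fintype.card F : ℝ) else 0) := by
          refine (norm_sum_le _ _).trans (Finset.sum_le_sum fun y _ => ?_)
          rw [norm_mul, norm_mul, Complex.norm_conj]
          by_cases hxy : w y = w x
          · rw [if_pos (by rw [hxy, sub_self]), if_pos hxy, Complex.norm_natCast]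
            have := mul_le_one₀ (hh x) (norm_nonneg _) (hh y)
            nlinarith [(Nat.cast_nonneg (Fintype.card F) : (0 : ℝ) ≤ _)]
          · rw [if_neg (fun h => hxy (sub_eq_zero.1 h).symm), if_neg hxy, norm_zero, mul_zero]
      _ = (s.filter fun y => w y = w x).card * Fintype.card F := by
          rw [← Finset.sum_filter, Finset.sum_const, nsmul_eq_mul]
      _ ≤ _ := by
          gcongr
          exact_mod_cast hw x hx
  calc _ ≤ ∑ x ∈ s, (d * Fintype.card F : ℝ) :=
        (norm_sum_le _ _).trans (Finset.sum_le_sum h3)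
    _ = s.card * (d * Fintype.card F) := by rw [Finset.sum_const, nsmul_eq_mul]
    _ ≤ Fintype.card F * (d * Fintype.card F) := by
        gcongr
        exact_mod_cast Finset.card_le_univ s
    _ = _ := by ring

/-- If `p` is the von Mangoldt sum of each of the functions `H x`, for `x ≠ 0`, and changing the
coefficient of `X^κ` twists `H x f` by an additive character whose frequency varies with `x`, then
averaging over `x` and over that coefficient exhibits square-root cancellation. -/
lemma core_bound (hκ : κ < d) {Θ : AddChar F ℂ} (hΘ : Θ.IsPrimitive) (H : F → F[X] → ℂ)
    (ν : F → F) (hH : ∀ x f, ‖H x f‖ ≤ 1)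
    (hν : ∀ x, x ≠ 0 → ((Finset.univ.erase 0).filter fun y => ν y = ν x).card ≤ d)
    (hshift : ∀ f ∈ monicD F d, ∃ u, u ≠ 0 ∧ ∀ c x, x ≠ 0 →
      H x (f + C c * X ^ κ) = H x f * Θ (u * ν x * c))
    (hinv : ∀ x, x ≠ 0 → ∑ f ∈ monicD F d, (vM f : ℂ) * H x f = p) :
    ((Fintype.card F : ℝ) - 1) ^ 2 * ‖p‖ ^ 2 ≤ d ^ 3 * (Fintype.card F : ℝ) ^ (2 * d + 1) := by
  set Q : ℝ := ((Fintype.card F : ℕ) : ℝ) with hQ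
  have hQ0 : 0 < Q := by
    rw [hQ]
    exact_mod_cast Fintype.card_pos
  set s : Finset F := Finset.univ.erase 0 with hs
  have hscard : (s.card : ℝ) = Q - 1 := by
    rw [hs, Finset.card_erase_of_mem (Finset.mem_univ _), Finset.card_univ,
      Nat.cast_sub Fintype.card_pos, Nat.cast_one]
  set S : F[X] → ℂ := fun f => ∑ x ∈ s, H x f with hS
  have h1 : (Q - 1) * ‖p‖ ≤ d * ∑ f ∈ monicD F d, ‖S f‖ := by
    have h2 : (s.card : ℂ) * p = ∑ f ∈ monicD F d, (vM f : ℂ) * S f := by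
      simp_rw [hS, Finset.mul_sum]
      rw [Finset.sum_comm, Finset.sum_congr rfl fun x hx => hinv x (Finset.ne_of_mem_erase hx),
        Finset.sum_const, nsmul_eq_mul]
    calc (Q - 1) * ‖p‖ = ‖(s.card : ℂ) * p‖ := by
          rw [norm_mul, Complex.norm_natCast, hscard]
      _ ≤ ∑ f ∈ monicD F d, d * ‖S f‖ := by
          rw [h2]
          refine (norm_sum_le _ _).trans (Finset.sum_le_sum fun f hf => ?_)
          rw [norm_mul, Complex.norm_natCast]
          obtain ⟨hfm, hfd⟩ := mem_monicD.1 hf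
          gcongr
          exact (vM_le hfm).trans_eq hfd
      _ = _ := by rw [Finset.mul_sum]
  have h3 : Q * ∑ f ∈ monicD F d, ‖S f‖ ^ 2 ≤ Q ^ d * (Q ^ 2 * d) := by
    have h4 : ∀ c : F, ∑ f ∈ monicD F d, ‖S f‖ ^ 2 =
        ∑ f ∈ monicD F d, ‖S (f + C c * X ^ κ)‖ ^ 2 := by
      intro c
      refine Finset.sum_nbij' (fun f => f + C (-c) * X ^ κ) (fun f => f + C c * X ^ κ)
        (fun f hf => monic_add_C_mul_X_pow hf hκ _) (fun f hf => monic_add_C_mul_X_pow hf hκ _)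
        (fun f _ => ?_) (fun f _ => ?_) (fun f _ => ?_)
      · simp
      · simp
      · simp
    have h5 : Q * ∑ f ∈ monicD F d, ‖S f‖ ^ 2 =
        ∑ f ∈ monicD F d, ∑ c : F, ‖S (f + C c * X ^ κ)‖ ^ 2 := by
      rw [Finset.sum_comm, ← Finset.sum_congr rfl fun c _ => h4 c, Finset.sum_const,
        Finset.card_univ, nsmul_eq_mul]
    rw [h5]
    calc _ ≤ ∑ f ∈ monicD F d, Q ^ 2 * (d : ℝ) := by
          refine Finset.sum_le_sum fun f hf => ?_
          obtain ⟨u, hu, hu'⟩ := hshift f hf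
          have h6 : ∀ c, S (f + C c * X ^ κ) = ∑ x ∈ s, H x f * Θ (u * ν x * c) := fun c =>
            Finset.sum_congr rfl fun x hx => hu' c x (Finset.ne_of_mem_erase hx)
          simp_rw [h6]
          refine sum_norm_sq_addChar_le hΘ s (fun x => u * ν x) (fun x => H x f)
            (fun x => hH x f) fun x hx => ?_
          refine le_trans (Finset.card_le_card fun y hy => ?_) (hν x (Finset.ne_of_mem_erase hx))
          rw [Finset.mem_filter] at hy ⊢
          exact ⟨hy.1, mul_left_cancel₀ hu hy.2⟩
      _ = _ := by
          rw [Finset.sum_const, nsmul_eq_mul, card_monicD]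
          push_cast
          rfl
  have h7 : (∑ f ∈ monicD F d, ‖S f‖) ^ 2 ≤ Q ^ d * ∑ f ∈ monicD F d, ‖S f‖ ^ 2 := by
    have := sq_sum_le_card_mul_sum_sq (s := monicD F d) (f := fun f => ‖S f‖)
    rw [card_monicD] at this
    push_cast at this
    exact this
  have h8 : ∑ f ∈ monicD F d, ‖S f‖ ^ 2 ≤ Q ^ d * Q * d := by
    refine le_of_mul_le_mul_left (h3.trans_eq ?_) hQ0
    ring
  have hQ1 : 0 ≤ Q - 1 := by
    rw [← hscard]
    positivity
  calc (Q - 1) ^ 2 * ‖p‖ ^ 2 = ((Q - 1) * ‖p‖) ^ 2 := by ring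
    _ ≤ (d * ∑ f ∈ monicD F d, ‖S f‖) ^ 2 := by gcongr
    _ = d ^ 2 * (∑ f ∈ monicD F d, ‖S f‖) ^ 2 := by ring
    _ ≤ d ^ 2 * (Q ^ d * (Q ^ d * Q * d)) := by
        gcongr
        exact h7.trans (by gcongr)
    _ = _ := by ring

end Core

section Scale

variable {K : Type} [Field K] [Fintype K] [Algebra F K]

lemma scaleRoots_polyNorm (x : K) {t : F} :
    (polyNorm F (X - C x)).scaleRoots t = polyNorm F (X - C (algebraMap F K t * x)) := by
  apply map_inj' (E := K)
  rw [map_scaleRoots _ _ _ (by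
    rw [(polyNorm_monic (monic_X_sub_C x)).leadingCoeff, map_one]
    exact one_ne_zero), map_polyNorm, map_polyNorm]
  induction Finset.range (Module.finrank F K) using Finset.induction with
  | empty => simp [one_scaleRoots]
  | insert i s hi ih =>
    rw [Finset.prod_insert hi, Finset.prod_insert hi, mul_scaleRoots_of_noZeroDivisors, ih]
    congr 1
    rw [Polynomial.map_sub, map_X, map_C, Polynomial.map_sub, map_X, map_C, X_sub_C_scaleRoots,
      map_mul (frb F K i), frb_algebraMap, mul_comm]

variable (K) in
lemma sum_vM_scaleRoots (G : F[X] → ℂ) {t : F} (ht : t ≠ 0) :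
    ∑ f ∈ monicD F (Module.finrank F K), (vM f : ℂ) * G (f.scaleRoots t) =
      ∑ f ∈ monicD F (Module.finrank F K), (vM f : ℂ) * G f := by
  rw [sum_vM_eq_sum_field (E := K) (G := fun f => G (f.scaleRoots t)),
    sum_vM_eq_sum_field (E := K) (G := G)]
  simp_rw [scaleRoots_polyNorm]
  have h : algebraMap F K t ≠ 0 := by simpa using ht
  exact Fintype.sum_equiv (Equiv.mulLeft₀ _ h) _ _ fun x => rfl

end Scale

/-! ### The zero-free bound for twisted von Mangoldt sums -/

section Twist

lemma exists_tower (r d : ℕ) (hr : 1 ≤ r) (hd : 1 ≤ d) :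
    ∃ (E : Type) (_ : Field E) (_ : Fintype E) (_ : Algebra F E) (K : Type) (_ : Field K)
      (_ : Fintype K) (_ : Algebra E K) (_ : Algebra F K) (_ : IsScalarTower F E K),
      Module.finrank F E = r ∧ Module.finrank E K = d := by
  obtain ⟨p, hp⟩ := CharP.exists F
  have hp1 : p.Prime := CharP.char_is_prime F p
  have : Fact p.Prime := ⟨hp1⟩
  have : NeZero r := ⟨by omega⟩
  have : NeZero d := ⟨by omega⟩
  let E := FiniteField.Extension F p r
  have : CharP E p := charP_of_injective_algebraMap (algebraMap F E).injective p
  let K := FiniteField.Extension E p d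
  let : Fintype E := Fintype.ofFinite _
  let : Fintype K := Fintype.ofFinite _
  let : Algebra F K := ((algebraMap E K).comp (algebraMap F E)).toAlgebra
  have : IsScalarTower F E K := IsScalarTower.of_algebraMap_eq fun _ => rfl
  exact ⟨E, inferInstance, inferInstance, inferInstance, K, inferInstance, inferInstance,
    inferInstance, inferInstance, this, FiniteField.finrank_extension F p r,
    FiniteField.finrank_extension E p d⟩

/-- Square-root cancellation, per zero, for the von Mangoldt sums of a multiplicative function `χ`
whose `L`-function is a polynomial of degree less than `d`, provided that over each extension field
the pulled back function is twisted by additive characters under a shift of one coefficient. -/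
lemma twisted_bound {χ : F[X] → ℂ} (hmul : ∀ f g, χ (f * g) = χ f * χ g) (h1 : χ 1 = 1)
    (hle : ∀ f, ‖χ f‖ ≤ 1) {d κ : ℕ} (hκ : κ < d) {θ : AddChar F ℂ} (hθ : θ ≠ 1)
    (hvan : ∀ n, d ≤ n → ∑ f ∈ monicD F n, χ f = 0)
    (key : ∀ (E : Type) [Field E] [Fintype E] [Algebra F E], ∃ ν : E → E,
      (∀ x, x ≠ 0 → ((Finset.univ.erase 0).filter fun y => ν y = ν x).card ≤ d) ∧
      ∀ f ∈ monicD E d, ∃ u, u ≠ 0 ∧ ∀ c x, x ≠ 0 →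
        χ (polyNorm F ((f + C c * X ^ κ).scaleRoots x)) =
          χ (polyNorm F (f.scaleRoots x)) * θ (Algebra.trace F E (u * ν x * c)))
    {n : ℕ} (hn : 1 ≤ n) :
    ‖∑ f ∈ monicD F n, (vM f : ℂ) * χ f‖ ≤
      d * (Fintype.card F : ℝ) ^ ((n : ℝ) - n / (2 * d)) := by
  have hd : 1 ≤ d := by omega
  have hq : (1 : ℝ) < Fintype.card F := by exact_mod_cast one_lt_card (F := F)
  set q : ℝ := ((Fintype.card F : ℕ) : ℝ) with hqdef
  have hmain := norm_le_of_sparse_le hd (fun n => ∑ f ∈ monicD F n, χ f)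
    (fun n => ∑ f ∈ monicD F n, (vM f : ℂ) * χ f) (K := 2 * d ^ 2)
    (ρ := q ^ ((d : ℝ) - 1 / 2)) ?_ hvan (fun n => logDeriv_identity χ (by simpa using hmul) n)
    (by positivity) ?_ hn
  · refine hmain.trans_eq ?_
    rw [← Real.rpow_mul (by positivity)]
    congr 2
    have : (d : ℝ) ≠ 0 := by positivity
    field_simp
  · simp [monicD, h1]
  intro r hr
  obtain ⟨E, _, _, _, K, _, _, _, _, _, hE, hK⟩ := exists_tower (F := F) r d hr hd
  obtain ⟨ν, hν, hf⟩ := key E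
  let Θ : AddChar E ℂ := θ.compAddMonoidHom (Algebra.trace F E).toAddMonoidHom
  have hΘ : Θ.IsPrimitive := by
    refine AddChar.IsPrimitive.of_ne_one fun h => hθ ?_
    ext a
    obtain ⟨b, rfl⟩ := Algebra.trace_surjective F E a
    simpa [Θ] using DFunLike.congr_fun h b
  have hcore := core_bound (F := E) hκ hΘ (fun x f => χ (polyNorm F (f.scaleRoots x))) ν
    (fun x f => hle _) hν (p := ∑ f ∈ monicD F (r * d), (vM f : ℂ) * χ f)
    (fun f hfm => by
      obtain ⟨u, hu, h⟩ := hf f hfm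
      exact ⟨u, hu, fun c x hx => h c x hx⟩) (fun x hx => by
      rw [sum_vM_polyNorm (F := F) (E := E) (K := K) (by rw [hE, hK]), ← hK]
      exact sum_vM_scaleRoots K (fun h => χ (polyNorm F h)) hx)
  set P := ‖∑ f ∈ monicD F (r * d), (vM f : ℂ) * χ f‖
  have hQ : (Fintype.card E : ℝ) = q ^ r := by
    rw [Module.card_eq_pow_finrank (K := F) (V := E), hE]
    push_cast
    rfl
  have hQ2 : (2 : ℝ) ≤ Fintype.card E := by exact_mod_cast one_lt_card (F := E)
  set Q : ℝ := ((Fintype.card E : ℕ) : ℝ) with hQdef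
  have h5 : P ^ 2 ≤ (2 * d ^ 2 * (q ^ ((d : ℝ) - 1 / 2)) ^ r) ^ 2 := by
    have h6 : ((q ^ ((d : ℝ) - 1 / 2)) ^ r) ^ 2 * Q = Q ^ (2 * d) := by
      rw [hQ, ← pow_mul, ← pow_mul, ← Real.rpow_natCast, ← Real.rpow_natCast, ← Real.rpow_natCast,
        ← Real.rpow_mul (by positivity), ← Real.rpow_add (by positivity)]
      congr 1
      push_cast
      ring
    have h7 : (Q / 2) ^ 2 * P ^ 2 ≤ d ^ 3 * (Q ^ (2 * d) * Q) := by
      refine le_trans ?_ (hcore.trans_eq (by rw [pow_succ Q]))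
      gcongr
      linarith
    have h8 : (d : ℝ) ^ 3 ≤ d ^ 4 := by
      refine pow_le_pow_right₀ (by exact_mod_cast hd) (by norm_num)
    rw [← h6] at h7
    have h9 : 0 < Q ^ 2 := by positivity
    refine le_of_mul_le_mul_left ?_ h9
    set Y := ((q ^ ((d : ℝ) - 1 / 2)) ^ r) ^ 2
    calc Q ^ 2 * P ^ 2 = 4 * ((Q / 2) ^ 2 * P ^ 2) := by ring
      _ ≤ 4 * (d ^ 3 * (Y * Q * Q)) := by gcongr
      _ ≤ 4 * (d ^ 4 * (Y * Q * Q)) := by gcongr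
      _ = _ := by simp only [Y]; ring
  exact (sq_le_sq₀ (norm_nonneg _) (by positivity)).1 h5

end Twist

/-! ### Characters at zero and at infinity -/

section TwistChar

variable {k m : ℕ}

/-- The multiplicative function on `F[X]` attached to a character modulo `X^k` and a character
modulo `X^m` evaluated at the reversed polynomial (a character at infinity). -/
def twist (χ₁ : MulChar (TR F k) ℂ) (χ₂ : MulChar (TR F m) ℂ) (f : F[X]) : ℂ :=
  χ₁ (AdjoinRoot.mk (X ^ k) f) * χ₂ (AdjoinRoot.mk (X ^ m) f.reverse)

lemma twist_mul (χ₁ : MulChar (TR F k) ℂ) (χ₂ : MulChar (TR F m) ℂ) (f g : F[X]) :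
    twist χ₁ χ₂ (f * g) = twist χ₁ χ₂ f * twist χ₁ χ₂ g := by
  simp only [twist, reverse_mul_of_domain, map_mul]
  ring

lemma twist_one (χ₁ : MulChar (TR F k) ℂ) (χ₂ : MulChar (TR F m) ℂ) : twist χ₁ χ₂ (1 : F[X]) = 1 := by
  have : (1 : F[X]).reverse = 1 := by
    rw [← C_1, reverse_C]
  simp [twist, this]

lemma norm_twist_le (χ₁ : MulChar (TR F k) ℂ) (χ₂ : MulChar (TR F m) ℂ) (f : F[X]) :
    ‖twist χ₁ χ₂ f‖ ≤ 1 := by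
  rw [twist, norm_mul]
  exact mul_le_one₀ (norm_mulChar_le _ _) (norm_nonneg _) (norm_mulChar_le _ _)

lemma twist_eq_zero (hk : 1 ≤ k) (χ₁ : MulChar (TR F k) ℂ) (χ₂ : MulChar (TR F m) ℂ) {f : F[X]}
    (hf : f.coeff 0 = 0) : twist χ₁ χ₂ f = 0 := by
  rw [twist, χ₁.map_nonunit (by rw [isUnit_mk_TR_iff hk]; simpa using hf), zero_mul]

/-- A permutation of the monic polynomials of degree `n` that multiplies `χ` by a constant `w ≠ 1`
forces the sum of `χ` to vanish. -/
lemma sum_eq_zero_of_shift {χ : F[X] → ℂ} {n : ℕ} (e : F[X] → F[X]) {w : ℂ} (hw : w ≠ 1)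
    (he : ∀ f ∈ monicD F n, e f ∈ monicD F n)
    (hinj : ∀ f ∈ monicD F n, ∀ g ∈ monicD F n, e f = e g → f = g)
    (hχ : ∀ f ∈ monicD F n, χ (e f) = χ f * w) : ∑ f ∈ monicD F n, χ f = 0 := by
  have h1 : ∑ f ∈ monicD F n, χ (e f) = ∑ f ∈ monicD F n, χ f := by
    refine Finset.sum_nbij e he hinj ?_ fun _ _ => rfl
    exact Finset.surjOn_of_injOn_of_card_le e he hinj le_rfl
  rw [Finset.sum_congr rfl hχ, ← Finset.sum_mul] at h1
  have h2 : (∑ f ∈ monicD F n, χ f) * (w - 1) = 0 := by linear_combination h1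
  exact (mul_eq_zero.1 h2).resolve_right (sub_ne_zero.2 hw)

lemma card_pow_fiber_le {E : Type} [Field E] [Fintype E] {e : ℕ} (he : 1 ≤ e) (a : E) :
    ((Finset.univ.erase 0).filter fun y : E => y ^ e = a).card ≤ e := by
  refine le_trans (Finset.card_le_card (t := (nthRoots e a).toFinset) fun y hy => ?_)
    ((Multiset.toFinset_card_le _).trans (card_nthRoots e a))
  rw [Multiset.mem_toFinset, mem_nthRoots (by omega)]
  exact (Finset.mem_filter.1 hy).2

lemma polyNorm_coeff_zero {E : Type} [Field E] [Fintype E] [Algebra F E] {a : E[X]}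
    (ha : a.coeff 0 = 0) : (polyNorm F a).coeff 0 = 0 := by
  apply (algebraMap F E).injective
  rw [← coeff_map, map_polyNorm, coeff_zero_prod, map_zero]
  refine Finset.prod_eq_zero (i := 0) (Finset.mem_range.2 Module.finrank_pos) ?_
  rw [coeff_map, ha, map_zero]

lemma scaleRoots_add_C_mul_X_pow {E : Type} [Field E] [Fintype E] {n κ : ℕ} {f : E[X]}
    (hf : f ∈ monicD E n) (hκ : κ < n) (c x : E) :
    (f + C c * X ^ κ).scaleRoots x = f.scaleRoots x + C (c * x ^ (n - κ)) * X ^ κ := by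
  have h := mem_monicD.1 (monic_add_C_mul_X_pow hf hκ c)
  ext i
  rw [coeff_scaleRoots, h.2, coeff_add, coeff_add, coeff_scaleRoots, (mem_monicD.1 hf).2,
    coeff_C_mul_X_pow, coeff_C_mul_X_pow]
  split_ifs with hi
  · subst hi
    ring
  · simp

lemma scaleRoots_mem {E : Type} [Field E] [Fintype E] {n : ℕ} {f : E[X]}
    (hf : f ∈ monicD E n) (x : E) : f.scaleRoots x ∈ monicD E n :=
  mem_monicD.2 ⟨(monic_scaleRoots_iff x).2 (mem_monicD.1 hf).1, by
    rw [natDegree_scaleRoots, (mem_monicD.1 hf).2]⟩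

/-- The case of a character ramified at infinity with conductor exponent `l + 1`. -/
lemma twist_infty (hk : 1 ≤ k) (χ₁ : MulChar (TR F k) ℂ) {χ₂ : MulChar (TR F m) ℂ} {l : ℕ}
    (hl : 1 ≤ l) {θ : AddChar F ℂ} (hθ : θ ≠ 1)
    (h : ∀ (f g : F[X]) (c : F), (∀ i < l, g.coeff i = f.coeff i) →
      g.coeff l = f.coeff l + c * f.coeff 0 →
      χ₂ (AdjoinRoot.mk (X ^ m) g) = χ₂ (AdjoinRoot.mk (X ^ m) f) * θ c) :
    (∀ n, k + l ≤ n → ∑ f ∈ monicD F n, twist χ₁ χ₂ f = 0) ∧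
      ∀ n, 1 ≤ n → ‖∑ f ∈ monicD F n, (vM f : ℂ) * twist χ₁ χ₂ f‖ ≤
        (k + l : ℕ) * (Fintype.card F : ℝ) ^ ((n : ℝ) - n / (2 * (k + l : ℕ))) := by
  have hvan : ∀ n, k + l ≤ n → ∑ f ∈ monicD F n, twist χ₁ χ₂ f = 0 := by
    intro n hn
    obtain ⟨c, hc⟩ := AddChar.ne_one_iff.1 hθ
    refine sum_eq_zero_of_shift (fun f => f + C c * X ^ (n - l)) hc
      (fun f hf => monic_add_C_mul_X_pow hf (by omega) c) (fun f _ g _ hfg => add_right_cancel hfg)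
      fun f hf => ?_
    simp only [twist]
    rw [reverse_add_C_mul_X_pow hf hl (by omega), h f.reverse (f.reverse + C c * X ^ l) c
      (fun i hi => by simp [coeff_X_pow, hi.ne])
      (by rw [coeff_reverse_zero_monic (mem_monicD.1 hf).1]; simp), ← mul_assoc]
    congr 3
    refine mk_TR_eq_iff.2 fun i hi => ?_
    simp [coeff_X_pow, show i ≠ n - l by omega]
  refine ⟨hvan, fun n hn => twisted_bound (twist_mul χ₁ χ₂) (twist_one χ₁ χ₂) (norm_twist_le χ₁ χ₂)
    (show k < k + l by omega) hθ hvan (fun E _ _ _ => ?_) hn⟩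
  refine ⟨fun x => x ^ l, fun x _ => (card_pow_fiber_le hl _).trans (by omega), fun f hf =>
    ⟨1, one_ne_zero, fun c x hx => ?_⟩⟩
  rw [scaleRoots_add_C_mul_X_pow hf (by omega), show k + l - k = l by omega]
  set g := f.scaleRoots x
  have hg : g ∈ monicD E (k + l) := scaleRoots_mem hf x
  set c' := c * x ^ l with hc'
  have hc'' : 1 * x ^ l * c = c' := by rw [hc']; ring
  rw [hc'']
  by_cases hg0 : g.coeff 0 = 0
  · rw [twist_eq_zero hk, twist_eq_zero hk, zero_mul]
    · exact polyNorm_coeff_zero hg0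
    · apply polyNorm_coeff_zero
      simp [hg0, show 0 ≠ k by omega]
  have h1 := polyNorm_trunc (F := F) hk hg0 c'
  have h0 : g.reverse.coeff 0 = 1 := coeff_reverse_zero_monic (mem_monicD.1 hg).1
  have h2 := polyNorm_trunc (F := F) (a := g.reverse) hl (by rw [h0]; exact one_ne_zero) c'
  rw [h0, div_one] at h2
  have h3 := reverse_add_C_mul_X_pow hg hl (by omega) c'
  rw [show k + l - l = k by omega] at h3
  simp only [twist]
  rw [reverse_polyNorm, h3, reverse_polyNorm, h _ _ _ h2.1 h2.2, ← mul_assoc,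
    mk_TR_eq_iff.2 h1.1]

/-- The case of a character tamely ramified at infinity, ramified at `0` with conductor exponent
`j + 1`. -/
lemma twist_zero (hk : 1 ≤ k) {χ₁ : MulChar (TR F k) ℂ} {χ₂ : MulChar (TR F m) ℂ} {j : ℕ}
    (h2 : ∀ f g : F[X], f.coeff 0 = g.coeff 0 →
      χ₂ (AdjoinRoot.mk (X ^ m) f) = χ₂ (AdjoinRoot.mk (X ^ m) g))
    (hj : 1 ≤ j) {θ : AddChar F ℂ} (hθ : θ ≠ 1)
    (h : ∀ (f g : F[X]) (c : F), (∀ i < j, g.coeff i = f.coeff i) →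
      g.coeff j = f.coeff j + c * f.coeff 0 →
      χ₁ (AdjoinRoot.mk (X ^ k) g) = χ₁ (AdjoinRoot.mk (X ^ k) f) * θ c) :
    (∀ n, j + 1 ≤ n → ∑ f ∈ monicD F n, twist χ₁ χ₂ f = 0) ∧
      ∀ n, 1 ≤ n → ‖∑ f ∈ monicD F n, (vM f : ℂ) * twist χ₁ χ₂ f‖ ≤
        (j + 1 : ℕ) * (Fintype.card F : ℝ) ^ ((n : ℝ) - n / (2 * (j + 1 : ℕ))) := by
  have h2' : ∀ f : F[X], f.Monic → twist χ₁ χ₂ f = χ₁ (AdjoinRoot.mk (X ^ k) f) := by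
    intro f hf
    rw [twist, h2 f.reverse 1 (by rw [coeff_reverse_zero_monic hf, coeff_one_zero]), map_one,
      map_one, mul_one]
  have hvan : ∀ n, j + 1 ≤ n → ∑ f ∈ monicD F n, twist χ₁ χ₂ f = 0 := by
    intro n hn
    obtain ⟨c, hc⟩ := AddChar.ne_one_iff.1 hθ
    have he : ∀ f ∈ monicD F n, f + C (c * f.coeff 0) * X ^ j ∈ monicD F n := fun f hf =>
      monic_add_C_mul_X_pow hf (by omega) _
    refine sum_eq_zero_of_shift (fun f => f + C (c * f.coeff 0) * X ^ j) hc he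
      (fun f _ g _ hfg => ?_) fun f hf => ?_
    · have h0 : f.coeff 0 = g.coeff 0 := by
        have := congrArg (fun p => coeff p 0) hfg
        simpa [show 0 ≠ j by omega] using this
      simp only [h0] at hfg
      exact add_right_cancel hfg
    · rw [h2' _ (mem_monicD.1 (he f hf)).1, h2' _ (mem_monicD.1 hf).1]
      exact h _ _ _ (fun i hi => by rw [coeff_add, coeff_C_mul_X_pow, if_neg hi.ne, add_zero])
        (by rw [coeff_add, coeff_C_mul_X_pow, if_pos rfl])
  refine ⟨hvan, fun n hn => twisted_bound (twist_mul χ₁ χ₂) (twist_one χ₁ χ₂) (norm_twist_le χ₁ χ₂)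
    (show j < j + 1 by omega) hθ hvan (fun E _ _ _ => ?_) hn⟩
  refine ⟨fun x => (x ^ j)⁻¹, fun x _ => ?_, fun f hf => ?_⟩
  · simp only [inv_inj]
    exact (card_pow_fiber_le hj _).trans (by omega)
  have hm1 : ∀ c x, (polyNorm F ((f + C c * X ^ j).scaleRoots x)).Monic := fun c x =>
    polyNorm_monic (mem_monicD.1 (scaleRoots_mem (monic_add_C_mul_X_pow hf (by omega) c) x)).1
  have hm2 : ∀ x, (polyNorm F (f.scaleRoots x)).Monic := fun x =>
    polyNorm_monic (mem_monicD.1 (scaleRoots_mem hf x)).1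
  by_cases hf0 : f.coeff 0 = 0
  · refine ⟨1, one_ne_zero, fun c x _ => ?_⟩
    rw [twist_eq_zero hk, twist_eq_zero hk, zero_mul]
    · apply polyNorm_coeff_zero
      simp [coeff_scaleRoots, hf0]
    · apply polyNorm_coeff_zero
      simp [coeff_scaleRoots, hf0, show 0 ≠ j by omega]
  refine ⟨(f.coeff 0)⁻¹, inv_ne_zero hf0, fun c x hx => ?_⟩
  rw [h2' _ (hm1 c x), h2' _ (hm2 x), scaleRoots_add_C_mul_X_pow hf (by omega)]
  have hg0 : (f.scaleRoots x).coeff 0 = f.coeff 0 * x ^ (j + 1) := by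
    rw [coeff_scaleRoots, (mem_monicD.1 hf).2, Nat.sub_zero]
  have h3 := polyNorm_trunc (F := F) (a := f.scaleRoots x) hj (by
    rw [hg0]; exact mul_ne_zero hf0 (pow_ne_zero _ hx)) (c * x ^ (j + 1 - j))
  have h4 : c * x ^ (j + 1 - j) / (f.scaleRoots x).coeff 0 = (f.coeff 0)⁻¹ * (x ^ j)⁻¹ * c := by
    rw [hg0, show j + 1 - j = 1 by omega]
    field_simp
    ring
  rw [h4] at h3
  exact h _ _ _ h3.1 h3.2

/-- The case of a character tamely ramified at `0` and at infinity. -/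
lemma twist_tame (hk : 1 ≤ k) {χ₁ : MulChar (TR F k) ℂ} {χ₂ : MulChar (TR F m) ℂ}
    (h1 : ∀ f g : F[X], f.coeff 0 = g.coeff 0 →
      χ₁ (AdjoinRoot.mk (X ^ k) f) = χ₁ (AdjoinRoot.mk (X ^ k) g))
    (h2 : ∀ f g : F[X], f.coeff 0 = g.coeff 0 →
      χ₂ (AdjoinRoot.mk (X ^ m) f) = χ₂ (AdjoinRoot.mk (X ^ m) g)) :
    (∀ n, 1 ≤ n → ∑ f ∈ monicD F n, twist χ₁ χ₂ f = 0 ∧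
      ∑ f ∈ monicD F n, (vM f : ℂ) * twist χ₁ χ₂ f = 0) ∨
    ∀ f : F[X], f.Monic → twist χ₁ χ₂ f = if f.coeff 0 = 0 then 0 else 1 := by
  have h2' : ∀ f : F[X], f.Monic → twist χ₁ χ₂ f = χ₁ (AdjoinRoot.mk (X ^ k) f) := by
    intro f hf
    rw [twist, h2 f.reverse 1 (by rw [coeff_reverse_zero_monic hf, coeff_one_zero]), map_one,
      map_one, mul_one]
  by_cases htr : ∀ c : F, c ≠ 0 → χ₁ (AdjoinRoot.mk (X ^ k) (C c)) = 1
  · right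
    intro f hf
    split_ifs with h0
    · exact twist_eq_zero hk _ _ h0
    · rw [h2' f hf, h1 f (C (f.coeff 0)) (by simp), htr _ h0]
  left
  push Not at htr
  obtain ⟨c, hc0, hc⟩ := htr
  have hvan : ∀ n, 1 ≤ n → ∑ f ∈ monicD F n, twist χ₁ χ₂ f = 0 := by
    intro n hn
    have he : ∀ f ∈ monicD F n, f + C ((c - 1) * f.coeff 0) * X ^ 0 ∈ monicD F n := fun f hf =>
      monic_add_C_mul_X_pow hf (by omega) _
    have he0 : ∀ f : F[X], (f + C ((c - 1) * f.coeff 0) * X ^ 0).coeff 0 = c * f.coeff 0 := by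
      intro f
      rw [coeff_add, coeff_C_mul_X_pow, if_pos rfl]
      ring
    refine sum_eq_zero_of_shift (fun f => f + C ((c - 1) * f.coeff 0) * X ^ 0) hc he
      (fun f _ g _ hfg => ?_) fun f hf => ?_
    · have h0 : f.coeff 0 = g.coeff 0 := by
        have := congrArg (fun p => coeff p 0) hfg
        simp only [he0] at this
        exact mul_left_cancel₀ hc0 this
      simp only [h0] at hfg
      exact add_right_cancel hfg
    · rw [h2' _ (mem_monicD.1 (he f hf)).1, h2' _ (mem_monicD.1 hf).1, ← map_mul χ₁, ← map_mul]
      refine h1 _ _ ?_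
      rw [he0, mul_comm f, coeff_C_mul]
  intro n hn
  refine ⟨hvan n hn, ?_⟩
  have h := logDeriv_identity (twist χ₁ χ₂) (twist_mul χ₁ χ₂) n
  rw [hvan n hn, mul_zero, Finset.sum_eq_single (n, 0)] at h
  · simpa [monicD, twist_one] using h
  · rintro ⟨a, b⟩ hab hne
    rw [Finset.HasAntidiagonal.mem_antidiagonal] at hab
    rw [hvan b (by
      rcases Nat.eq_zero_or_pos b with rfl | hb
      · simp_all
      · exact hb), mul_zero]
  · intro h
    simp at h

/-- The model for the von Mangoldt function: the constant `q / (q - 1)` on the polynomials with nonzero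
constant coefficient, and `0` elsewhere. -/
def lam0 (f : F[X]) : ℝ :=
  if f.coeff 0 = 0 then 0 else (Fintype.card F : ℝ) / (Fintype.card F - 1)

lemma lam0_mul_twist (hk : 1 ≤ k) (χ₁ : MulChar (TR F k) ℂ) (χ₂ : MulChar (TR F m) ℂ) (f : F[X]) :
    (lam0 f : ℂ) * twist χ₁ χ₂ f =
      (Fintype.card F : ℂ) / (Fintype.card F - 1) * twist χ₁ χ₂ f := by
  by_cases h : f.coeff 0 = 0
  · rw [twist_eq_zero hk _ _ h, mul_zero, mul_zero]
  · simp [lam0, h]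

lemma vM_eq_zero_of_coeff_zero {n : ℕ} {f : F[X]} (hf : f ∈ monicD F n) (h0 : f.coeff 0 = 0)
    (hX : f ≠ X ^ n) : vM f = 0 := by
  by_contra hne
  obtain ⟨hfm, hfn⟩ := mem_monicD.1 hf
  obtain ⟨P, j, hP, hPi, hj, rfl⟩ := exists_of_vM_ne_zero hne
  have hXP : X ∣ P := by
    rw [← X_dvd_iff] at h0
    exact prime_X.dvd_of_dvd_pow h0
  have hXP' : X = P := by
    refine eq_of_monic_of_associated monic_X hP ?_
    exact (irreducible_X.dvd_irreducible_iff_associated hPi).1 hXP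
  subst hXP'
  rw [natDegree_X_pow] at hfn
  rw [hfn] at hX
  exact hX rfl

/-- Uniform bound for all pairs of characters. When both are trivial on units, subtracting the mean
value `lam0` removes the pole of the `L`-function. -/
lemma norm_sum_twist_le (hk : 1 ≤ k) (hm : 1 ≤ m) {n d : ℕ} (hd : d + 1 = k + m) (hdn : d ≤ n)
    (χ₁ : MulChar (TR F k) ℂ) (χ₂ : MulChar (TR F m) ℂ) :
    ‖∑ f ∈ monicD F n, ((vM f : ℂ) - lam0 f) * twist χ₁ χ₂ f‖ ≤
      d * (Fintype.card F : ℝ) ^ ((n : ℝ) - n / (2 * d)) := by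
  have hq : (1 : ℝ) < Fintype.card F := by exact_mod_cast one_lt_card (F := F)
  have hd1 : 1 ≤ d := by omega
  have hd1' : (1 : ℝ) ≤ d := by exact_mod_cast hd1
  have hn : 1 ≤ n := by omega
  have hsub : ∑ f ∈ monicD F n, ((vM f : ℂ) - lam0 f) * twist χ₁ χ₂ f =
      ∑ f ∈ monicD F n, (vM f : ℂ) * twist χ₁ χ₂ f -
        (Fintype.card F : ℂ) / (Fintype.card F - 1) * ∑ f ∈ monicD F n, twist χ₁ χ₂ f := by
    rw [Finset.mul_sum, ← Finset.sum_sub_distrib]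
    refine Finset.sum_congr rfl fun f _ => ?_
    rw [sub_mul, lam0_mul_twist hk]
  have hmono : ∀ e : ℕ, 1 ≤ e → e ≤ d → (e : ℝ) * (Fintype.card F : ℝ) ^ ((n : ℝ) - n / (2 * e)) ≤
      d * (Fintype.card F : ℝ) ^ ((n : ℝ) - n / (2 * d)) := by
    intro e he hed
    have : (1 : ℝ) ≤ e := by exact_mod_cast he
    have hed' : (e : ℝ) ≤ d := by exact_mod_cast hed
    gcongr
    exact hq.le
  rw [hsub]
  rcases truncChar_cases hm χ₂ with h2 | ⟨l, hl1, hlm, θ, hθ, h⟩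
  · rcases truncChar_cases hk χ₁ with h1 | ⟨j, hj1, hjk, θ, hθ, h⟩
    · rcases twist_tame hk h1 h2 with h | h
      · rw [(h n hn).1, (h n hn).2, mul_zero, sub_zero, norm_zero]
        positivity
      · rw [← hsub]
        have h3 : ∑ f ∈ monicD F n, ((vM f : ℂ) - lam0 f) * twist χ₁ χ₂ f = -1 := by
          have h4 : ∀ f ∈ monicD F n, ((vM f : ℂ) - lam0 f) * twist χ₁ χ₂ f =
              (vM f : ℂ) - (if f = X ^ n then 1 else 0) -
                (Fintype.card F : ℂ) / (Fintype.card F - 1) * (if f.coeff 0 = 0 then 0 else 1) := by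
            intro f hf
            have hXn : (X ^ n : F[X]).coeff 0 = 0 := by
              simp [coeff_X_pow, show 0 ≠ n by omega]
            rw [h f (mem_monicD.1 hf).1]
            by_cases h0 : f.coeff 0 = 0
            · by_cases hX : f = X ^ n
              · have : vM (X ^ n : F[X]) = 1 := by
                  rw [vM_pow monic_X irreducible_X (by omega), natDegree_X]
                rw [hX, this]
                simp [hXn]
              · rw [vM_eq_zero_of_coeff_zero hf h0 hX]
                simp [h0, hX]
            · rw [if_neg h0, if_neg (fun hX => h0 (by rw [hX, hXn])), lam0, if_neg h0]
              push_cast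
              ring
          rw [Finset.sum_congr rfl h4, Finset.sum_sub_distrib, Finset.sum_sub_distrib,
            sum_vM n (by omega), ← Finset.mul_sum, Finset.sum_ite_eq',
            if_pos (mem_monicD.2 ⟨monic_X_pow n, natDegree_X_pow n⟩), sum_monicD]
          have h5 : ∑ c : Fin n → F, (if (X ^ n + ∑ i : Fin n, C (c i) * X ^ (i : ℕ)).coeff 0 = 0
              then (0 : ℂ) else 1) = (Fintype.card F - 1) * (Fintype.card F : ℂ) ^ (n - 1) := by
            obtain ⟨N, rfl⟩ : ∃ N, n = N + 1 := ⟨n - 1, by omega⟩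
            have h6 : ∀ c : Fin (N + 1) → F,
                (X ^ (N + 1) + ∑ i : Fin (N + 1), C (c i) * X ^ (i : ℕ)).coeff 0 = c 0 := by
              intro c
              exact coeff_monicOfFn c 0
            simp_rw [h6]
            rw [← (Fin.consEquiv fun _ => F).sum_comp, Fintype.sum_prod_type]
            simp only [Fin.consEquiv_apply, Fin.cons_zero, Finset.sum_const, Finset.card_univ,
              nsmul_eq_mul, mul_ite, mul_zero, mul_one, Fintype.card_pi, Finset.prod_const,
              Fintype.card_fin, Nat.add_sub_cancel]
            rw [← Finset.sum_erase_add _ _ (Finset.mem_univ (0 : F)), if_pos rfl, add_zero,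
              Finset.sum_congr rfl fun x hx => if_neg (Finset.ne_of_mem_erase hx),
              Finset.sum_const, Finset.card_erase_of_mem (Finset.mem_univ _), Finset.card_univ,
              nsmul_eq_mul, Nat.cast_sub Fintype.card_pos]
            push_cast
            rfl
          rw [h5]
          have h7 : (Fintype.card F : ℂ) - 1 ≠ 0 := by
            intro h8
            have : ((Fintype.card F : ℝ) : ℂ) = (1 : ℝ) := by
              push_cast
              linear_combination h8
            exact hq.ne' (Complex.ofReal_injective this)
          obtain ⟨N, rfl⟩ : ∃ N, n = N + 1 := ⟨n - 1, by omega⟩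
          rw [Nat.add_sub_cancel]
          field_simp
          ring
        rw [h3, norm_neg, norm_one]
        refine (one_le_mul_of_one_le_of_one_le hd1' (Real.one_le_rpow hq.le ?_))
        rw [sub_nonneg, div_le_iff₀ (by positivity)]
        nlinarith [(Nat.cast_nonneg n : (0 : ℝ) ≤ n)]
    · obtain ⟨h3, h4⟩ := twist_zero hk h2 hj1 hθ h
      rw [h3 n (by omega), mul_zero, sub_zero]
      exact (h4 n hn).trans (hmono _ (by omega) (by omega))
  · obtain ⟨h3, h4⟩ := twist_infty hk χ₁ hl1 hθ h
    rw [h3 n (by omega), mul_zero, sub_zero]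
    exact (h4 n hn).trans (hmono _ (by omega) (by omega))

end TwistChar

/-! ### Second moments over boxes of frequencies -/

section Box

variable {n : ℕ}

/-- The linear functional on polynomials pairing the coefficients of degree `< n` with `ξ`. -/
def phi (ξ : Fin n → F) : F[X] →ₗ[F] F := ∑ i : Fin n, ξ i • lcoeff F i

lemma phi_apply (ξ : Fin n → F) (f : F[X]) : phi ξ f = ∑ i : Fin n, ξ i * f.coeff i := by
  simp [phi]

/-- The frequencies supported in `I`. -/
def supp (I : Finset (Fin n)) : Finset (Fin n → F) :=
  Fintype.piFinset fun i => if i ∈ I then Finset.univ else {0}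

lemma mem_supp {I : Finset (Fin n)} {ξ : Fin n → F} : ξ ∈ supp I ↔ ∀ i ∉ I, ξ i = 0 := by
  rw [supp, Fintype.mem_piFinset]
  refine forall_congr' fun i => ?_
  by_cases h : i ∈ I <;> simp [h]

lemma sum_supp_prod {R : Type} [CommSemiring R] (I : Finset (Fin n)) (g : Fin n → F → R)
    (hg : ∀ i ∉ I, g i 0 = 1) :
    ∑ ξ ∈ supp I, ∏ i, g i (ξ i) = ∏ i ∈ I, ∑ x, g i x := by
  rw [supp, ← Finset.prod_univ_sum, ← Finset.prod_subset (Finset.subset_univ I)]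
  · exact Finset.prod_congr rfl fun i hi => by rw [if_pos hi]
  · intro i _ hi
    rw [if_neg hi, Finset.sum_singleton, hg i hi]

lemma sum_supp_psi {ψ : AddChar F ℂ} (hψ : ψ.IsPrimitive) (I : Finset (Fin n)) (f g : F[X]) :
    ∑ ξ ∈ supp I, ψ (phi ξ f) * (starRingEnd ℂ) (ψ (phi ξ g)) =
      if ∀ i ∈ I, f.coeff (i : ℕ) = g.coeff (i : ℕ) then (Fintype.card F : ℂ) ^ I.card else 0 := by
  have h1 : ∀ ξ : Fin n → F, ψ (phi ξ f) * (starRingEnd ℂ) (ψ (phi ξ g)) =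
      ∏ i : Fin n, ψ (ξ i * (f.coeff i - g.coeff i)) := by
    intro ξ
    rw [← AddChar.map_neg_eq_conj, ← AddChar.map_add_eq_mul, phi_apply, phi_apply,
      ← sub_eq_add_neg, ← Finset.sum_sub_distrib, addChar_map_sum]
    exact Finset.prod_congr rfl fun i _ => by rw [mul_sub]
  simp_rw [h1]
  rw [sum_supp_prod I (fun i x => ψ (x * (f.coeff i - g.coeff i))) (by simp)]
  have h2 : ∀ i : Fin n, ∑ x : F, ψ (x * (f.coeff i - g.coeff i)) =
      if f.coeff (i : ℕ) = g.coeff (i : ℕ) then (Fintype.card F : ℂ) else 0 := by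
    intro i
    rw [AddChar.sum_mulShift _ hψ]
    simp [sub_eq_zero]
  simp_rw [h2]
  split_ifs with h
  · rw [Finset.prod_congr rfl fun i hi => if_pos (h i hi), Finset.prod_const]
  · push Not at h
    obtain ⟨i, hi, hne⟩ := h
    exact Finset.prod_eq_zero hi (if_neg hne)

lemma sum_supp_norm_sq {ψ : AddChar F ℂ} (hψ : ψ.IsPrimitive) (I : Finset (Fin n))
    (s : Finset F[X]) (a : F[X] → ℝ) :
    ((∑ ξ ∈ supp I, ‖∑ f ∈ s, (a f : ℂ) * ψ (phi ξ f)‖ ^ 2 : ℝ) : ℂ) =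
      (Fintype.card F : ℂ) ^ I.card * ∑ f ∈ s, ∑ g ∈ s, (a f : ℂ) * (a g : ℂ) *
        if ∀ i ∈ I, f.coeff (i : ℕ) = g.coeff (i : ℕ) then 1 else 0 := by
  push_cast
  simp_rw [← Complex.mul_conj', map_sum, Finset.sum_mul_sum, map_mul (starRingEnd ℂ),
    Complex.conj_ofReal]
  rw [Finset.sum_comm, Finset.mul_sum]
  refine Finset.sum_congr rfl fun f _ => ?_
  rw [Finset.sum_comm, Finset.mul_sum]
  refine Finset.sum_congr rfl fun g _ => ?_
  have h := sum_supp_psi hψ I f g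
  calc _ = (a f : ℂ) * a g * ∑ ξ ∈ supp I, ψ (phi ξ f) * (starRingEnd ℂ) (ψ (phi ξ g)) := by
        rw [Finset.mul_sum]
        exact Finset.sum_congr rfl fun ξ _ => by ring
    _ = _ := by
        rw [h]
        split_ifs <;> ring

/-- The box of the `k` lowest and the `l` highest positions. -/
def box (n k l : ℕ) : Finset (Fin n) :=
  Finset.univ.filter fun i => (i : ℕ) < k ∨ n ≤ i + l

lemma card_box {k l : ℕ} (h : k + l ≤ n) : (box n k l).card = k + l := by
  have h1 : (box n k l).map Fin.valEmbedding = Finset.range k ∪ Finset.Ico (n - l) n := by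
    ext i
    simp only [box, Finset.mem_map, Finset.mem_filter, Finset.mem_univ, true_and,
      Fin.valEmbedding_apply, Finset.mem_union, Finset.mem_range, Finset.mem_Ico]
    constructor
    · rintro ⟨j, hj, rfl⟩
      have := j.2
      omega
    · intro hi
      exact ⟨⟨i, by omega⟩, by simp only; omega, rfl⟩
  rw [← Finset.card_map, h1, Finset.card_union_of_disjoint, Finset.card_range, Nat.card_Ico]
  · omega
  · rw [Finset.disjoint_left]
    intro i hi hi'
    rw [Finset.mem_range] at hi
    rw [Finset.mem_Ico] at hi'
    omega

/-- Agreement of two monic polynomials on a box is detected by the characters modulo `X^k` and the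
characters modulo `X^(l+1)` at infinity. -/
lemma sum_twist_mul_conj {k l : ℕ} (hk : 1 ≤ k) (h : k + l ≤ n) [Fintype (MulChar (TR F k) ℂ)]
    [Fintype (MulChar (TR F (l + 1)) ℂ)] {f g : F[X]} (hf : f ∈ monicD F n)
    (hg : g ∈ monicD F n) :
    ∑ χ : MulChar (TR F k) ℂ × MulChar (TR F (l + 1)) ℂ,
      twist χ.1 χ.2 f * (starRingEnd ℂ) (twist χ.1 χ.2 g) =
      if g.coeff 0 ≠ 0 ∧ ∀ i ∈ box n k l, f.coeff (i : ℕ) = g.coeff (i : ℕ) then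
        (Fintype.card (MulChar (TR F k) ℂ) : ℂ) * Fintype.card (MulChar (TR F (l + 1)) ℂ)
      else 0 := by
  by_cases h0 : g.coeff 0 = 0
  · rw [if_neg (by simp [h0])]
    exact Finset.sum_eq_zero fun χ _ => by rw [twist_eq_zero hk _ _ h0, map_zero, mul_zero]
  obtain ⟨hfm, hfn⟩ := mem_monicD.1 hf
  obtain ⟨hgm, hgn⟩ := mem_monicD.1 hg
  have h1 : IsUnit (AdjoinRoot.mk (X ^ k) g : TR F k) := (isUnit_mk_TR_iff hk).2 h0
  have h2 : IsUnit (AdjoinRoot.mk (X ^ (l + 1)) g.reverse : TR F (l + 1)) :=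
    (isUnit_mk_TR_iff (by omega)).2 (by rw [coeff_reverse_zero_monic hgm]; exact one_ne_zero)
  have h3 := sum_mulChar_mul_conj (a := (AdjoinRoot.mk (X ^ k) f : TR F k)) h1
  have h4 := sum_mulChar_mul_conj
    (a := (AdjoinRoot.mk (X ^ (l + 1)) f.reverse : TR F (l + 1))) h2
  rw [Fintype.sum_prod_type]
  have h5 : (g.coeff 0 ≠ 0 ∧ ∀ i ∈ box n k l, f.coeff (i : ℕ) = g.coeff (i : ℕ)) ↔
      (AdjoinRoot.mk (X ^ k) f : TR F k) = AdjoinRoot.mk (X ^ k) g ∧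
      (AdjoinRoot.mk (X ^ (l + 1)) f.reverse : TR F (l + 1)) =
        AdjoinRoot.mk (X ^ (l + 1)) g.reverse := by
    rw [mk_TR_eq_iff, mk_TR_eq_iff]
    simp only [box, Finset.mem_filter, Finset.mem_univ, true_and]
    constructor
    · rintro ⟨-, hag⟩
      refine ⟨fun i hi => hag ⟨i, by omega⟩ (Or.inl hi), fun i hi => ?_⟩
      rcases Nat.eq_zero_or_pos i with rfl | hi0
      · rw [coeff_reverse_zero_monic hfm, coeff_reverse_zero_monic hgm]
      · rw [coeff_reverse_le (by omega), coeff_reverse_le (by omega), hfn, hgn]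
        exact hag ⟨n - i, by omega⟩ (Or.inr (by simp only; omega))
    · rintro ⟨hlo, hhi⟩
      refine ⟨h0, fun i hi => ?_⟩
      rcases hi with hi | hi
      · exact hlo i hi
      · have hi2 := i.2
        have := hhi (n - i) (by omega)
        rwa [coeff_reverse_le (by omega), coeff_reverse_le (by omega), hfn, hgn,
          show n - (n - (i : ℕ)) = i by omega] at this
  calc _ = (∑ χ : MulChar (TR F k) ℂ, χ (AdjoinRoot.mk (X ^ k) f) *
        (starRingEnd ℂ) (χ (AdjoinRoot.mk (X ^ k) g))) *
      ∑ χ : MulChar (TR F (l + 1)) ℂ, χ (AdjoinRoot.mk (X ^ (l + 1)) f.reverse) *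
        (starRingEnd ℂ) (χ (AdjoinRoot.mk (X ^ (l + 1)) g.reverse)) := by
        rw [Finset.sum_mul_sum]
        refine Finset.sum_congr rfl fun χ₁ _ => Finset.sum_congr rfl fun χ₂ _ => ?_
        simp only [twist, map_mul (starRingEnd ℂ)]
        ring
    _ = _ := by
        rw [h3, h4, if_congr h5 rfl rfl, ite_and]
        split_ifs <;> simp

/-- Second moment over a box of frequencies. By orthogonality it is a variance of `vM - lam0` in classes
determined by the `k` lowest and `l` highest coefficients, which expands into characters modulo
`X ^ k` and modulo `X ^ (l + 1)` at infinity. -/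
lemma box_second_moment {ψ : AddChar F ℂ} (hψ : ψ.IsPrimitive) {k l d : ℕ} (hk : 1 ≤ k)
    (hd : k + l = d) (hdn : d ≤ n) :
    ∑ ξ ∈ supp (F := F) (box n k l),
      ‖∑ f ∈ monicD F n, ((vM f - lam0 f : ℝ) : ℂ) * ψ (phi ξ f)‖ ^ 2 ≤
      (Fintype.card F : ℝ) ^ d *
        (1 + (d * (Fintype.card F : ℝ) ^ ((n : ℝ) - n / (2 * d))) ^ 2) := by
  set B := (d * (Fintype.card F : ℝ) ^ ((n : ℝ) - n / (2 * d))) with hB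
  let _ : Fintype (MulChar (TR F k) ℂ) := Fintype.ofFinite _
  let _ : Fintype (MulChar (TR F (l + 1)) ℂ) := Fintype.ofFinite _
  set N₁ := Fintype.card (MulChar (TR F k) ℂ) with hN1
  set N₂ := Fintype.card (MulChar (TR F (l + 1)) ℂ) with hN2
  have hN1p : 0 < N₁ := Fintype.card_pos
  have hN2p : 0 < N₂ := Fintype.card_pos
  have hn0 : n ≠ 0 := by omega
  set a : F[X] → ℝ := fun f => vM f - lam0 f with ha
  have h1 := sum_supp_norm_sq hψ (box n k l) (monicD F n) a
  rw [card_box (by omega), hd] at h1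
  set P : F[X] → F[X] → Prop := fun f g => ∀ i ∈ box n k l, f.coeff (i : ℕ) = g.coeff (i : ℕ)
    with hP
  -- The class of polynomials without constant term only sees `X ^ n`.
  have h2 : ∑ f ∈ monicD F n, ∑ g ∈ monicD F n, (a f : ℂ) * (a g : ℂ) * (if P f g then 1 else 0) =
      1 + ∑ f ∈ monicD F n, ∑ g ∈ monicD F n, (a f : ℂ) * (a g : ℂ) *
        (if g.coeff 0 ≠ 0 ∧ P f g then 1 else 0) := by
    have hXn : (X ^ n : F[X]).coeff 0 = 0 := by simp [coeff_X_pow, hn0.symm]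
    have haX : ∀ f ∈ monicD F n, f.coeff 0 = 0 → a f = if f = X ^ n then 1 else 0 := by
      intro f hf h0
      split_ifs with hX
      · have : vM (X ^ n : F[X]) = 1 := by
          rw [vM_pow monic_X irreducible_X (by omega), natDegree_X]
        simp [ha, hX, this, lam0, hXn]
      · simp [ha, vM_eq_zero_of_coeff_zero hf h0 hX, lam0, h0]
    have h3 : ∀ f ∈ monicD F n, ∀ g ∈ monicD F n,
        (a f : ℂ) * (a g : ℂ) * (if P f g then 1 else 0) =
        (if f = X ^ n then 1 else 0) * (if g = X ^ n then 1 else 0) +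
        (a f : ℂ) * (a g : ℂ) * (if g.coeff 0 ≠ 0 ∧ P f g then 1 else 0) := by
      intro f hf g hg
      have hPX : P (X ^ n) (X ^ n) := fun _ _ => rfl
      by_cases hg0 : g.coeff 0 = 0
      · have hno : ¬(g.coeff 0 ≠ 0 ∧ P f g) := fun h => h.1 hg0
        by_cases hPfg : P f g
        · have hf0 : f.coeff 0 = 0 := by
            rw [← hg0]
            exact hPfg ⟨0, by omega⟩ (by simp [box]; omega)
          rw [haX f hf hf0, haX g hg hg0]
          rw [if_pos hPfg, if_neg hno, mul_one, mul_zero, add_zero]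
          split_ifs <;> simp
        · rw [if_neg hPfg, if_neg hno, mul_zero, add_zero]
          by_cases hf1 : f = X ^ n
          · have hg1 : g ≠ X ^ n := by
              intro hg1
              rw [hf1, hg1] at hPfg
              exact hPfg hPX
            rw [if_neg hg1, mul_zero]
          · rw [if_neg hf1, zero_mul]
      · have : g ≠ X ^ n := fun h => hg0 (by rw [h, hXn])
        simp [this, hg0]
    rw [Finset.sum_congr rfl fun f hf => Finset.sum_congr rfl fun g hg => h3 f hf g hg]
    simp_rw [Finset.sum_add_distrib]
    rw [← Finset.sum_mul_sum, Finset.sum_ite_eq',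
      if_pos (mem_monicD.2 ⟨monic_X_pow n, natDegree_X_pow n⟩), one_mul]
  have h4 : (N₁ : ℂ) * N₂ * ∑ f ∈ monicD F n, ∑ g ∈ monicD F n, (a f : ℂ) * (a g : ℂ) *
        (if g.coeff 0 ≠ 0 ∧ P f g then 1 else 0) =
      ((∑ χ : MulChar (TR F k) ℂ × MulChar (TR F (l + 1)) ℂ,
        ‖∑ f ∈ monicD F n, (a f : ℂ) * twist χ.1 χ.2 f‖ ^ 2 : ℝ) : ℂ) := by
    push_cast
    simp_rw [← Complex.mul_conj', map_sum, Finset.sum_mul_sum, map_mul (starRingEnd ℂ),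
      Complex.conj_ofReal]
    symm
    rw [Finset.sum_comm, Finset.mul_sum]
    refine Finset.sum_congr rfl fun f hf => ?_
    rw [Finset.sum_comm, Finset.mul_sum]
    refine Finset.sum_congr rfl fun g hg => ?_
    symm
    calc _ = (a f : ℂ) * a g * (if g.coeff 0 ≠ 0 ∧ P f g then (N₁ : ℂ) * N₂ else 0) := by
          split_ifs <;> ring
      _ = _ := by
          rw [← sum_twist_mul_conj hk (by omega) hf hg, Finset.mul_sum]
          exact Finset.sum_congr rfl fun χ _ => by ring
  have h5 : ∑ χ : MulChar (TR F k) ℂ × MulChar (TR F (l + 1)) ℂ,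
        ‖∑ f ∈ monicD F n, (a f : ℂ) * twist χ.1 χ.2 f‖ ^ 2 ≤ (N₁ : ℝ) * N₂ * B ^ 2 := by
    calc _ ≤ ∑ χ : MulChar (TR F k) ℂ × MulChar (TR F (l + 1)) ℂ, B ^ 2 := by
          refine Finset.sum_le_sum fun χ _ => ?_
          gcongr
          have := norm_sum_twist_le (n := n) (d := d) hk (show 1 ≤ l + 1 by omega) (by omega) hdn
            χ.1 χ.2
          simpa [ha] using this
      _ = _ := by
          rw [Finset.sum_const, Finset.card_univ, Fintype.card_prod, nsmul_eq_mul]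
          push_cast
          rfl
  set T := ∑ χ : MulChar (TR F k) ℂ × MulChar (TR F (l + 1)) ℂ,
        ‖∑ f ∈ monicD F n, (a f : ℂ) * twist χ.1 χ.2 f‖ ^ 2
  have hN : (0 : ℝ) < N₁ * N₂ := by positivity
  have h6 : ∑ ξ ∈ supp (F := F) (box n k l),
      ‖∑ f ∈ monicD F n, (a f : ℂ) * ψ (phi ξ f)‖ ^ 2 =
      (Fintype.card F : ℝ) ^ d * (1 + T / (N₁ * N₂)) := by
    apply Complex.ofReal_injective
    rw [h1, h2]
    have h7 : (N₁ : ℂ) * N₂ ≠ 0 := by exact_mod_cast hN.ne'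
    have h8 := eq_div_of_mul_eq h7 ((mul_comm _ _).trans h4)
    rw [h8]
    push_cast
    rfl
  rw [h6]
  gcongr
  rw [div_le_iff₀ hN]
  linarith

end Box

/-! ### Fourier expansion of the digit condition -/

section Fourier

variable {n : ℕ}

lemma mem_MR {R : Finset F} {f : F[X]} :
    f ∈ MR F R n ↔ f ∈ monicD F n ∧ ∀ i : Fin n, f.coeff (i : ℕ) ∉ R := by
  simp only [MR, monicD, Finset.mem_image, Finset.mem_filter, Finset.mem_univ, true_and]
  constructor
  · rintro ⟨c, hc, rfl⟩
    refine ⟨⟨c, rfl⟩, fun i => ?_⟩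
    rw [coeff_monicOfFn]
    exact hc i
  · rintro ⟨⟨c, rfl⟩, hc⟩
    refine ⟨c, fun i => ?_, rfl⟩
    have := hc i
    rwa [coeff_monicOfFn] at this

/-- The Fourier transform of the indicator function of the complement of `R`. -/
def hat (ψ : AddChar F ℂ) (R : Finset F) (x : F) : ℂ := ∑ a ∈ Rᶜ, ψ (-(x * a))

/-- The normalised absolute value of the Fourier transform of the complement of `R`. -/
def wt (ψ : AddChar F ℂ) (R : Finset F) (x : F) : ℝ := ‖hat ψ R x‖ / Rᶜ.card

lemma sum_hat_mul {ψ : AddChar F ℂ} (hψ : ψ.IsPrimitive) (R : Finset F) (c : F) :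
    ∑ x, hat ψ R x * ψ (x * c) = if c ∈ R then 0 else (Fintype.card F : ℂ) := by
  simp_rw [hat, Finset.sum_mul]
  rw [Finset.sum_comm]
  have h : ∀ a, ∑ x : F, ψ (-(x * a)) * ψ (x * c) = if a = c then (Fintype.card F : ℂ) else 0 := by
    intro a
    have h1 : ∀ x : F, ψ (-(x * a)) * ψ (x * c) = ψ (x * (c - a)) := fun x => by
      rw [← AddChar.map_add_eq_mul]
      congr 1
      ring
    simp_rw [h1]
    rw [AddChar.sum_mulShift _ hψ]
    by_cases hac : a = c
    · simp [hac]
    · simp [hac, sub_eq_zero, Ne.symm hac]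
  simp_rw [h]
  rw [Finset.sum_ite_eq']
  by_cases hc : c ∈ R <;> simp [hc]

/-- Fourier expansion of a sum over `MR F R n`: the frequency `ξ` has one entry per coefficient, and
its Fourier coefficient is a product over the entries. -/
lemma sum_MR_eq {ψ : AddChar F ℂ} (hψ : ψ.IsPrimitive) (R : Finset F) (G : F[X] → ℂ) :
    (Fintype.card F : ℂ) ^ n * ∑ f ∈ MR F R n, G f =
      ∑ ξ : Fin n → F, (∏ i, hat ψ R (ξ i)) * ∑ f ∈ monicD F n, G f * ψ (phi ξ f) := by
  have h1 : MR F R n = (monicD F n).filter fun f => ∀ i : Fin n, f.coeff (i : ℕ) ∉ R := by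
    ext f
    rw [mem_MR, Finset.mem_filter]
  rw [h1, Finset.sum_filter, Finset.mul_sum]
  simp_rw [Finset.mul_sum]
  rw [Finset.sum_comm]
  refine Finset.sum_congr rfl fun f _ => ?_
  have h2 : ∀ ξ : Fin n → F, (∏ i, hat ψ R (ξ i)) * (G f * ψ (phi ξ f)) =
      G f * ∏ i : Fin n, (hat ψ R (ξ i) * ψ (ξ i * f.coeff i)) := by
    intro ξ
    rw [phi_apply, addChar_map_sum, Finset.prod_mul_distrib]
    ring
  simp_rw [h2]
  rw [← Finset.mul_sum]
  have h3 := Finset.prod_univ_sum (fun _ : Fin n => (Finset.univ : Finset F))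
    (fun i x => hat ψ R x * ψ (x * f.coeff (i : ℕ)))
  rw [Fintype.piFinset_univ] at h3
  rw [← h3]
  simp_rw [sum_hat_mul hψ]
  split_ifs with h4
  · rw [Finset.prod_congr rfl fun i _ => if_neg (h4 i), Finset.prod_const, Finset.card_univ,
      Fintype.card_fin, mul_comm]
  · push Not at h4
    obtain ⟨i, hi⟩ := h4
    have h5 : ∏ j : Fin n, (if f.coeff (j : ℕ) ∈ R then (0 : ℂ) else (Fintype.card F : ℂ)) = 0 :=
      Finset.prod_eq_zero (Finset.mem_univ i) (if_pos hi)
    rw [h5, mul_zero, mul_zero]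

variable {ψ : AddChar F ℂ} {R : Finset F}

lemma norm_hat (hA : Rᶜ.Nonempty) (x : F) : ‖hat ψ R x‖ = Rᶜ.card * wt ψ R x := by
  have : (0 : ℝ) < Rᶜ.card := by exact_mod_cast hA.card_pos
  rw [wt]
  field_simp

lemma wt_nonneg (x : F) : 0 ≤ wt ψ R x := by
  rw [wt]
  positivity

lemma wt_zero (hA : Rᶜ.Nonempty) : wt ψ R 0 = 1 := by
  have : (0 : ℝ) < Rᶜ.card := by exact_mod_cast hA.card_pos
  rw [wt, hat]
  simp only [zero_mul, neg_zero, AddChar.map_zero_eq_one, Finset.sum_const, nsmul_eq_mul, mul_one,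
    Complex.norm_natCast]
  exact div_self this.ne'

lemma wt_le (hψ : ψ.IsPrimitive) {x : F} (hx : x ≠ 0) :
    wt ψ R x ≤ R.card / Rᶜ.card := by
  rw [wt]
  gcongr
  have h1 : hat ψ R x = - ∑ a ∈ R, ψ (-(x * a)) := by
    rw [eq_neg_iff_add_eq_zero, hat, add_comm, Finset.sum_add_sum_compl]
    have h2 := AddChar.sum_mulShift (-x) hψ
    rw [if_neg (neg_ne_zero.2 hx), Nat.cast_zero] at h2
    rw [← h2]
    exact Finset.sum_congr rfl fun a _ => by
      congr 1
      ring
  rw [h1, norm_neg]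
  refine (norm_sum_le _ _).trans ?_
  simp [AddChar.norm_apply]

lemma sum_wt_sq (hψ : ψ.IsPrimitive) (hA : Rᶜ.Nonempty) :
    ∑ x, wt ψ R x ^ 2 = Fintype.card F / Rᶜ.card := by
  have hpos : (0 : ℝ) < Rᶜ.card := by exact_mod_cast hA.card_pos
  have h1 : ((∑ x, ‖hat ψ R x‖ ^ 2 : ℝ) : ℂ) = Fintype.card F * Rᶜ.card := by
    push_cast
    simp_rw [← Complex.mul_conj']
    have h2 : ∀ x, (starRingEnd ℂ) (hat ψ R x) = ∑ a ∈ Rᶜ, ψ (x * a) := fun x => by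
      rw [hat, map_sum]
      exact Finset.sum_congr rfl fun a _ => by rw [← AddChar.map_neg_eq_conj, neg_neg]
    simp_rw [h2, Finset.mul_sum]
    rw [Finset.sum_comm]
    simp_rw [sum_hat_mul hψ]
    rw [Finset.sum_congr rfl fun a ha => if_neg (Finset.mem_compl.1 ha), Finset.sum_const,
      nsmul_eq_mul, mul_comm]
  have h3 : ∑ x, ‖hat ψ R x‖ ^ 2 = (Fintype.card F : ℝ) * Rᶜ.card := by
    exact_mod_cast h1
  simp_rw [wt, div_pow]
  rw [← Finset.sum_div, h3]
  field_simp

/-- The deviation of the restricted von Mangoldt sum from its expected value is controlled by a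
weighted sum of exponential sums over all frequencies. -/
lemma abs_sum_MR_le (hψ : ψ.IsPrimitive) (hA : Rᶜ.Nonempty) (a : F[X] → ℝ) {ε : ℝ}
    (h : ∑ ξ : Fin n → F, (∏ i, wt ψ R (ξ i)) *
      ‖∑ f ∈ monicD F n, (a f : ℂ) * ψ (phi ξ f)‖ ≤ (Fintype.card F : ℝ) ^ n * ε) :
    |∑ f ∈ MR F R n, a f| ≤ (Rᶜ.card : ℝ) ^ n * ε := by
  have hq : (0 : ℝ) < (Fintype.card F : ℝ) ^ n := by
    have : 0 < Fintype.card F := Fintype.card_pos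
    positivity
  refine le_of_mul_le_mul_left ?_ hq
  have h1 := sum_MR_eq (n := n) hψ R (fun f => (a f : ℂ))
  have h2 : (Fintype.card F : ℝ) ^ n * |∑ f ∈ MR F R n, a f| =
      ‖(Fintype.card F : ℂ) ^ n * ∑ f ∈ MR F R n, (a f : ℂ)‖ := by
    rw [norm_mul, norm_pow, Complex.norm_natCast, ← Complex.ofReal_sum, Complex.norm_real,
      Real.norm_eq_abs]
  rw [h2, h1]
  calc _ ≤ ∑ ξ : Fin n → F, (Rᶜ.card : ℝ) ^ n * ((∏ i, wt ψ R (ξ i)) *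
      ‖∑ f ∈ monicD F n, (a f : ℂ) * ψ (phi ξ f)‖) := by
        refine (norm_sum_le _ _).trans (Finset.sum_le_sum fun ξ _ => ?_)
        rw [norm_mul, norm_prod]
        simp_rw [norm_hat hA]
        rw [Finset.prod_mul_distrib, Finset.prod_const, Finset.card_univ, Fintype.card_fin,
          mul_assoc]
    _ ≤ (Rᶜ.card : ℝ) ^ n * ((Fintype.card F : ℝ) ^ n * ε) := by
        rw [← Finset.mul_sum]
        gcongr
    _ = _ := by ring

lemma sum_lam0_MR (hn : 1 ≤ n) (hA : Rᶜ.Nonempty) :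
    ∑ f ∈ MR F R n, lam0 f = (Fintype.card F : ℝ) / (Fintype.card F - 1) * (Rᶜ.card : ℝ) ^ n *
      (if (0 : F) ∈ R then 1 else 1 - 1 / (Rᶜ.card : ℝ)) := by
  have hpos : (0 : ℝ) < Rᶜ.card := by exact_mod_cast hA.card_pos
  obtain ⟨N, rfl⟩ : ∃ N, n = N + 1 := ⟨n - 1, by omega⟩
  rw [MR, Finset.sum_image fun c _ c' _ h => monicOfFn_injective _ h]
  have h1 : ∀ c : Fin (N + 1) → F,
      lam0 (X ^ (N + 1) + ∑ i : Fin (N + 1), C (c i) * X ^ (i : ℕ)) =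
      if c 0 = 0 then 0 else (Fintype.card F : ℝ) / (Fintype.card F - 1) := by
    intro c
    have h := coeff_monicOfFn c (0 : Fin (N + 1))
    rw [Fin.val_zero] at h
    rw [lam0, h]
  simp_rw [h1]
  have h2 : ((Finset.univ : Finset (Fin (N + 1) → F)).filter fun c => ∀ i, c i ∉ R) =
      Fintype.piFinset fun _ => Rᶜ := by
    ext c
    simp [Fintype.mem_piFinset]
  rw [h2]
  have h3 : ∀ c : Fin (N + 1) → F,
      (if c 0 = 0 then 0 else (Fintype.card F : ℝ) / (Fintype.card F - 1)) =
      ∏ i : Fin (N + 1), if i = 0 then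
        (if c i = 0 then 0 else (Fintype.card F : ℝ) / (Fintype.card F - 1)) else 1 := by
    intro c
    rw [Finset.prod_ite_eq' Finset.univ (0 : Fin (N + 1)), if_pos (Finset.mem_univ _)]
  simp_rw [h3]
  rw [← Finset.prod_univ_sum (fun _ : Fin (N + 1) => Rᶜ) (fun i x => if i = 0 then
        (if x = 0 then 0 else (Fintype.card F : ℝ) / (Fintype.card F - 1)) else 1),
    Fin.prod_univ_succ]
  simp only [if_true, Fin.succ_ne_zero, if_false, Finset.sum_const, nsmul_eq_mul, mul_one,
    Finset.prod_const, Finset.card_univ, Fintype.card_fin]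
  have h4 : ∑ x ∈ Rᶜ, (if x = 0 then 0 else (Fintype.card F : ℝ) / (Fintype.card F - 1)) =
      (Fintype.card F : ℝ) / (Fintype.card F - 1) *
        (Rᶜ.card - if (0 : F) ∈ R then 0 else 1) := by
    have h5 : ∀ x : F, (if x = 0 then 0 else (Fintype.card F : ℝ) / (Fintype.card F - 1)) =
        (Fintype.card F : ℝ) / (Fintype.card F - 1) * (1 - if x = 0 then 1 else 0) := by
      intro x
      split_ifs <;> simp
    simp_rw [h5]
    rw [← Finset.mul_sum, Finset.sum_sub_distrib, Finset.sum_ite_eq']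
    by_cases h0 : (0 : F) ∈ R <;> simp [h0]
  rw [h4, pow_succ]
  split_ifs
  · ring
  · field_simp

end Fourier

/-! ### Linear recurrences and the structure of the remaining frequencies -/

section Recurrence

variable {n : ℕ}

lemma phi_X_pow (ξ : Fin n → F) (i : Fin n) : phi ξ (X ^ (i : ℕ)) = ξ i := by
  rw [phi_apply, Finset.sum_eq_single i]
  · simp
  · intro j _ hj
    rw [coeff_X_pow, if_neg fun h => hj (Fin.ext h), mul_zero]
  · simp

lemma linear_mul_X_pow (φ : F[X] →ₗ[F] F) (g : F[X]) (b : ℕ) :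
    φ (g * X ^ b) = ∑ j ∈ Finset.range (g.natDegree + 1), g.coeff j * φ (X ^ (j + b)) := by
  conv_lhs => rw [g.as_sum_range_C_mul_X_pow, Finset.sum_mul, map_sum]
  refine Finset.sum_congr rfl fun j _ => ?_
  rw [mul_assoc, ← pow_add, ← smul_eq_C_mul, map_smul, smul_eq_mul]

/-- A solution of a linear recurrence with monic characteristic polynomial which vanishes on a
window as long as the order vanishes after it. -/
lemma recurrence_forward {φ : F[X] →ₗ[F] F} {g : F[X]} (hg : g.Monic) {L a : ℕ}
    (h : ∀ b, b + g.natDegree < L → φ (g * X ^ b) = 0)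
    (ha : ∀ i, a ≤ i → i < a + g.natDegree → φ (X ^ i) = 0) :
    ∀ i, a ≤ i → i < L → φ (X ^ i) = 0 := by
  intro i
  induction i using Nat.strong_induction_on with
  | _ i ih =>
    intro hai hiL
    by_cases hi : i < a + g.natDegree
    · exact ha i hai hi
    obtain ⟨b, rfl⟩ : ∃ b, i = g.natDegree + b := ⟨i - g.natDegree, by omega⟩
    have h1 := h b (by omega)
    rw [linear_mul_X_pow, Finset.sum_range_succ, Finset.sum_eq_zero, zero_add,
      hg.coeff_natDegree, one_mul] at h1
    · exact h1
    · intro j hj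
      rw [Finset.mem_range] at hj
      rw [ih (j + b) (by omega) (by omega) (by omega), mul_zero]

/-- Backwards in time, such a solution vanishes down to the index of the lowest nonzero
coefficient of the characteristic polynomial. -/
lemma recurrence_backward {φ : F[X] →ₗ[F] F} {g : F[X]} (hg : g ≠ 0) {L a : ℕ}
    (h : ∀ b, b + g.natDegree < L → φ (g * X ^ b) = 0) (haL : a + g.natDegree ≤ L)
    (ha : ∀ i, a ≤ i → i < a + g.natDegree → φ (X ^ i) = 0) :
    ∀ i, g.natTrailingDegree ≤ i → i < a → φ (X ^ i) = 0 := by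
  suffices H : ∀ m i, a - i = m → g.natTrailingDegree ≤ i → i < a → φ (X ^ i) = 0 from
    fun i => H _ i rfl
  intro m
  induction m using Nat.strong_induction_on with
  | _ m ih =>
    intro i him hvi hia
    obtain ⟨b, rfl⟩ : ∃ b, i = g.natTrailingDegree + b := ⟨i - g.natTrailingDegree, by omega⟩
    have h1 := h b (by omega)
    rw [linear_mul_X_pow, Finset.sum_eq_single g.natTrailingDegree] at h1
    · refine (mul_eq_zero.1 h1).resolve_left ?_
      exact trailingCoeff_nonzero_iff_nonzero.2 hg
    · intro j hj hjv
      rw [Finset.mem_range] at hj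
      rcases lt_or_gt_of_ne hjv with hlt | hgt
      · rw [coeff_eq_zero_of_lt_natTrailingDegree hlt, zero_mul]
      · by_cases hja : j + b < a
        · rw [ih (a - (j + b)) (by omega) (j + b) rfl (by omega) hja, mul_zero]
        · rw [ha (j + b) (by omega) (by omega), mul_zero]
    · intro hv
      exact absurd (Finset.mem_range.2 (Nat.lt_succ_of_le g.natTrailingDegree_le_natDegree)) hv

lemma mem_box {k l : ℕ} {i : Fin n} : i ∈ box n k l ↔ (i : ℕ) < k ∨ n ≤ i + l := by
  simp [box]

/-- If a frequency satisfies a recurrence of order `g.natDegree` and is not supported in a short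
box at the two ends, then every window as long as the order contains a nonzero entry. -/
lemma exists_ne_zero_window {ξ : Fin n → F} {d : ℕ} {g : F[X]} (hw : Wit (phi ξ) n d g)
    (hdn : d ≤ n) (hb : ∀ k l, k + l = d → ξ ∉ supp (box n k l)) {a : ℕ}
    (haL : a + d ≤ n) :
    ∃ i : Fin n, a ≤ i ∧ (i : ℕ) < a + g.natDegree ∧ ξ i ≠ 0 := by
  obtain ⟨hg, hgd, h⟩ := hw
  by_contra! hc
  have hv := g.natTrailingDegree_le_natDegree
  have h' : ∀ b, b + g.natDegree < n - d + g.natDegree → phi ξ (g * X ^ b) = 0 :=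
    fun b hb => h b (by omega)
  have ha : ∀ i, a ≤ i → i < a + g.natDegree → phi ξ (X ^ i) = 0 := by
    intro i h1 h2
    have := hc ⟨i, by omega⟩ h1 h2
    rwa [← phi_X_pow ξ] at this
  refine hb g.natTrailingDegree (d - g.natTrailingDegree) (by omega) (mem_supp.2 fun i hi => ?_)
  rw [mem_box] at hi
  push Not at hi
  rw [← phi_X_pow ξ]
  by_cases hia : (i : ℕ) < a
  · exact recurrence_backward hg.ne_zero h' (by omega) ha i hi.1 hia
  · exact recurrence_forward hg h' ha i (by omega) (by omega)

/-- The frequencies with a witness of degree `e` at level `d` that are not supported in a box of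
total length `d`. -/
def genSet (n d e : ℕ) : Finset (Fin n → F) :=
  Finset.univ.filter fun ξ => (∃ g, Wit (phi ξ) n d g ∧ g.natDegree = e) ∧
    ∀ k l, k + l = d → ξ ∉ supp (box n k l)

/-- Elements of `genSet n d e` are determined by their first `2 e` and last `d - e` entries: the
difference of two of them satisfies the recurrence given by the product of the witnesses. -/
lemma genSet_ext {d e : ℕ} {ξ η : Fin n → F} (hd : d ≤ n) (hξ : ξ ∈ genSet n d e)
    (hη : η ∈ genSet n d e)
    (h : ∀ i ∈ box n (2 * e) (d - e), ξ i = η i) : ξ = η := by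
  simp only [genSet, Finset.mem_filter, Finset.mem_univ, true_and] at hξ hη
  obtain ⟨⟨g, ⟨hg, hgd, hgz⟩, rfl⟩, -⟩ := hξ
  obtain ⟨⟨g', ⟨hg', hgd', hgz'⟩, he⟩, -⟩ := hη
  have hdeg : (g * g').natDegree = 2 * g.natDegree := by
    rw [hg.natDegree_mul hg', he, two_mul]
  have key : ∀ i, 0 ≤ i → i < n - d + g.natDegree → (phi ξ - phi η) (X ^ i) = 0 := by
    refine recurrence_forward (hg.mul hg') ?_ ?_
    · intro b hb
      rw [hdeg] at hb
      rw [LinearMap.sub_apply]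
      have h1 : phi ξ (g * g' * X ^ b) = 0 := by
        rw [mul_comm g g', mul_assoc, mul_comm, g'.as_sum_range_C_mul_X_pow, Finset.mul_sum,
          map_sum]
        refine Finset.sum_eq_zero fun j hj => ?_
        rw [Finset.mem_range] at hj
        rw [show g * X ^ b * (C (g'.coeff j) * X ^ j) = C (g'.coeff j) * (g * X ^ (b + j)) by ring,
          ← smul_eq_C_mul, map_smul, hgz _ (by omega), smul_zero]
      have h2 : phi η (g * g' * X ^ b) = 0 := by
        rw [mul_assoc, mul_comm, g.as_sum_range_C_mul_X_pow, Finset.mul_sum, map_sum]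
        refine Finset.sum_eq_zero fun j hj => ?_
        rw [Finset.mem_range] at hj
        rw [show g' * X ^ b * (C (g.coeff j) * X ^ j) = C (g.coeff j) * (g' * X ^ (b + j)) by ring,
          ← smul_eq_C_mul, map_smul, hgz' _ (by omega), smul_zero]
      rw [h1, h2, sub_zero]
    · intro i _ hi
      rw [hdeg, zero_add] at hi
      rw [LinearMap.sub_apply]
      by_cases hin : i < n
      · have := h ⟨i, hin⟩ (mem_box.2 (Or.inl hi))
        rw [← phi_X_pow ξ, ← phi_X_pow η] at this
        exact sub_eq_zero.2 this
      · rw [phi_apply, phi_apply, Finset.sum_eq_zero, Finset.sum_eq_zero, sub_zero]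
        all_goals
          intro j _
          rw [coeff_X_pow, if_neg (by omega), mul_zero]
  funext i
  by_cases hi : (i : ℕ) < n - d + g.natDegree
  · have := key i (Nat.zero_le _) hi
    rwa [LinearMap.sub_apply, phi_X_pow, phi_X_pow, sub_eq_zero] at this
  · exact h i (mem_box.2 (Or.inr (by omega)))

lemma card_box_le (k l : ℕ) (hl : l ≤ n) : (box n k l).card ≤ k + l := by
  have h : (box n k l).map Fin.valEmbedding ⊆ Finset.range k ∪ Finset.Ico (n - l) n := by
    intro i hi
    rw [Finset.mem_map] at hi
    obtain ⟨j, hj, rfl⟩ := hi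
    rw [mem_box] at hj
    have := j.2
    simp only [Fin.valEmbedding_apply, Finset.mem_union, Finset.mem_range, Finset.mem_Ico]
    omega
  rw [← Finset.card_map]
  refine (Finset.card_le_card h).trans ((Finset.card_union_le _ _).trans ?_)
  rw [Finset.card_range, Nat.card_Ico]
  omega

/-- Weighted count of `genSet n d e`: the free entries contribute a power of `∑ x, u x`, while each
of the disjoint windows in the middle contains a nonzero entry and contributes a factor `τ`. -/
lemma sum_genSet_le {d e : ℕ} (hed : e ≤ d) (hdn : d ≤ n) {u : F → ℝ} {τ Λ : ℝ}
    (hu0 : u 0 = 1) (hu : ∀ x, 0 ≤ u x) (hτ : ∀ x, x ≠ 0 → u x ≤ τ) (hτ1 : τ ≤ 1) (hτ0 : 0 ≤ τ)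
    (hΛ : ∑ x, u x ≤ Λ) (hΛ1 : 1 ≤ Λ) :
    ∑ ξ ∈ genSet n d e, ∏ i, u (ξ i) ≤ τ ^ ((n - d - e) / e) * Λ ^ (2 * d) := by
  have hu1 : ∀ x, u x ≤ 1 := fun x => by
    by_cases hx : x = 0
    · rw [hx, hu0]
    · exact (hτ x hx).trans hτ1
  set J := box n (2 * e) (d - e) with hJ
  set N := (n - d - e) / e with hN
  have hNe : N * e ≤ n - d - e := Nat.div_mul_le_self _ _
  have hmid : ∀ ξ ∈ genSet n d e, ∏ i ∈ Jᶜ, u (ξ i) ≤ τ ^ N := by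
    intro ξ hξ
    simp only [genSet, Finset.mem_filter, Finset.mem_univ, true_and] at hξ
    obtain ⟨⟨g, hw, he⟩, hb⟩ := hξ
    have hwin : ∀ t : Fin N, ∃ i : Fin n, 2 * e + t * e ≤ i ∧ (i : ℕ) < 2 * e + t * e + e ∧
        ξ i ≠ 0 := by
      intro t
      have h1 : (t + 1 : ℕ) * e ≤ N * e := Nat.mul_le_mul_right _ t.2
      rw [add_mul, one_mul] at h1
      have h2 := exists_ne_zero_window hw hdn hb (a := 2 * e + t * e) (by
        by_cases he0 : e = 0
        · rw [he0] at hN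
          have := t.2
          simp [hN] at this
        · omega)
      rwa [he] at h2
    choose w hw1 hw2 hw3 using hwin
    have hinj : Function.Injective w := by
      intro t t' htt
      have h1 := hw1 t
      have h2 := hw2 t
      have h3 := hw1 t'
      have h4 := hw2 t'
      rw [htt] at h1 h2
      by_contra hne
      rcases lt_or_gt_of_ne (fun h => hne (Fin.ext h)) with hlt | hgt
      · have : ((t : ℕ) + 1) * e ≤ t' * e := Nat.mul_le_mul_right _ hlt
        rw [add_mul, one_mul] at this
        omega
      · have : ((t' : ℕ) + 1) * e ≤ t * e := Nat.mul_le_mul_right _ hgt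
        rw [add_mul, one_mul] at this
        omega
    have hsub : Finset.univ.image w ⊆ Jᶜ := by
      intro i hi
      simp only [Finset.mem_image, Finset.mem_univ, true_and] at hi
      obtain ⟨t, rfl⟩ := hi
      rw [Finset.mem_compl, hJ, mem_box]
      have h1 : (t + 1 : ℕ) * e ≤ N * e := Nat.mul_le_mul_right _ t.2
      rw [add_mul, one_mul] at h1
      have h2 := hw1 t
      have h3 := hw2 t
      omega
    rw [← Finset.prod_sdiff hsub]
    calc _ ≤ 1 * ∏ i ∈ Finset.univ.image w, u (ξ i) := by
          gcongr
          · exact Finset.prod_nonneg fun i _ => hu _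
          · exact Finset.prod_le_one (fun i _ => hu _) fun i _ => hu1 _
      _ ≤ τ ^ N := by
          rw [one_mul, Finset.prod_image fun _ _ _ _ h => hinj h]
          refine (Finset.prod_le_prod (fun _ _ => hu _) fun t _ => hτ _ (hw3 t)).trans ?_
          rw [Finset.prod_const, Finset.card_univ, Fintype.card_fin]
  let ρ : (Fin n → F) → (Fin n → F) := fun ξ i => if i ∈ J then ξ i else 0
  have hρ : ∀ ξ, ∏ i, u (ρ ξ i) = ∏ i ∈ J, u (ξ i) := by
    intro ξ
    rw [← Finset.prod_subset (Finset.subset_univ J)]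
    · exact Finset.prod_congr rfl fun i hi => by simp only [ρ, if_pos hi]
    · intro i _ hi
      simp only [ρ, if_neg hi, hu0]
  calc ∑ ξ ∈ genSet n d e, ∏ i, u (ξ i)
      ≤ ∑ ξ ∈ genSet n d e, τ ^ N * ∏ i, u (ρ ξ i) := by
        refine Finset.sum_le_sum fun ξ hξ => ?_
        rw [hρ, ← Finset.prod_compl_mul_prod J]
        gcongr
        · exact Finset.prod_nonneg fun i _ => hu _
        · exact hmid ξ hξ
    _ = τ ^ N * ∑ ξ ∈ (genSet n d e).image ρ, ∏ i, u (ξ i) := by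
        rw [← Finset.mul_sum, Finset.sum_image]
        intro ξ hξ η hη h
        refine genSet_ext hdn hξ hη fun i hi => ?_
        have hiJ : i ∈ J := hi
        have := congrFun h i
        simpa only [ρ, if_pos hiJ] using this
    _ ≤ τ ^ N * ∑ ξ ∈ supp J, ∏ i, u (ξ i) := by
        gcongr
        · exact fun ξ _ _ => Finset.prod_nonneg fun i _ => hu _
        · intro ξ hξ
          obtain ⟨η, -, rfl⟩ := Finset.mem_image.1 hξ
          exact mem_supp.2 fun i hi => if_neg hi
    _ ≤ τ ^ N * Λ ^ (2 * d) := by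
        rw [sum_supp_prod J (fun _ => u) fun _ _ => hu0, Finset.prod_const]
        gcongr
        calc (∑ x, u x) ^ J.card ≤ Λ ^ J.card := by
              gcongr
              exact Finset.sum_nonneg fun x _ => hu x
          _ ≤ Λ ^ (2 * d) := by
              refine pow_le_pow_right₀ hΛ1 ?_
              refine (card_box_le _ _ (by omega)).trans ?_
              omega

end Recurrence

/-! ### Size of the Fourier weights and the three ranges of frequencies -/

section Weights

variable {n : ℕ} {ψ : AddChar F ℂ} {R : Finset F}

lemma card_compl_real : (Rᶜ.card : ℝ) = Fintype.card F - R.card := by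
  rw [Finset.card_compl, Nat.cast_sub (Finset.card_le_univ R)]

/-- Numerical consequences of `|R| < √q / 2` and `q ≥ 500`. -/
lemma sparse (hq : 500 ≤ Fintype.card F)
    (hR : (R.card : ℝ) < Real.sqrt (Fintype.card F : ℝ) / 2) :
    Rᶜ.Nonempty ∧ (R.card : ℝ) / Rᶜ.card ≤ 0.52 * (Fintype.card F : ℝ) ^ (-(1 / 2) : ℝ) ∧
      (Fintype.card F : ℝ) / Rᶜ.card ≤ 1.023 := by
  have hq' : (500 : ℝ) ≤ Fintype.card F := by exact_mod_cast hq
  have hc := card_compl_real (R := R)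
  set q : ℝ := ((Fintype.card F : ℕ) : ℝ) with hqdef
  have hs : Real.sqrt q * Real.sqrt q = q := Real.mul_self_sqrt (by linarith)
  have hs2 : (22.36 : ℝ) ≤ Real.sqrt q := Real.le_sqrt_of_sq_le (by norm_num; linarith)
  set y := Real.sqrt q with hy
  have hpos : (0 : ℝ) < Rᶜ.card := by nlinarith
  refine ⟨Finset.card_pos.1 (by exact_mod_cast hpos), ?_, ?_⟩
  · rw [Real.rpow_neg (by linarith), ← Real.sqrt_eq_rpow, div_le_iff₀ hpos, ← hy, hc, mul_assoc,
      ← div_eq_inv_mul, ← hs]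
    have h1 : (y * y - (R.card : ℝ)) / y = y - R.card / y := by field_simp
    have h2 : (R.card : ℝ) / y ≤ 1 / 2 := by
      rw [div_le_iff₀ (by linarith)]
      linarith
    rw [h1]
    nlinarith
  · rw [div_le_iff₀ hpos, hc]
    nlinarith

lemma sum_wt_sq_ne (hψ : ψ.IsPrimitive) (hA : Rᶜ.Nonempty) :
    ∑ x ∈ Finset.univ.erase 0, wt ψ R x ^ 2 = (R.card : ℝ) / Rᶜ.card := by
  have h1 := sum_wt_sq hψ hA
  have hpos : (0 : ℝ) < Rᶜ.card := by exact_mod_cast hA.card_pos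
  rw [← Finset.add_sum_erase _ _ (Finset.mem_univ (0 : F)), wt_zero hA] at h1
  have h2 := card_compl_real (R := R)
  field_simp at h1 ⊢
  linarith

/-- The `L¹` norm of the weight at one position: the Cauchy-Schwarz inequality and Parseval bound the
nonzero frequencies by `√(q |R| / |Rᶜ|)`, which is less than `q ^ (1 / 4)` by a constant factor. -/
lemma sum_wt_le (hψ : ψ.IsPrimitive) (hq : 500 ≤ Fintype.card F)
    (hR : (R.card : ℝ) < Real.sqrt (Fintype.card F : ℝ) / 2) :
    ∑ x, wt ψ R x ≤ (Fintype.card F : ℝ) ^ (1 / 4 : ℝ) := by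
  obtain ⟨hA, hσ, -⟩ := sparse hq hR
  have hq' : (500 : ℝ) ≤ Fintype.card F := by exact_mod_cast hq
  have h1 := sum_wt_sq_ne hψ hA
  have h2 := sq_sum_le_card_mul_sum_sq (s := Finset.univ.erase (0 : F)) (f := wt ψ R)
  rw [h1] at h2
  rw [← Finset.add_sum_erase _ _ (Finset.mem_univ (0 : F)), wt_zero hA]
  have h3 : ((Finset.univ.erase (0 : F)).card : ℝ) ≤ Fintype.card F := by
    exact_mod_cast Finset.card_le_univ _
  set q : ℝ := ((Fintype.card F : ℕ) : ℝ) with hqdef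
  set t := ∑ x ∈ Finset.univ.erase 0, wt ψ R x with ht
  have hq0 : 0 < q := by linarith
  have h4 : t ^ 2 ≤ 0.52 * (q ^ (1 / 4 : ℝ)) ^ 2 := by
    calc t ^ 2 ≤ q * (0.52 * q ^ (-(1 / 2) : ℝ)) := by
          refine h2.trans ?_
          gcongr
      _ = 0.52 * (q ^ (1 : ℝ) * q ^ (-(1 / 2) : ℝ)) := by
          rw [Real.rpow_one]
          ring
      _ = 0.52 * (q ^ (1 / 4 : ℝ)) ^ 2 := by
          rw [← Real.rpow_add hq0, ← Real.rpow_natCast, ← Real.rpow_mul hq0.le]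
          norm_num
  have h5 : (4 : ℝ) ≤ q ^ (1 / 4 : ℝ) := by
    calc (4 : ℝ) = (256 : ℝ) ^ (1 / 4 : ℝ) := by
          rw [show (256 : ℝ) = 4 ^ (4 : ℝ) by norm_num, ← Real.rpow_mul (by norm_num)]
          norm_num
      _ ≤ q ^ (1 / 4 : ℝ) := by
          gcongr
          linarith
  nlinarith

/-- The `L^(4/3)` norm of the weight at one position, by Hölder and Parseval. -/
lemma sum_wt_rpow_le (hψ : ψ.IsPrimitive) (hq : 500 ≤ Fintype.card F)
    (hR : (R.card : ℝ) < Real.sqrt (Fintype.card F : ℝ) / 2) :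
    ∑ x, wt ψ R x ^ (4 / 3 : ℝ) ≤ (Fintype.card F : ℝ) ^ (1 / 10 : ℝ) := by
  obtain ⟨hA, hσ, -⟩ := sparse hq hR
  have hq' : (500 : ℝ) ≤ Fintype.card F := by exact_mod_cast hq
  have h1 := sum_wt_sq_ne hψ hA
  have h2 := Real.inner_le_Lp_mul_Lq_of_nonneg (Finset.univ.erase (0 : F))
    (f := fun x => wt ψ R x ^ (4 / 3 : ℝ)) (g := fun _ => 1) (p := 3 / 2) (q := 3)
    (Real.holderConjugate_iff.2 ⟨by norm_num, by norm_num⟩)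
    (fun x _ => Real.rpow_nonneg (wt_nonneg x) _) (fun _ _ => zero_le_one)
  have h3 : ∀ x, (wt ψ R x ^ (4 / 3 : ℝ)) ^ (3 / 2 : ℝ) = wt ψ R x ^ 2 := fun x => by
    rw [← Real.rpow_mul (wt_nonneg x), ← Real.rpow_natCast]
    norm_num
  simp only [h3, h1, mul_one, Real.one_rpow, Finset.sum_const, nsmul_eq_mul] at h2
  rw [← Finset.add_sum_erase _ _ (Finset.mem_univ (0 : F)), wt_zero hA, Real.one_rpow]
  have h4 : ((Finset.univ.erase (0 : F)).card : ℝ) ≤ Fintype.card F := by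
    exact_mod_cast Finset.card_le_univ _
  set q : ℝ := ((Fintype.card F : ℕ) : ℝ) with hqdef
  have hq0 : 0 < q := by linarith
  have h5 : ((R.card : ℝ) / Rᶜ.card) ^ (1 / (3 / 2) : ℝ) *
      ((Finset.univ.erase (0 : F)).card : ℝ) ^ (1 / 3 : ℝ) ≤ 0.65 := by
    calc _ ≤ (0.52 * q ^ (-(1 / 2) : ℝ)) ^ (1 / (3 / 2) : ℝ) * q ^ (1 / 3 : ℝ) := by gcongr
      _ = (0.52 : ℝ) ^ (2 / 3 : ℝ) := by
          rw [Real.mul_rpow (by norm_num) (by positivity), ← Real.rpow_mul hq0.le, mul_assoc,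
            ← Real.rpow_add hq0]
          norm_num
      _ ≤ ((0.65 : ℝ) ^ (3 / 2 : ℝ)) ^ (2 / 3 : ℝ) := by
          gcongr
          rw [show (3 / 2 : ℝ) = 1 + 1 / 2 by norm_num, Real.rpow_add (by norm_num),
            ← Real.sqrt_eq_rpow, Real.rpow_one]
          have : (0.805 : ℝ) ≤ Real.sqrt 0.65 := Real.le_sqrt_of_sq_le (by norm_num)
          linarith
      _ = 0.65 := by
          rw [← Real.rpow_mul (by norm_num)]
          norm_num
  have h6 : (1.65 : ℝ) ≤ q ^ (1 / 10 : ℝ) := by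
    calc (1.65 : ℝ) = ((1.65 : ℝ) ^ (10 : ℝ)) ^ (1 / 10 : ℝ) := by
          rw [← Real.rpow_mul (by norm_num)]
          norm_num
      _ ≤ q ^ (1 / 10 : ℝ) := by
          gcongr
          norm_num
          linarith
  linarith

lemma one_le_q (hq : 500 ≤ Fintype.card F) : (1 : ℝ) ≤ Fintype.card F := by
  exact_mod_cast (by omega : 1 ≤ Fintype.card F)

lemma prod_wt_nonneg (ξ : Fin n → F) : 0 ≤ ∏ i, wt ψ R (ξ i) :=
  Finset.prod_nonneg fun _ _ => wt_nonneg _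

/-- Contribution of the frequencies supported in a short box at the two ends. -/
lemma sum_box_short (hψ : ψ.IsPrimitive) (hq : 500 ≤ Fintype.card F)
    (hR : (R.card : ℝ) < Real.sqrt (Fintype.card F : ℝ) / 2) {k l d : ℕ} (hk : 1 ≤ k)
    (hd : k + l = d) (hdn : d ≤ n) :
    ∑ ξ ∈ supp (box n k l), (∏ i, wt ψ R (ξ i)) *
      ‖∑ f ∈ monicD F n, ((vM f - lam0 f : ℝ) : ℂ) * ψ (phi ξ f)‖ ≤
      2 * n * (Fintype.card F : ℝ) ^ ((n : ℝ) - n / (2 * d) + 0.505 * d) := by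
  obtain ⟨hA, -, hσ⟩ := sparse hq hR
  have hq' : (500 : ℝ) ≤ Fintype.card F := by exact_mod_cast hq
  have h1 := box_second_moment hψ hk hd hdn
  have h2 : ∑ ξ ∈ supp (box n k l), (∏ i, wt ψ R (ξ i)) ^ 2 ≤
      ((Fintype.card F : ℝ) ^ (0.01 : ℝ)) ^ d := by
    simp_rw [← Finset.prod_pow]
    rw [sum_supp_prod (box n k l) (fun _ x => wt ψ R x ^ 2) (fun _ _ => by
      rw [wt_zero hA, one_pow]), Finset.prod_const, sum_wt_sq hψ hA, card_box (hd ▸ hdn), hd]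
    gcongr
    calc _ ≤ (1.023 : ℝ) := hσ
      _ = ((1.023 : ℝ) ^ (100 : ℝ)) ^ (0.01 : ℝ) := by
          rw [← Real.rpow_mul (by norm_num)]
          norm_num
      _ ≤ _ := by
          gcongr
          norm_num
          linarith
  refine (Real.sum_mul_le_sqrt_mul_sqrt _ _ _).trans ?_
  set q : ℝ := ((Fintype.card F : ℕ) : ℝ) with hqdef
  have hq0 : 0 < q := by linarith
  have hd1 : (1 : ℝ) ≤ d := by exact_mod_cast (by omega : 1 ≤ d)
  have hdn' : (d : ℝ) ≤ n := by exact_mod_cast hdn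
  have hn1 : (1 : ℝ) ≤ n := hd1.trans hdn'
  have hB : (1 : ℝ) ≤ q ^ ((n : ℝ) - n / (2 * d)) := by
    refine Real.one_le_rpow (by linarith) ?_
    have : (n : ℝ) / (2 * d) ≤ n / 1 := by
      gcongr
      linarith
    rw [div_one] at this
    linarith
  set B := q ^ ((n : ℝ) - n / (2 * d)) with hBdef
  have hdB : 1 ≤ (d : ℝ) * B := one_le_mul_of_one_le_of_one_le hd1 hB
  calc _ ≤ Real.sqrt ((q ^ (0.01 : ℝ)) ^ d) * Real.sqrt (q ^ d * (1 + (d * B) ^ 2)) := by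
        gcongr
    _ ≤ Real.sqrt ((q ^ (0.01 : ℝ)) ^ d) * Real.sqrt (q ^ d * (2 * (n * B)) ^ 2) := by
        gcongr
        have : (d : ℝ) * B ≤ n * B := by gcongr
        nlinarith
    _ = 2 * n * (B * (q ^ (0.01 * d / 2 : ℝ) * q ^ (d / 2 : ℝ))) := by
        rw [Real.sqrt_mul (by positivity), Real.sqrt_sq (by positivity), Real.sqrt_eq_rpow,
          Real.sqrt_eq_rpow, ← Real.rpow_natCast, ← Real.rpow_natCast, ← Real.rpow_mul hq0.le,
          ← Real.rpow_mul hq0.le, ← Real.rpow_mul hq0.le]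
        rw [show (0.01 * d * (1 / 2) : ℝ) = 0.01 * d / 2 by ring,
          show (d * (1 / 2) : ℝ) = d / 2 by ring]
        ring
    _ = _ := by
        rw [← Real.rpow_add hq0, ← Real.rpow_add hq0]
        congr 2
        ring

/-- Contribution of the frequencies of level `d` supported in a box of total length `d`. -/
lemma sum_box_long (hψ : ψ.IsPrimitive) (hq : 500 ≤ Fintype.card F)
    (hR : (R.card : ℝ) < Real.sqrt (Fintype.card F : ℝ) / 2) {k l d : ℕ}
    (hd : k + l = d) (hdn : d ≤ n) (hn : 0 < n) :
    ∑ ξ ∈ (supp (box n k l)).filter (fun ξ => lev (phi ξ) n = d), (∏ i, wt ψ R (ξ i)) *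
      ‖∑ f ∈ monicD F n, (vM f : ℂ) * ψ (phi ξ f)‖ ≤
      3 * (n + 1) ^ 3 * (Fintype.card F : ℝ) ^
        ((n : ℝ) + 1 - min ((d : ℝ) / 2) ((n : ℝ) / 5) + d / 4) := by
  obtain ⟨hA, -, -⟩ := sparse hq hR
  have hq0 : (0 : ℝ) < Fintype.card F := zero_lt_one.trans_le (one_le_q hq)
  calc _ ≤ ∑ ξ ∈ (supp (box n k l)).filter (fun ξ => lev (phi ξ) n = d),
        (∏ i, wt ψ R (ξ i)) * (3 * (n + 1) ^ 3 * (Fintype.card F : ℝ) ^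
        ((n : ℝ) + 1 - min ((d : ℝ) / 2) ((n : ℝ) / 5))) := by
        refine Finset.sum_le_sum fun ξ hξ => ?_
        gcongr
        · exact prod_wt_nonneg ξ
        · have := norm_sum_vM_psi_le hψ (phi ξ) hn
          rwa [(Finset.mem_filter.1 hξ).2] at this
    _ ≤ (∑ ξ ∈ supp (box n k l), ∏ i, wt ψ R (ξ i)) * (3 * (n + 1) ^ 3 * (Fintype.card F : ℝ) ^
        ((n : ℝ) + 1 - min ((d : ℝ) / 2) ((n : ℝ) / 5))) := by
        rw [← Finset.sum_mul]
        gcongr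
        · exact fun ξ _ _ => prod_wt_nonneg ξ
        · exact Finset.filter_subset _ _
    _ ≤ ((Fintype.card F : ℝ) ^ (1 / 4 : ℝ)) ^ d * (3 * (n + 1) ^ 3 * (Fintype.card F : ℝ) ^
        ((n : ℝ) + 1 - min ((d : ℝ) / 2) ((n : ℝ) / 5))) := by
        rw [sum_supp_prod (box n k l) (fun _ x => wt ψ R x) (fun _ _ => wt_zero hA),
          Finset.prod_const, card_box (hd ▸ hdn), hd]
        gcongr
        · exact Finset.sum_nonneg fun x _ => wt_nonneg x
        · exact sum_wt_le hψ hq hR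
    _ = _ := by
        rw [← Real.rpow_natCast, ← Real.rpow_mul hq0.le, mul_comm, mul_assoc,
          ← Real.rpow_add hq0]
        congr 2
        ring

lemma sum_norm_sq_le (hψ : ψ.IsPrimitive) (hn : 0 < n) :
    ∑ ξ : Fin n → F, ‖∑ f ∈ monicD F n, (vM f : ℂ) * ψ (phi ξ f)‖ ^ 2 ≤
      n * (Fintype.card F : ℝ) ^ (2 * n) := by
  have h1 := sum_supp_norm_sq hψ (Finset.univ : Finset (Fin n)) (monicD F n) fun f => (vM f : ℝ)
  have h2 : supp (Finset.univ : Finset (Fin n)) = (Finset.univ : Finset (Fin n → F)) := by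
    ext ξ
    simp [mem_supp]
  have h3 : ∀ f ∈ monicD F n, ∑ g ∈ monicD F n, ((vM f : ℝ) : ℂ) * ((vM g : ℝ) : ℂ) *
      (if ∀ i ∈ (Finset.univ : Finset (Fin n)), f.coeff (i : ℕ) = g.coeff (i : ℕ) then 1 else 0) =
      (vM f : ℂ) ^ 2 := by
    intro f hf
    have hf' := mem_monicD.1 hf
    rw [Finset.sum_eq_single f]
    · simp [sq]
    · intro g hg hgf
      have hg' := mem_monicD.1 hg
      rw [if_neg, mul_zero]
      intro h
      refine hgf (ext fun i => ?_)
      rcases lt_trichotomy i n with hi | rfl | hi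
      · exact (h ⟨i, hi⟩ (Finset.mem_univ _)).symm
      · have h4 := hf'.1.coeff_natDegree
        have h5 := hg'.1.coeff_natDegree
        rw [hf'.2] at h4
        rw [hg'.2] at h5
        rw [h4, h5]
      · rw [coeff_eq_zero_of_natDegree_lt (by omega), coeff_eq_zero_of_natDegree_lt (by omega)]
    · exact fun h => absurd hf h
  rw [h2, Finset.sum_congr rfl h3, Finset.card_univ, Fintype.card_fin] at h1
  have h4 : ∑ ξ : Fin n → F, ‖∑ f ∈ monicD F n, (vM f : ℂ) * ψ (phi ξ f)‖ ^ 2 =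
      (Fintype.card F : ℝ) ^ n * ∑ f ∈ monicD F n, (vM f : ℝ) ^ 2 := by
    have h5 : ((∑ ξ : Fin n → F, ‖∑ f ∈ monicD F n, (vM f : ℂ) * ψ (phi ξ f)‖ ^ 2 : ℝ) : ℂ) =
      (((Fintype.card F : ℝ) ^ n * ∑ f ∈ monicD F n, (vM f : ℝ) ^ 2 : ℝ) : ℂ) := by
      push_cast
      push_cast at h1
      exact h1
    exact_mod_cast h5
  rw [h4]
  calc _ ≤ (Fintype.card F : ℝ) ^ n * (n * (Fintype.card F : ℝ) ^ n) := by
        gcongr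
        exact sum_vM_sq_le hn le_rfl
    _ = _ := by ring

/-- Contribution of the frequencies of level `d` with a witness of degree `e` that are not
supported in a box of total length `d`, by Hölder's inequality with exponents `4` and `4 / 3`. -/
lemma sum_genSet_le' (hψ : ψ.IsPrimitive) (hq : 500 ≤ Fintype.card F)
    (hR : (R.card : ℝ) < Real.sqrt (Fintype.card F : ℝ) / 2) {d e : ℕ} (he : 1 ≤ e)
    (hed : e ≤ d) (hdn : d ≤ n) :
    ∑ ξ ∈ (genSet n d e).filter (fun ξ => lev (phi ξ) n = d), (∏ i, wt ψ R (ξ i)) *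
      ‖∑ f ∈ monicD F n, (vM f : ℂ) * ψ (phi ξ f)‖ ≤
      2 * (n + 1) ^ 3 * (Fintype.card F : ℝ) ^
        ((n : ℝ) + 2 - min ((d : ℝ) / 4) ((n : ℝ) / 10) + 0.15 * d - n / (2 * d)) := by
  obtain ⟨hA, hσ, -⟩ := sparse hq hR
  have hq0 : (0 : ℝ) < Fintype.card F := zero_lt_one.trans_le (one_le_q hq)
  have hn : 0 < n := by omega
  set q : ℝ := ((Fintype.card F : ℕ) : ℝ) with hqdef
  have hq1 : (1 : ℝ) ≤ q := one_le_q hq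
  set S : (Fin n → F) → ℝ := fun ξ => ‖∑ f ∈ monicD F n, (vM f : ℂ) * ψ (phi ξ f)‖ with hS
  set W : (Fin n → F) → ℝ := fun ξ => ∏ i, wt ψ R (ξ i) with hW
  set M : ℝ := 3 * (n + 1) ^ 3 * q ^ ((n : ℝ) + 1 - min ((d : ℝ) / 2) ((n : ℝ) / 5)) with hM
  have hS0 : ∀ ξ, 0 ≤ S ξ := fun ξ => norm_nonneg _
  have hW0 : ∀ ξ, 0 ≤ W ξ := fun ξ => prod_wt_nonneg ξ
  set Ω := (genSet n d e : Finset (Fin n → F)).filter (fun ξ => lev (phi ξ) n = d) with hΩ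
  have h1 : ∑ ξ ∈ Ω, W ξ * S ξ ≤ M ^ (1 / 2 : ℝ) * ∑ ξ ∈ Ω, S ξ ^ (1 / 2 : ℝ) * W ξ := by
    rw [Finset.mul_sum]
    refine Finset.sum_le_sum fun ξ hξ => ?_
    have h2 : S ξ ≤ M := by
      have := norm_sum_vM_psi_le hψ (phi ξ) hn
      rwa [(Finset.mem_filter.1 hξ).2] at this
    have h3 : S ξ = S ξ ^ (1 / 2 : ℝ) * S ξ ^ (1 / 2 : ℝ) := by
      rw [← Real.sqrt_eq_rpow, Real.mul_self_sqrt (hS0 ξ)]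
    calc W ξ * S ξ = S ξ ^ (1 / 2 : ℝ) * (S ξ ^ (1 / 2 : ℝ) * W ξ) := by
          conv_lhs => rw [h3]
          ring
      _ ≤ _ := by
          have := hW0 ξ
          have := hS0 ξ
          gcongr
  have h2 := Real.inner_le_Lp_mul_Lq_of_nonneg Ω
    (f := fun ξ => S ξ ^ (1 / 2 : ℝ)) (g := W) (p := 4) (q := 4 / 3)
    (Real.holderConjugate_iff.2 ⟨by norm_num, by norm_num⟩)
    (fun ξ _ => Real.rpow_nonneg (hS0 ξ) _) (fun ξ _ => hW0 ξ)
  have h3 : ∀ ξ, (S ξ ^ (1 / 2 : ℝ)) ^ (4 : ℝ) = S ξ ^ 2 := fun ξ => by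
    rw [← Real.rpow_mul (hS0 ξ), ← Real.rpow_natCast]
    norm_num
  have h4 : ∀ ξ, W ξ ^ (4 / 3 : ℝ) = ∏ i, wt ψ R (ξ i) ^ (4 / 3 : ℝ) := fun ξ =>
    (Real.finsetProd_rpow _ _ (fun i _ => wt_nonneg _) _).symm
  simp only [h3, h4] at h2
  have h5 : ∑ ξ ∈ Ω, S ξ ^ 2 ≤ n * q ^ (2 * n) := by
    refine le_trans ?_ (sum_norm_sq_le hψ hn)
    exact Finset.sum_le_sum_of_subset_of_nonneg (Finset.subset_univ _) fun ξ _ _ => sq_nonneg _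
  set N := (n - d - e) / e with hN
  have hσ' : (R.card : ℝ) / Rᶜ.card ≤ q ^ (-(1 / 2) : ℝ) := by
    refine hσ.trans ?_
    have : 0 ≤ q ^ (-(1 / 2) : ℝ) := by positivity
    linarith
  have h6 : ∑ ξ ∈ Ω, ∏ i, wt ψ R (ξ i) ^ (4 / 3 : ℝ) ≤
      (q ^ (-(2 / 3) : ℝ)) ^ N * (q ^ (1 / 10 : ℝ)) ^ (2 * d) := by
    refine le_trans ?_ (sum_genSet_le (u := fun x => wt ψ R x ^ (4 / 3 : ℝ)) hed hdn ?_ ?_ ?_ ?_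
      (by positivity) (sum_wt_rpow_le hψ hq hR) (Real.one_le_rpow hq1 (by norm_num)))
    · refine Finset.sum_le_sum_of_subset_of_nonneg (Finset.filter_subset _ _) fun ξ _ _ => ?_
      exact Finset.prod_nonneg fun i _ => Real.rpow_nonneg (wt_nonneg _) _
    · simp only [wt_zero hA, Real.one_rpow]
    · exact fun x => Real.rpow_nonneg (wt_nonneg _) _
    · intro x hx
      calc wt ψ R x ^ (4 / 3 : ℝ) ≤ (q ^ (-(1 / 2) : ℝ)) ^ (4 / 3 : ℝ) := by
            have := wt_nonneg (ψ := ψ) (R := R) x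
            gcongr
            exact (wt_le hψ hx).trans hσ'
        _ = _ := by
            rw [← Real.rpow_mul hq0.le]
            norm_num
    · exact Real.rpow_le_one_of_one_le_of_nonpos hq1 (by norm_num)
  -- the number of windows is at least `n / d - 3`
  have h7 : (n : ℝ) / d - 3 ≤ N := by
    have hd0 : (0 : ℝ) < d := by exact_mod_cast (by omega : 0 < d)
    have he0 : (0 : ℝ) < e := by exact_mod_cast he
    have h8 : n - d - e < (N + 1) * e := by
      rw [hN, mul_comm]
      exact Nat.lt_mul_div_succ _ he
    have h9 : (n : ℝ) - d < (N + 2) * e := by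
      have : n < (N + 1) * e + e + d := by omega
      have h' : (n : ℝ) < (N + 1) * e + e + d := by exact_mod_cast this
      linarith
    have hed' : (e : ℝ) ≤ d := by exact_mod_cast hed
    rw [sub_le_iff_le_add, div_le_iff₀ hd0]
    nlinarith [(Nat.cast_nonneg N : (0 : ℝ) ≤ N)]
  have hP0 : (0 : ℝ) ≤ ∑ ξ ∈ Ω, ∏ i, wt ψ R (ξ i) ^ (4 / 3 : ℝ) :=
    Finset.sum_nonneg fun ξ _ => Finset.prod_nonneg fun i _ => Real.rpow_nonneg (wt_nonneg _) _
  have hQ0 : (0 : ℝ) ≤ ∑ ξ ∈ Ω, S ξ ^ 2 := Finset.sum_nonneg fun ξ _ => sq_nonneg _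
  calc ∑ ξ ∈ Ω, W ξ * S ξ
      ≤ M ^ (1 / 2 : ℝ) * ((n * q ^ (2 * n)) ^ (1 / 4 : ℝ) *
        ((q ^ (-(2 / 3) : ℝ)) ^ N * (q ^ (1 / 10 : ℝ)) ^ (2 * d)) ^ (1 / (4 / 3) : ℝ)) := by
        refine h1.trans ?_
        gcongr
        refine h2.trans ?_
        gcongr
    _ = (3 * ((n : ℝ) + 1) ^ 3) ^ (1 / 2 : ℝ) * (n : ℝ) ^ (1 / 4 : ℝ) *
        q ^ (((n : ℝ) + 1 - min ((d : ℝ) / 2) ((n : ℝ) / 5)) * (1 / 2) + n * (1 / 2) +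
          (-(1 / 2) * N + 0.15 * d)) := by
        have ha : ((n : ℝ) * q ^ (2 * n)) ^ (1 / 4 : ℝ) =
            (n : ℝ) ^ (1 / 4 : ℝ) * q ^ ((n : ℝ) * (1 / 2)) := by
          rw [Real.mul_rpow (by positivity) (by positivity), ← Real.rpow_natCast q,
            ← Real.rpow_mul hq0.le]
          push_cast
          ring_nf
        have hb : ((q ^ (-(2 / 3) : ℝ)) ^ N * (q ^ (1 / 10 : ℝ)) ^ (2 * d)) ^ (1 / (4 / 3) : ℝ) =
            q ^ (-(1 / 2) * N + 0.15 * d : ℝ) := by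
          rw [← Real.rpow_natCast, ← Real.rpow_natCast, ← Real.rpow_mul hq0.le,
            ← Real.rpow_mul hq0.le, ← Real.rpow_add hq0, ← Real.rpow_mul hq0.le]
          congr 1
          push_cast
          ring
        rw [hM, ha, hb, Real.mul_rpow (by positivity) (by positivity), ← Real.rpow_mul hq0.le,
          Real.rpow_add hq0 (_ + _) (_ + _), Real.rpow_add hq0 (_ * _) ((n : ℝ) * (1 / 2))]
        simp only [mul_assoc, mul_left_comm, mul_comm]
    _ ≤ 2 * (n + 1) ^ 3 * q ^ ((n : ℝ) + 2 - min ((d : ℝ) / 4) ((n : ℝ) / 10) + 0.15 * d -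
          n / (2 * d)) := by
        have hn0 : (0 : ℝ) ≤ n := Nat.cast_nonneg n
        have ha : (3 * ((n : ℝ) + 1) ^ 3) ^ (1 / 2 : ℝ) ≤ 2 * (n + 1) ^ 2 := by
          rw [← Real.sqrt_eq_rpow]
          refine Real.sqrt_le_iff.2 ⟨by positivity, ?_⟩
          have : ((n : ℝ) + 1) ^ 3 ≤ (n + 1) ^ 4 := pow_le_pow_right₀ (by linarith) (by norm_num)
          have h0 : (0 : ℝ) ≤ ((n : ℝ) + 1) ^ 3 := by positivity
          calc 3 * ((n : ℝ) + 1) ^ 3 ≤ 4 * (n + 1) ^ 4 := by linarith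
            _ = _ := by ring
        have hb : (n : ℝ) ^ (1 / 4 : ℝ) ≤ n + 1 := by
          calc (n : ℝ) ^ (1 / 4 : ℝ) ≤ ((n : ℝ) + 1) ^ (1 / 4 : ℝ) := by
                gcongr
                linarith
            _ ≤ ((n : ℝ) + 1) ^ (1 : ℝ) :=
                Real.rpow_le_rpow_of_exponent_le (by linarith) (by norm_num)
            _ = _ := Real.rpow_one _
        have hmin : min ((d : ℝ) / 2) ((n : ℝ) / 5) * (1 / 2) = min ((d : ℝ) / 4) ((n : ℝ) / 10) := by
          rw [min_mul_of_nonneg _ _ (by norm_num)]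
          congr 1 <;> ring
        have hc : ((n : ℝ) + 1 - min ((d : ℝ) / 2) ((n : ℝ) / 5)) * (1 / 2) + n * (1 / 2) +
          (-(1 / 2) * N + 0.15 * d) ≤ (n : ℝ) + 2 - min ((d : ℝ) / 4) ((n : ℝ) / 10) + 0.15 * d -
          n / (2 * d) := by
          rw [sub_mul, hmin]
          have : (n : ℝ) / (2 * d) = n / d / 2 := by rw [mul_comm, div_div]
          rw [this]
          linarith
        calc _ ≤ (2 * (n + 1) ^ 2 * ((n : ℝ) + 1)) * q ^ ((n : ℝ) + 2 -
              min ((d : ℝ) / 4) ((n : ℝ) / 10) + 0.15 * d - n / (2 * d)) := by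
              gcongr
          _ = _ := by ring

end Weights

/-! ### Combining the three ranges -/

section Combine

lemma sum_le_sum_cover {ι κ : Type} (s : Finset ι) (T : Finset κ) (A : κ → Finset ι) (f : ι → ℝ)
    (hf : ∀ x, 0 ≤ f x) (h : ∀ x ∈ s, ∃ t ∈ T, x ∈ A t) :
    ∑ x ∈ s, f x ≤ ∑ t ∈ T, ∑ x ∈ A t, f x := by
  calc ∑ x ∈ s, f x ≤ ∑ x ∈ T.biUnion A, f x := by
        refine Finset.sum_le_sum_of_subset_of_nonneg (fun x hx => ?_) fun x _ _ => hf x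
        exact Finset.mem_biUnion.2 (h x hx)
    _ ≤ ∑ x ∈ T.biUnion A, ∑ t ∈ T, if x ∈ A t then f x else 0 := by
        refine Finset.sum_le_sum fun x hx => ?_
        obtain ⟨t, ht, hxt⟩ := Finset.mem_biUnion.1 hx
        calc f x = if x ∈ A t then f x else 0 := by rw [if_pos hxt]
          _ ≤ _ := Finset.single_le_sum (f := fun t => if x ∈ A t then f x else 0)
              (fun t _ => by split_ifs <;> simp [hf x]) ht
    _ = ∑ t ∈ T, ∑ x ∈ A t, f x := by
        rw [Finset.sum_comm]
        refine Finset.sum_congr rfl fun t ht => ?_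
        rw [← Finset.sum_filter, Finset.filter_mem_eq_inter,
          Finset.inter_eq_right.2 (Finset.subset_biUnion_of_mem A ht)]

variable {n : ℕ} {ψ : AddChar F ℂ} {R : Finset F}

/-- The main term `lam0` does not correlate with a frequency having a nonzero entry at a positive
position. -/
lemma sum_lam0_psi (hψ : ψ.IsPrimitive) {ξ : Fin n → F} {i : Fin n} (hi : (i : ℕ) ≠ 0)
    (hξ : ξ i ≠ 0) : ∑ f ∈ monicD F n, (lam0 f : ℂ) * ψ (phi ξ f) = 0 := by
  rw [sum_monicD]
  have hpos : 0 < n := i.pos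
  have h1 : ∀ c : Fin n → F, (lam0 (X ^ n + ∑ i : Fin n, C (c i) * X ^ (i : ℕ)) : ℂ) *
      ψ (phi ξ (X ^ n + ∑ i : Fin n, C (c i) * X ^ (i : ℕ))) =
      ∏ j : Fin n, ((if (j : ℕ) = 0 then
        (if c j = 0 then (0 : ℂ) else (Fintype.card F : ℂ) / (Fintype.card F - 1)) else 1) *
          ψ (ξ j * c j)) := by
    intro c
    rw [Finset.prod_mul_distrib, ← addChar_map_sum, phi_apply]
    congr 1
    · have h0 := coeff_monicOfFn c (⟨0, hpos⟩ : Fin n)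
      simp only at h0
      rw [lam0, h0, Finset.prod_eq_single (⟨0, hpos⟩ : Fin n)]
      · rw [if_pos rfl]
        split_ifs <;> simp
      · intro j _ hj
        rw [if_neg fun h => hj (Fin.ext h)]
      · simp
    · congr 1
      exact Finset.sum_congr rfl fun j _ => by rw [coeff_monicOfFn]
  simp_rw [h1]
  have h3 := Finset.prod_univ_sum (fun _ : Fin n => (Finset.univ : Finset F))
    (fun j x => (if (j : ℕ) = 0 then
        (if x = 0 then (0 : ℂ) else (Fintype.card F : ℂ) / (Fintype.card F - 1)) else 1) *
          ψ (ξ j * x))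
  rw [Fintype.piFinset_univ] at h3
  rw [← h3]
  refine Finset.prod_eq_zero (Finset.mem_univ i) ?_
  simp only [if_neg hi, one_mul]
  have h4 := AddChar.sum_mulShift (ξ i) hψ
  rw [if_neg hξ, Nat.cast_zero] at h4
  rw [← h4]
  exact Finset.sum_congr rfl fun x _ => by rw [mul_comm]

/-- The weighted sum of exponential sums over all frequencies is small. -/
lemma sum_all_le (hψ : ψ.IsPrimitive) (hq : 500 ≤ Fintype.card F)
    (hR : (R.card : ℝ) < Real.sqrt (Fintype.card F : ℝ) / 2) {y : ℝ} (hy : 62 ≤ y)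
    (hyn : y ^ 2 = n) :
    ∑ ξ : Fin n → F, (∏ i, wt ψ R (ξ i)) *
      ‖∑ f ∈ monicD F n, ((vM f - lam0 f : ℝ) : ℂ) * ψ (phi ξ f)‖ ≤
      (Fintype.card F : ℝ) ^ n * (7 * (n + 1) ^ 5 * (Fintype.card F : ℝ) ^ (1 - 0.175 * y)) := by
  have hq1 : (1 : ℝ) ≤ Fintype.card F := one_le_q hq
  set q : ℝ := ((Fintype.card F : ℕ) : ℝ) with hqdef
  have hq0 : 0 < q := by linarith
  have hn : 0 < n := by
    have : (0 : ℝ) < n := by rw [← hyn]; positivity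
    exact_mod_cast this
  -- boxes of length `d ≥ D` save `d / 4 ≥ 0.175 y` over the trivial bound, and boxes of length `D`
  -- save `n / (2 D) - 0.505 D`, which is larger because `D ≤ 0.8 y`
  set D := ⌈0.7 * y⌉₊ with hD
  have hD1 : 0.7 * y ≤ D := Nat.le_ceil _
  have hD2 : (D : ℝ) ≤ 0.8 * y := by
    have := Nat.ceil_lt_add_one (show 0 ≤ 0.7 * y by linarith)
    rw [← hD] at this
    linarith
  have hDpos : 0 < D := by
    have : (0 : ℝ) < D := by linarith
    exact_mod_cast this
  have hDn : D ≤ n := by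
    have : (D : ℝ) ≤ n := by rw [← hyn]; nlinarith
    exact_mod_cast this
  set Q := q ^ ((n : ℝ) + 1 - 0.175 * y) with hQ
  have hQ0 : 0 ≤ Q := by positivity
  set f : (Fin n → F) → ℝ := fun ξ => (∏ i, wt ψ R (ξ i)) *
      ‖∑ f ∈ monicD F n, ((vM f - lam0 f : ℝ) : ℂ) * ψ (phi ξ f)‖ with hf
  set S : (Fin n → F) → ℝ := fun ξ => (∏ i, wt ψ R (ξ i)) *
      ‖∑ f ∈ monicD F n, (vM f : ℂ) * ψ (phi ξ f)‖ with hS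
  have hf0 : ∀ ξ, 0 ≤ f ξ := fun ξ => mul_nonneg (prod_wt_nonneg ξ) (norm_nonneg _)
  have hS0 : ∀ ξ, 0 ≤ S ξ := fun ξ => mul_nonneg (prod_wt_nonneg ξ) (norm_nonneg _)
  set s1 : Finset (Fin n → F) := Finset.univ.filter fun ξ =>
    ∃ k ∈ Finset.Icc 1 D, ξ ∈ supp (box n k (D - k)) with hs1
  set s2 : Finset (Fin n → F) := s1ᶜ.filter fun ξ =>
    ∃ k l, k + l = lev (phi ξ) n ∧ ξ ∈ supp (box n k l) with hs2
  set s3 : Finset (Fin n → F) := s1ᶜ.filter fun ξ =>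
    ¬ ∃ k l, k + l = lev (phi ξ) n ∧ ξ ∈ supp (box n k l) with hs3
  have hnot : ∀ ξ ∈ s1ᶜ, ∀ k l, 1 ≤ k → k + l = D → ξ ∉ supp (box n k l) := by
    intro ξ hξ k l hk hkl hmem
    rw [Finset.mem_compl, hs1, Finset.mem_filter] at hξ
    refine hξ ⟨Finset.mem_univ _, k, Finset.mem_Icc.2 ⟨hk, by omega⟩, ?_⟩
    rwa [← hkl, Nat.add_sub_cancel_left]
  have hfS : ∀ ξ ∈ s1ᶜ, f ξ = S ξ := by
    intro ξ hξ
    have h1 := hnot ξ hξ 1 (D - 1) le_rfl (by omega)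
    rw [mem_supp] at h1
    push Not at h1
    obtain ⟨i, hi, hξi⟩ := h1
    rw [mem_box] at hi
    push Not at hi
    have h2 := sum_lam0_psi hψ (ξ := ξ) (i := i) (by omega) hξi
    simp only [hf, hS]
    congr 2
    rw [← sub_zero (∑ f ∈ monicD F n, (vM f : ℂ) * ψ (phi ξ f)), ← h2, ← Finset.sum_sub_distrib]
    refine Finset.sum_congr rfl fun g _ => ?_
    push_cast
    ring
  have hlev : ∀ ξ : Fin n → F, 2 * lev (phi ξ) n ≤ n + 1 := fun ξ => two_mul_lev_le _ _
  have e1 : ∑ ξ ∈ s1, f ξ ≤ 2 * (n + 1) ^ 5 * Q := by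
    calc ∑ ξ ∈ s1, f ξ ≤ ∑ k ∈ Finset.Icc 1 D, ∑ ξ ∈ supp (box n k (D - k)), f ξ := by
          refine sum_le_sum_cover _ _ (fun k => supp (box n k (D - k))) _ hf0 fun ξ hξ => ?_
          exact (Finset.mem_filter.1 hξ).2
      _ ≤ ∑ k ∈ Finset.Icc 1 D, 2 * n * Q := by
          refine Finset.sum_le_sum fun k hk => ?_
          rw [Finset.mem_Icc] at hk
          refine (sum_box_short hψ hq hR hk.1 (by omega : k + (D - k) = D) hDn).trans ?_
          refine mul_le_mul_of_nonneg_left ?_ (by positivity)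
          refine Real.rpow_le_rpow_of_exponent_le hq1 ?_
          have h1 : 0.625 * y ≤ (n : ℝ) / (2 * D) := by
            rw [le_div_iff₀ (by positivity), ← hyn]
            nlinarith
          linarith
      _ = 2 * (n * D) * Q := by
          rw [Finset.sum_const, Nat.card_Icc, nsmul_eq_mul]
          rw [Nat.add_sub_cancel]
          ring
      _ ≤ 2 * (n + 1) ^ 5 * Q := by
          have h1 : (D : ℝ) ≤ n := by exact_mod_cast hDn
          have h2 : (n : ℝ) * D ≤ (n + 1) ^ 2 := by nlinarith
          have h3 : ((n : ℝ) + 1) ^ 2 ≤ (n + 1) ^ 5 :=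
            pow_le_pow_right₀ (by linarith [(Nat.cast_nonneg n : (0 : ℝ) ≤ n)]) (by norm_num)
          gcongr
          exact h2.trans h3
  have hcard : ((Finset.range (n + 1) ×ˢ Finset.range (n + 1)).card : ℝ) = (n + 1) ^ 2 := by
    rw [Finset.card_product, Finset.card_range]
    push_cast
    ring
  have e2 : ∑ ξ ∈ s2, f ξ ≤ 3 * (n + 1) ^ 5 * Q := by
    set T := (Finset.range (n + 1) ×ˢ Finset.range (n + 1)).filter fun t =>
      D ≤ t.1 + t.2 ∧ 2 * (t.1 + t.2) ≤ n + 1 with hT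
    calc ∑ ξ ∈ s2, f ξ = ∑ ξ ∈ s2, S ξ :=
          Finset.sum_congr rfl fun ξ hξ => hfS ξ (Finset.mem_filter.1 hξ).1
      _ ≤ ∑ t ∈ T, ∑ ξ ∈ (supp (box n t.1 t.2)).filter
            (fun ξ => lev (phi ξ) n = t.1 + t.2), S ξ := by
          refine sum_le_sum_cover _ _ (fun t : ℕ × ℕ => (supp (box n t.1 t.2)).filter
            (fun ξ => lev (phi ξ) n = t.1 + t.2)) _ hS0 fun ξ hξ => ?_
          obtain ⟨hξ1, k, l, hkl, hmem⟩ := Finset.mem_filter.1 hξ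
          have h1 := hlev ξ
          refine ⟨(k, l), ?_, Finset.mem_filter.2 ⟨hmem, hkl.symm⟩⟩
          simp only [hT, Finset.mem_filter, Finset.mem_product, Finset.mem_range]
          refine ⟨⟨by omega, by omega⟩, ?_, by omega⟩
          -- a shorter box could be enlarged to one of total length `D`
          by_contra! hlt
          refine hnot ξ hξ1 (k + (D - (k + l))) l (by omega) (by omega) ?_
          rw [mem_supp] at hmem ⊢
          intro i hi
          refine hmem i fun hi' => hi ?_
          rw [mem_box] at hi' ⊢
          omega
      _ ≤ ∑ t ∈ T, 3 * (n + 1) ^ 3 * Q := by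
          refine Finset.sum_le_sum fun t ht => ?_
          simp only [hT, Finset.mem_filter, Finset.mem_product, Finset.mem_range] at ht
          refine (sum_box_long hψ hq hR (rfl : t.1 + t.2 = _) (by omega) hn).trans ?_
          refine mul_le_mul_of_nonneg_left ?_ (by positivity)
          refine Real.rpow_le_rpow_of_exponent_le hq1 ?_
          have h1 : (D : ℝ) ≤ ((t.1 + t.2 : ℕ) : ℝ) := by exact_mod_cast ht.2.1
          have h2 : 2 * ((t.1 + t.2 : ℕ) : ℝ) ≤ n + 1 := by exact_mod_cast ht.2.2
          rcases min_choice (((t.1 + t.2 : ℕ) : ℝ) / 2) ((n : ℝ) / 5) with h | h <;> rw [h]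
          · linarith
          · rw [← hyn] at h2 ⊢
            nlinarith
      _ ≤ ((n : ℝ) + 1) ^ 2 * (3 * (n + 1) ^ 3 * Q) := by
          rw [Finset.sum_const, nsmul_eq_mul, ← hcard]
          gcongr
          exact Finset.filter_subset _ _
      _ = _ := by ring
  have e3 : ∑ ξ ∈ s3, f ξ ≤ 2 * (n + 1) ^ 5 * Q := by
    set T := (Finset.range (n + 1) ×ˢ Finset.range (n + 1)).filter fun t =>
      1 ≤ t.2 ∧ t.2 ≤ t.1 ∧ 2 * t.1 ≤ n + 1 with hT
    calc ∑ ξ ∈ s3, f ξ = ∑ ξ ∈ s3, S ξ :=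
          Finset.sum_congr rfl fun ξ hξ => hfS ξ (Finset.mem_filter.1 hξ).1
      _ ≤ ∑ t ∈ T, ∑ ξ ∈ (genSet n t.1 t.2).filter
            (fun ξ => lev (phi ξ) n = t.1), S ξ := by
          refine sum_le_sum_cover _ _ (fun t : ℕ × ℕ => (genSet n t.1 t.2).filter
            (fun ξ => lev (phi ξ) n = t.1)) _ hS0 fun ξ hξ => ?_
          obtain ⟨hξ1, hno⟩ := Finset.mem_filter.1 hξ
          push Not at hno
          have h1 := hlev ξ
          obtain ⟨g, hg⟩ := lev_spec (phi ξ) n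
          have hgd := hg.2.1
          refine ⟨(lev (phi ξ) n, g.natDegree), ?_, ?_⟩
          · simp only [hT, Finset.mem_filter, Finset.mem_product, Finset.mem_range]
            refine ⟨⟨by omega, by omega⟩, ?_, hgd, h1⟩
            -- a constant witness would make the window of length zero contain a nonzero entry
            obtain ⟨i, hi1, hi2, -⟩ := exists_ne_zero_window hg (by omega) hno (a := 0) (by omega)
            omega
          · exact Finset.mem_filter.2 ⟨Finset.mem_filter.2 ⟨Finset.mem_univ _, ⟨g, hg, rfl⟩, hno⟩,
              rfl⟩
      _ ≤ ∑ t ∈ T, 2 * (n + 1) ^ 3 * Q := by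
          refine Finset.sum_le_sum fun t ht => ?_
          simp only [hT, Finset.mem_filter, Finset.mem_product, Finset.mem_range] at ht
          refine (sum_genSet_le' hψ hq hR ht.2.1 ht.2.2.1 (by omega)).trans ?_
          refine mul_le_mul_of_nonneg_left ?_ (by positivity)
          refine Real.rpow_le_rpow_of_exponent_le hq1 ?_
          have hd0 : (0 : ℝ) < t.1 := by exact_mod_cast (by omega : 0 < t.1)
          have h2 : 2 * (t.1 : ℝ) ≤ n + 1 := by exact_mod_cast ht.2.2.2
          rcases min_choice ((t.1 : ℝ) / 4) ((n : ℝ) / 10) with h | h <;> rw [h]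
          · -- here `d / 10 + n / (2 d) ≥ 0.44 √n` by the inequality of arithmetic and geometric means
            have h3 : 0.44 * y - 0.1 * t.1 ≤ (n : ℝ) / (2 * t.1) := by
              rw [le_div_iff₀ (by positivity), ← hyn]
              nlinarith [sq_nonneg (y - 0.44 * t.1)]
            linarith
          · have h3 : 0 ≤ (n : ℝ) / (2 * t.1) := by positivity
            have h4 : 0.025 * (n : ℝ) ≥ 1.55 * y := by
              rw [← hyn]
              nlinarith
            linarith
      _ ≤ ((n : ℝ) + 1) ^ 2 * (2 * (n + 1) ^ 3 * Q) := by
          rw [Finset.sum_const, nsmul_eq_mul, ← hcard]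
          gcongr
          exact Finset.filter_subset _ _
      _ = _ := by ring
  have e4 : ∑ ξ, f ξ = ∑ ξ ∈ s1, f ξ + (∑ ξ ∈ s2, f ξ + ∑ ξ ∈ s3, f ξ) := by
    rw [hs2, hs3, Finset.sum_filter_add_sum_filter_not, Finset.sum_add_sum_compl]
  have e5 : q ^ n * (7 * (n + 1) ^ 5 * q ^ (1 - 0.175 * y)) = 7 * (n + 1) ^ 5 * Q := by
    rw [hQ, add_sub_assoc, Real.rpow_add hq0, Real.rpow_natCast]
    ring
  rw [e5, e4]
  linarith

end Combine

/-! ### From prime powers to irreducible polynomials -/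

section Final

variable {n : ℕ} {R : Finset F}

/-- The proper prime powers contribute little to the von Mangoldt sum. -/
lemma sum_vM_not_irreducible_le :
    ∑ f ∈ (monicD F n).filter (fun f => ¬ Irreducible f), vM f ≤
      n * (n * Fintype.card F ^ (n / 2)) := by
  set s := ((monicD F n).filter (fun f => ¬ Irreducible f)).filter fun f => vM f ≠ 0 with hs
  have h1 : s ⊆ (Finset.Icc 2 (n + 1)).biUnion fun j =>
      (monicD F (n / j)).image fun P => P ^ j := by
    intro f hf
    simp only [hs, Finset.mem_filter, mem_monicD] at hf
    obtain ⟨⟨⟨-, hfn⟩, hfi⟩, hv⟩ := hf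
    obtain ⟨P, j, hP, hPi, hj, rfl⟩ := exists_of_vM_ne_zero hv
    have hPd : 0 < P.natDegree := hPi.natDegree_pos
    rw [natDegree_pow] at hfn
    have hj1 : j ≠ 1 := by
      rintro rfl
      rw [pow_one] at hfi
      exact hfi hPi
    have hjn : j ≤ n := by
      rw [← hfn]
      exact Nat.le_mul_of_pos_right _ hPd
    refine Finset.mem_biUnion.2 ⟨j, Finset.mem_Icc.2 ⟨by omega, by omega⟩,
      Finset.mem_image.2 ⟨P, mem_monicD.2 ⟨hP, ?_⟩, rfl⟩⟩
    rw [← hfn, Nat.mul_div_cancel_left _ hj]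
  have h2 : s.card ≤ n * Fintype.card F ^ (n / 2) := by
    calc s.card ≤ ∑ j ∈ Finset.Icc 2 (n + 1), ((monicD F (n / j)).image fun P => P ^ j).card :=
          (Finset.card_le_card h1).trans Finset.card_biUnion_le
      _ ≤ ∑ j ∈ Finset.Icc 2 (n + 1), Fintype.card F ^ (n / 2) := by
          refine Finset.sum_le_sum fun j hj => Finset.card_image_le.trans ?_
          rw [card_monicD]
          exact Nat.pow_le_pow_right Fintype.card_pos
            (Nat.div_le_div_left (Finset.mem_Icc.1 hj).1 (by norm_num))
      _ = n * Fintype.card F ^ (n / 2) := by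
          rw [Finset.sum_const, Nat.card_Icc, smul_eq_mul]
          congr 1
  rw [← Finset.sum_filter_ne_zero]
  calc _ ≤ ∑ f ∈ s, n := by
        refine Finset.sum_le_sum fun f hf => ?_
        simp only [Finset.mem_filter, mem_monicD] at hf
        exact (vM_le hf.1.1.1).trans hf.1.1.2.le
    _ = n * s.card := by rw [Finset.sum_const, smul_eq_mul, mul_comm]
    _ ≤ _ := Nat.mul_le_mul_left _ h2

lemma sum_vM_MR :
    (∑ f ∈ MR F R n, (vM f : ℝ)) =
      n * (((MR F R n).filter fun m => Irreducible m).card : ℝ) +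
        ∑ f ∈ (MR F R n).filter (fun f => ¬ Irreducible f), (vM f : ℝ) := by
  rw [← Finset.sum_filter_add_sum_filter_not (MR F R n) (fun f => Irreducible f)]
  congr 1
  rw [Finset.sum_congr rfl (g := fun _ => (n : ℝ)), Finset.sum_const, nsmul_eq_mul, mul_comm]
  intro f hf
  rw [Finset.mem_filter] at hf
  have hfm := mem_monicD.1 (mem_MR.1 hf.1).1
  rw [vM_irreducible hfm.1 hf.2, hfm.2]

lemma log_card_ge (hq : 500 ≤ Fintype.card F) : (6.2 : ℝ) ≤ Real.log (Fintype.card F) := by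
  have hq' : (500 : ℝ) ≤ Fintype.card F := by exact_mod_cast hq
  rw [Real.le_log_iff_exp_le (by linarith)]
  refine le_trans ?_ hq'
  have h1 : Real.exp 6.2 ^ 5 = Real.exp 1 ^ 31 := by
    rw [← Real.exp_nat_mul, ← Real.exp_nat_mul]
    norm_num
  refine le_of_pow_le_pow_left₀ (n := 5) (by norm_num) (by norm_num) ?_
  rw [h1]
  calc Real.exp 1 ^ 31 ≤ 2.7182818286 ^ 31 := by
        have := Real.exp_one_lt_d9
        gcongr
    _ ≤ (500 : ℝ) ^ 5 := by norm_num

/-- The constant in the error term. It comes from `8 (n + 1) ^ 5 ≤ 256 y ^ 10` with `y = √n` and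
`(0.09 y) ^ 10 / 10! ≤ exp (0.09 y)`. -/
def errConst : ℝ := 256 * (Nat.factorial 10 / 0.09 ^ 10)

lemma errConst_pos : 0 < errConst := by
  unfold errConst
  positivity

/-- The polynomial factor is absorbed by the difference of the exponents. -/
lemma error_le (hq : 500 ≤ Fintype.card F) {y : ℝ} (hy : 62 ≤ y) (hyn : y ^ 2 = n) :
    8 * ((n : ℝ) + 1) ^ 5 * (Fintype.card F : ℝ) ^ (1 - 0.175 * y) ≤
      errConst * (Fintype.card F : ℝ) ^ (-y / 7) := by
  have hq1 : (1 : ℝ) ≤ Fintype.card F := one_le_q hq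
  have hlog := log_card_ge hq
  set q : ℝ := ((Fintype.card F : ℕ) : ℝ) with hqdef
  have hq0 : 0 < q := by linarith
  have h1 : q ^ (1 - 0.175 * y) ≤ Real.exp (-(0.09 * y)) * q ^ (-y / 7) := by
    calc q ^ (1 - 0.175 * y) ≤ q ^ (-(0.015 * y) + -y / 7) :=
          Real.rpow_le_rpow_of_exponent_le hq1 (by linarith)
      _ = q ^ (-(0.015 * y)) * q ^ (-y / 7) := Real.rpow_add hq0 _ _
      _ ≤ _ := by
          gcongr
          rw [Real.rpow_def_of_pos hq0]
          refine Real.exp_le_exp.2 ?_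
          nlinarith
  have h2 : ((n : ℝ) + 1) ^ 5 ≤ 32 * y ^ 10 := by
    calc ((n : ℝ) + 1) ^ 5 ≤ (2 * y ^ 2) ^ 5 := by
          rw [← hyn]
          gcongr
          nlinarith
      _ = 32 * y ^ 10 := by ring
  have h3 : y ^ 10 ≤ Nat.factorial 10 / 0.09 ^ 10 * Real.exp (0.09 * y) := by
    have := Real.pow_div_factorial_le_exp (0.09 * y) (by linarith) 10
    rw [mul_pow, div_le_iff₀ (by positivity)] at this
    rw [div_mul_eq_mul_div, le_div_iff₀ (by positivity)]
    linarith
  calc _ ≤ 8 * (32 * (Nat.factorial 10 / 0.09 ^ 10 * Real.exp (0.09 * y))) *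
        (Real.exp (-(0.09 * y)) * q ^ (-y / 7)) := by
        gcongr
        exact h2.trans (by linarith)
    _ = errConst * q ^ (-y / 7) * (Real.exp (0.09 * y) * Real.exp (-(0.09 * y))) := by
        rw [errConst]
        ring
    _ = _ := by rw [← Real.exp_add, add_neg_cancel, Real.exp_zero, mul_one]

/-- The prime powers are negligible, since `q ^ (n / 2)` is much smaller than `|Rᶜ| ^ n ≥ q ^ (0.9 n)`. -/
lemma half_power_le (hq : 500 ≤ Fintype.card F)
    (hR : (R.card : ℝ) < Real.sqrt (Fintype.card F : ℝ) / 2) {y : ℝ} (hy : 62 ≤ y)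
    (hyn : y ^ 2 = n) :
    (Fintype.card F : ℝ) ^ (n / 2) ≤
      (Rᶜ.card : ℝ) ^ n * (Fintype.card F : ℝ) ^ (1 - 0.175 * y) := by
  have hq1 : (1 : ℝ) ≤ Fintype.card F := one_le_q hq
  have hq' : (500 : ℝ) ≤ Fintype.card F := by exact_mod_cast hq
  obtain ⟨hA, -, hσ⟩ := sparse hq hR
  set q : ℝ := ((Fintype.card F : ℕ) : ℝ) with hqdef
  have hq0 : 0 < q := by linarith
  have hApos : (0 : ℝ) < Rᶜ.card := by exact_mod_cast hA.card_pos
  have h1 : q ^ (0.9 : ℝ) ≤ Rᶜ.card := by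
    rw [div_le_iff₀ hApos] at hσ
    have h2 : (1.023 : ℝ) ≤ q ^ (0.1 : ℝ) := by
      calc (1.023 : ℝ) = ((1.023 : ℝ) ^ (10 : ℝ)) ^ (0.1 : ℝ) := by
            rw [← Real.rpow_mul (by norm_num)]
            norm_num
        _ ≤ _ := by
            gcongr
            norm_num
            linarith
    have h3 : q ^ (0.9 : ℝ) * q ^ (0.1 : ℝ) = q := by
      rw [← Real.rpow_add hq0]
      norm_num
    have h4 : 0 < q ^ (0.9 : ℝ) := by positivity
    nlinarith
  calc q ^ (n / 2) = q ^ ((n / 2 : ℕ) : ℝ) := (Real.rpow_natCast _ _).symm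
    _ ≤ q ^ (0.9 * n + (1 - 0.175 * y)) := by
        refine Real.rpow_le_rpow_of_exponent_le hq1 ?_
        have h2 : ((n / 2 : ℕ) : ℝ) ≤ (n : ℝ) / 2 := Nat.cast_div_le
        have h3 : y * 62 ≤ n := by
          rw [← hyn]
          nlinarith
        linarith
    _ = (q ^ (0.9 : ℝ)) ^ n * q ^ (1 - 0.175 * y) := by
        rw [Real.rpow_add hq0, Real.rpow_mul hq0.le, Real.rpow_natCast]
    _ ≤ _ := by gcongr

lemma count_bound (hq : 500 ≤ Fintype.card F)
    (hR : (R.card : ℝ) < Real.sqrt (Fintype.card F : ℝ) / 2)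
    (hn : 100 * Real.log (Fintype.card F) ^ 2 ≤ (n : ℝ)) :
    |(((MR F R n).filter fun m => Irreducible m).card : ℝ) -
        ((Fintype.card F : ℝ) / ((Fintype.card F : ℝ) - 1)) * ((Rᶜ.card : ℝ) ^ n / n) *
          (if (0 : F) ∈ R then 1 else 1 - 1 / (Rᶜ.card : ℝ))| ≤
      errConst * ((Fintype.card F : ℝ) / ((Fintype.card F : ℝ) - 1)) *
        ((Rᶜ.card : ℝ) ^ n / n) * (Fintype.card F : ℝ) ^ (-Real.sqrt n / 7) := by
  obtain ⟨hA, -, -⟩ := sparse hq hR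
  have hlog := log_card_ge hq
  set y := Real.sqrt n with hy
  have hyn : y ^ 2 = n := Real.sq_sqrt (Nat.cast_nonneg n)
  have hy62 : 62 ≤ y := by
    refine Real.le_sqrt_of_sq_le ?_
    nlinarith
  have hn0 : (0 : ℝ) < n := by
    rw [← hyn]
    positivity
  have hn1 : 1 ≤ n := by exact_mod_cast hn0
  have hψ := AddChar.FiniteField.primitiveChar_to_Complex_isPrimitive F
  set ψ := AddChar.FiniteField.primitiveChar_to_Complex F
  have h1 := abs_sum_MR_le hψ hA (fun f => (vM f : ℝ) - lam0 f) (sum_all_le hψ hq hR hy62 hyn)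
  rw [Finset.sum_sub_distrib, sum_lam0_MR hn1 hA, sum_vM_MR] at h1
  set P := ∑ f ∈ (MR F R n).filter (fun f => ¬ Irreducible f), (vM f : ℝ) with hP
  have hP0 : 0 ≤ P := Finset.sum_nonneg fun f _ => Nat.cast_nonneg _
  have hP1 : P ≤ n * (n * (Fintype.card F : ℝ) ^ (n / 2)) := by
    have h2 : P ≤ ((∑ f ∈ (monicD F n).filter (fun f => ¬ Irreducible f), vM f : ℕ) : ℝ) := by
      rw [Nat.cast_sum]
      refine Finset.sum_le_sum_of_subset_of_nonneg ?_ fun f _ _ => Nat.cast_nonneg _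
      exact Finset.filter_subset_filter _ fun f hf => (mem_MR.1 hf).1
    refine h2.trans ?_
    exact_mod_cast sum_vM_not_irreducible_le (F := F) (n := n)
  have h3 := half_power_le hq hR hy62 hyn
  have h4 := error_le hq hy62 hyn
  set N : ℝ := (((MR F R n).filter fun m => Irreducible m).card : ℝ)
  set L : ℝ := if (0 : F) ∈ R then 1 else 1 - 1 / (Rᶜ.card : ℝ)
  set A : ℝ := (Rᶜ.card : ℝ) ^ n
  have hA0 : 0 ≤ A := by positivity
  have hq1 : (1 : ℝ) < Fintype.card F := by exact_mod_cast (by omega : 1 < Fintype.card F)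
  set q : ℝ := ((Fintype.card F : ℕ) : ℝ) with hqdef
  set E := q ^ (1 - 0.175 * y)
  have hE0 : 0 ≤ E := by positivity
  have h5 : |n * N - q / (q - 1) * A * L| ≤ A * (errConst * q ^ (-y / 7)) := by
    calc |n * N - q / (q - 1) * A * L|
        = |(n * N + P - q / (q - 1) * A * L) - P| := by
          congr 1
          ring
      _ ≤ |n * N + P - q / (q - 1) * A * L| + |P| := abs_sub _ _
      _ ≤ A * (7 * (n + 1) ^ 5 * E) + n * (n * (A * E)) := by
          rw [abs_of_nonneg hP0]
          refine add_le_add h1 (hP1.trans ?_)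
          gcongr
      _ ≤ A * (8 * (n + 1) ^ 5 * E) := by
          have h6 : (n : ℝ) * n ≤ (n + 1) ^ 5 := by
            calc (n : ℝ) * n ≤ (n + 1) ^ 2 := by nlinarith
              _ ≤ (n + 1) ^ 5 := pow_le_pow_right₀ (by linarith) (by norm_num)
          have h7 : 0 ≤ A * E := by positivity
          nlinarith
      _ ≤ _ := by gcongr
  have h6 : (1 : ℝ) ≤ q / (q - 1) := by
    rw [le_div_iff₀ (by linarith)]
    linarith
  have h7 : N - q / (q - 1) * (A / n) * L = (n * N - q / (q - 1) * A * L) / n := by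
    field_simp
  rw [h7, abs_div, abs_of_pos hn0, div_le_iff₀ hn0]
  refine h5.trans ?_
  have h8 : errConst * (q / (q - 1)) * (A / n) * q ^ (-y / 7) * n =
      q / (q - 1) * (A * (errConst * q ^ (-y / 7))) := by
    field_simp
  rw [h8]
  have := errConst_pos
  exact le_mul_of_one_le_left (by positivity) h6

end Final

end Proof

/-- **Theorem 1** (primes with restricted digits over function fields).
There is an absolute constant `C > 0` such that for every finite field `𝔽_q`
with `q ≥ 500`, every `R ⊆ 𝔽_q` of size `s < √q / 2`, and every
`n ≥ 100 (log q)²`, the number of monic irreducible polynomials of degree `n`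
with all non-leading coefficients outside `R` is
`(q/(q-1))·((q-s)^n/n)·(Λ + O(q^{-√n/7}))`. -/
theorem statement0 :
    ∃ C : ℝ, 0 < C ∧
      ∀ (F : Type) [Field F] [Fintype F],
        500 ≤ Fintype.card F →
        ∀ R : Finset F, (R.card : ℝ) < Real.sqrt (Fintype.card F) / 2 →
        ∀ n : ℕ, 100 * Real.log (Fintype.card F) ^ 2 ≤ (n : ℝ) →
        |(((MR F R n).filter fun m => Irreducible m).card : ℝ) -
            ((Fintype.card F : ℝ) / ((Fintype.card F : ℝ) - 1)) *
              (((Fintype.card F : ℝ) - R.card) ^ n / n) *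
              (if (0 : F) ∈ R then 1 else 1 - 1 / ((Fintype.card F : ℝ) - R.card))| ≤
          C * ((Fintype.card F : ℝ) / ((Fintype.card F : ℝ) - 1)) *
            (((Fintype.card F : ℝ) - R.card) ^ n / n) *
            (Fintype.card F : ℝ) ^ (-Real.sqrt n / 7) := by
  refine ⟨errConst, errConst_pos, fun F _ _ hq R hR n hn => ?_⟩
  rw [← card_compl_real]
  exact count_bound hq hR hn

end
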